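/- arXiv:1310.6898 — 2 statements merged into one kernel-verified Lean document; each statement's English description precedes it below -/
import Mathlib

section
/- Let s ≥ 0 and let (X, d_X) be a metric space that is σ-finite with respect to the Hausdorff measure H^s. Let (Y, d_Y) be a metric space of Hausdorff dimension t that is an analytic subspace of a complete separable metric space. If f : X → Y is a measurable surjection (with respect to H^s on X), then there exists a set N ⊆ X with H^s(N) = 0 and dim_H f(N) = t. If additionally t > 0 and H^t(Y) > 0, and f is such that for each closed set F ⊆ Y the preimage f⁻¹(F) is a countable union of closed sets, then N can be chosen to be perfect. -/
open MeasureTheory Set Filter Topology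
open scoped NNReal ENNReal

universe u v

/-- A Hausdorff (gauge) function `h : [0,∞) → [0,∞]`: nondecreasing, right-continuous,
and positive on positive arguments. -/
structure IsHausdorffFunction (h : ℝ≥0 → ℝ≥0∞) : Prop where
  mono : Monotone h
  right_continuous : ∀ t : ℝ≥0, ContinuousWithinAt h (Set.Ici t) t
  pos : ∀ t : ℝ≥0, 0 < t → 0 < h t

/-- `h` is of finite order: `limsup_{t→0+} h(3t)/h(t) < ∞`. -/
def FiniteOrder (h : ℝ≥0 → ℝ≥0∞) : Prop :=
  Filter.limsup (fun t : ℝ≥0 => h (3 * t) / h t) (nhdsWithin 0 (Set.Ioi 0)) < ⊤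

/-- The Hausdorff (outer) measure built from the gauge `h`:
`H^h(E) = sup_{δ>0} inf { Σ h(diam Uᵢ) : E ⊆ ⋃ Uᵢ, diam Uᵢ ≤ δ }`. -/
noncomputable def hausdorffM {Z : Type*} [EMetricSpace Z] (h : ℝ≥0 → ℝ≥0∞) :
    MeasureTheory.OuterMeasure Z :=
  MeasureTheory.OuterMeasure.mkMetric (fun d => h d.toNNReal)

/-- A set `S` is σ-finite with respect to an outer measure `μ` if it is a countable union
of Carathéodory-measurable sets of finite measure. -/
def SigmaFiniteSet {Z : Type*} (μ : MeasureTheory.OuterMeasure Z) (S : Set Z) : Prop :=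
  ∃ A : ℕ → Set Z, (∀ n, μ.IsCaratheodory (A n) ∧ μ (A n) < ⊤) ∧ S = ⋃ n, A n

/-- A metric space has finite structural dimension if for every `ξ > 0` there are `N` and
`δ₀ > 0` such that every set of diameter `δ ≤ δ₀` can be covered by `N` sets of diameter
at most `ξ·δ`. -/
def FiniteStructuralDim (Z : Type*) [EMetricSpace Z] : Prop :=
  ∀ ξ : ℝ≥0, 0 < ξ → ∃ (N : ℕ) (δ₀ : ℝ≥0), 0 < δ₀ ∧
    ∀ s : Set Z, EMetric.diam s ≤ δ₀ →
      ∃ U : Fin N → Set Z, s ⊆ ⋃ i, U i ∧ ∀ i, EMetric.diam (U i) ≤ ξ * EMetric.diam s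

/-- Property (H) for a subspace `Y` of the complete separable metric space `Z`. -/
structure PropertyH {Z : Type*} [MetricSpace Z] (Y : Set Z) (h : ℝ≥0 → ℝ≥0∞) : Prop where
  complete : CompleteSpace Z
  separable : TopologicalSpace.SeparableSpace Z
  analytic : MeasureTheory.AnalyticSet Y
  hausdorff : IsHausdorffFunction h
  cont : Continuous h
  zero : h 0 = 0
  alt : FiniteOrder h ∨ FiniteStructuralDim Z ∨ ∀ x y z : Z, dist x z ≤ max (dist x y) (dist y z)

/-- Property (H∞): property (H) together with non-σ-finiteness of `Y` w.r.t. `H^h`. -/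
def PropertyHInf {Z : Type*} [MetricSpace Z] (Y : Set Z) (h : ℝ≥0 → ℝ≥0∞) : Prop :=
  PropertyH Y h ∧ ¬ SigmaFiniteSet (hausdorffM h) Y

/-- Property (Aκ): `X` is a union of κ-many measurable sets of finite measure, and
κ-many null sets always union to a null set. -/
def PropertyA {X : Type u} (μ : MeasureTheory.OuterMeasure X) (κ : Cardinal.{u}) : Prop :=
  (∃ (ι : Type u) (A : ι → Set X), Cardinal.mk ι = κ ∧ (⋃ i, A i) = Set.univ ∧
      ∀ i, μ.IsCaratheodory (A i) ∧ μ (A i) < ⊤) ∧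
  ∀ (ι : Type u) (A : ι → Set X), Cardinal.mk ι = κ → (∀ i, μ (A i) = 0) → μ (⋃ i, A i) = 0

/-- A set is perfect if it is closed and every open set meeting it meets it in an
infinite set. -/
def PerfectSet {X : Type*} [TopologicalSpace X] (C : Set X) : Prop :=
  IsClosed C ∧ ∀ O : Set X, IsOpen O → (O ∩ C).Nonempty → (O ∩ C).Infinite

/-- The gauge `d ↦ d^s`. -/
noncomputable def sGauge (s : ℝ≥0) : ℝ≥0 → ℝ≥0∞ := fun d => (d : ℝ≥0∞) ^ (s : ℝ)

/-- Hausdorff–Besicovitch dimension: the supremum of all `s ≥ 0` with `H^{d^s}(E) > 0`. -/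
noncomputable def hDim {Z : Type*} [EMetricSpace Z] (E : Set Z) : ℝ≥0∞ :=
  ⨆ (s : ℝ≥0) (_ : 0 < hausdorffM (sGauge s) E), (s : ℝ≥0∞)

/- By σ-finiteness, the null ideal of `H^s` is pushed forward along `f` to a finite Borel measure
`ν` with `H^s (f⁻¹ B) = 0` whenever `ν B = 0`. As dimension is countably stable, it suffices to
find, for each `a < dim Y`, a compact `ν`-null `K ⊆ Y` with `dim K > a`.

Take `a < r < t < dim Y` and replace `H^t` by a net content, which is positive on `Y`. The cells
whose `ν`-measure exceeds `M` times their weight cover a set of content `O(1 / M)`, so for some `M`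
the rest `Y'` of `Y` still has positive content. If `ν Y' = 0`, Choquet's capacitability argument,
run inside a Borel `ν`-null set containing `Y'`, yields `K`. Otherwise `Y'` contains a compact set
of positive `ν`-measure on which `ν` is bounded by a multiple of the weights. Halving `ν` there at
ever finer scales, uniformly over the cells, leads to a `ν`-null compact set, whose `r`-dimensional
content is positive by the mass distribution principle, because the halvings cost only a small power
of the scale.

For a perfect null set, cut closed null sets with images of dimension increasing to that of `Y` down
to small balls. Along a subsequence their union is closed up to one point, and by Cantor–Bendixson
the perfect kernel differs from it by a countable set, which does not affect the dimension. -/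

section Subfamilies

variable {ι : Type*} {w : ι → ℝ≥0∞}

theorem exists_strictMono_eventually_mem_iff [Countable ι] (J : ℕ → Set ι) :
    ∃ (φ : ℕ → ℕ) (J' : Set ι), StrictMono φ ∧ ∀ i, ∀ᶠ n in atTop, (i ∈ J (φ n) ↔ i ∈ J') := by
  classical
  obtain ⟨χ, φ, hφ, hlim⟩ := CompactSpace.tendsto_subseq fun n i => decide (i ∈ J n)
  refine ⟨φ, {i | χ i = true}, hφ, fun i => ?_⟩
  have hχ : ∀ᶠ n in atTop, decide (i ∈ J (φ n)) = χ i :=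
    (tendsto_pi_nhds.1 hlim i).eventually_mem ((isOpen_discrete {χ i}).mem_nhds rfl)
  filter_upwards [hχ] with n hn
  exact ⟨fun h => hn ▸ decide_eq_true h, fun h => of_decide_eq_true (hn.trans h)⟩

theorem tsum_add_le_of_eventually_mem {J : ℕ → Set ι} {J' : Set ι} {c M : ℝ≥0∞}
    (hmem : ∀ i ∈ J', ∀ᶠ n in atTop, i ∈ J n)
    (hc : ∀ᶠ n in atTop, c ≤ ∑' i : ↥(J n \ J'), w i) (hM : ∀ n, ∑' i : J n, w i ≤ M) :
    ∑' i : J', w i + c ≤ M := by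
  classical
  rw [ENNReal.tsum_eq_iSup_sum, ENNReal.iSup_add]
  refine iSup_le fun A => ?_
  obtain ⟨n, hA, hcn⟩ := (((Finset.eventually_all A).2 fun i _ => hmem i i.2).and hc).exists
  have hdisj : Disjoint (Subtype.val '' (A : Set J')) (J n \ J') :=
    disjoint_sdiff_right.mono_left (Subtype.coe_image_subset _ _)
  have hsub : Subtype.val '' (A : Set J') ∪ J n \ J' ⊆ J n :=
    union_subset (image_subset_iff.2 hA) sdiff_subset
  calc ∑ i ∈ A, w i + c
      ≤ ∑' i : ↥(Subtype.val '' (A : Set J')), w i + ∑' i : ↥(J n \ J'), w i := by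
        rw [tsum_image w Subtype.val_injective.injOn, Finset.tsum_subtype' A fun i : J' => w i]
        gcongr
    _ = ∑' i : ↥(Subtype.val '' (A : Set J') ∪ J n \ J'), w i :=
        (ENNReal.summable.tsum_union_disjoint hdisj ENNReal.summable).symm
    _ ≤ M := (ENNReal.tsum_mono_subtype w hsub).trans (hM n)

theorem tsum_image_le (q : ι → ι) {J : Set ι} :
    ∑' i : ↥(q '' J), w i ≤ ∑' i : J, w (q i) :=
  ENNReal.tsum_le_tsum_comp_of_surjective imageFactorization_surjective fun i : ↥(q '' J) => w i

end Subfamilies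

/-- A multiscale system of cells, indexed by pairs `(level, position)`, abstracting the families
of balls of radii `ρ ^ k` from which net measures are built: `halo i` is an enlargement of
`cell i`, and `parent j` is a position one level up whose cell absorbs every finer halo
meeting `halo j`. -/
structure CellSystem (Z : Type*) where
  cell : ℕ × ℕ → Set Z
  halo : ℕ × ℕ → Set Z
  parent : ℕ × ℕ → ℕ × ℕ
  finite_mem : ∀ k x, {i | i.1 = k ∧ x ∈ cell i}.Finite
  cell_subset_halo : ∀ i, cell i ⊆ halo i
  level_parent : ∀ {j}, 1 ≤ j.1 → (parent j).1 + 1 = j.1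
  halo_subset_cell_parent : ∀ {i j}, 1 ≤ j.1 → j.1 ≤ i.1 → (halo i ∩ halo j).Nonempty →
    halo i ⊆ cell (parent j)
  cell_subset_halo_of_lt : ∀ {i j}, j.1 < i.1 → (cell i ∩ cell j).Nonempty → cell i ⊆ halo j

namespace CellSystem

variable {Z : Type*} (𝒞 : CellSystem Z) {g g' : ℕ → ℝ≥0∞} {D : ℝ≥0∞}

theorem finite_mem_of_le (k : ℕ) (x : Z) : {i | i.1 ≤ k ∧ x ∈ 𝒞.cell i}.Finite :=
  ((finite_Iic k).biUnion fun j _ => 𝒞.finite_mem j x).subset fun _ hi =>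
    mem_biUnion (mem_Iic.2 hi.1) ⟨rfl, hi.2⟩

/-- The net content of a set: the infimum of `∑ g (level)` over all its covers by cells of
level at least `k`. -/
noncomputable def content (g : ℕ → ℝ≥0∞) (k : ℕ) : OuterMeasure Z where
  measureOf E := ⨅ (J : Set (ℕ × ℕ)) (_ : (∀ i ∈ J, k ≤ i.1) ∧ E ⊆ ⋃ i ∈ J, 𝒞.cell i),
    ∑' i : J, g i.1.1
  empty := nonpos_iff_eq_zero.1 <| iInf₂_le_of_le ∅ (by simp) (by simp)
  mono h := le_iInf₂ fun J hJ => iInf₂_le J ⟨hJ.1, h.trans hJ.2⟩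
  iUnion_nat E _ := by
    refine ENNReal.le_of_forall_pos_le_add fun ε hε hfin => ?_
    obtain ⟨ε', hε', hsum⟩ := ENNReal.exists_pos_sum_of_countable (ENNReal.coe_ne_zero.2 hε.ne') ℕ
    have hcover n := exists_lt_of_ciInf_lt <|
      ENNReal.lt_add_right (ENNReal.ne_top_of_tsum_ne_top hfin.ne n)
        (ENNReal.coe_ne_zero.2 (hε' n).ne')
    simp only [iInf_lt_iff] at hcover
    choose J hJ hJε using hcover
    calc _ ≤ ∑' i : ↥(⋃ n, J n), g i.1.1 := by
          refine iInf₂_le _ ⟨fun i hi => ?_, iUnion_subset fun n => (hJ n).2.trans ?_⟩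
          · obtain ⟨n, hn⟩ := mem_iUnion.1 hi
            exact (hJ n).1 i hn
          · exact biUnion_subset_biUnion_left (subset_iUnion J n)
      _ ≤ ∑' n, ∑' i : J n, g i.1.1 := ENNReal.tsum_iUnion_le_tsum (fun i => g i.1) J
      _ ≤ _ := (ENNReal.tsum_le_tsum fun n => (hJε n).le).trans <| by
          rw [ENNReal.tsum_add]
          gcongr

variable {𝒞} {k l : ℕ} {E F : Set Z} {M : ℝ≥0∞}

theorem content_le_tsum {J : Set (ℕ × ℕ)} (hJ : ∀ i ∈ J, k ≤ i.1)
    (hE : E ⊆ ⋃ i ∈ J, 𝒞.cell i) : 𝒞.content g k E ≤ ∑' i : J, g i.1.1 :=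
  iInf₂_le J ⟨hJ, hE⟩

theorem le_content (h : ∀ J : Set (ℕ × ℕ), (∀ i ∈ J, k ≤ i.1) → E ⊆ ⋃ i ∈ J, 𝒞.cell i →
    M ≤ ∑' i : J, g i.1.1) : M ≤ 𝒞.content g k E :=
  le_iInf₂ fun J hJ => h J hJ.1 hJ.2

theorem exists_cover_of_content_lt (h : 𝒞.content g k E < M) :
    ∃ J : Set (ℕ × ℕ), (∀ i ∈ J, k ≤ i.1) ∧ E ⊆ ⋃ i ∈ J, 𝒞.cell i ∧
      ∑' i : J, g i.1.1 < M := by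
  obtain ⟨J, hJ⟩ := iInf_lt_iff.1 h
  obtain ⟨⟨hk, hE⟩, hlt⟩ := iInf_lt_iff.1 hJ
  exact ⟨J, hk, hE, hlt⟩

theorem content_mono_level (h : k ≤ l) : 𝒞.content g k E ≤ 𝒞.content g l E :=
  le_content fun _ hl hE => content_le_tsum (fun i hi => h.trans (hl i hi)) hE

theorem mul_content_le {c : ℝ≥0∞} (h : ∀ j ≥ k, c * g' j ≤ g j) :
    c * 𝒞.content g' k E ≤ 𝒞.content g k E :=
  le_content fun J hJ hE => calc
    c * 𝒞.content g' k E ≤ c * ∑' i : J, g' i.1.1 := by gcongr; exact content_le_tsum hJ hE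
    _ ≤ ∑' i : J, g i.1.1 := by
      rw [← ENNReal.tsum_mul_left]
      exact ENNReal.tsum_le_tsum fun i => h _ (hJ i i.2)

theorem content_mono_weight (h : ∀ j ≥ k, g' j ≤ g j) :
    𝒞.content g' k E ≤ 𝒞.content g k E := by
  simpa only [one_mul] using mul_content_le (c := 1) (by simpa only [one_mul] using h)

theorem content_cell_le (i : ℕ × ℕ) (hk : k ≤ i.1) : 𝒞.content g k (𝒞.cell i) ≤ g i.1 := by
  simpa using content_le_tsum (g := g) (J := {i}) (k := k) (by simpa using hk)
    (by simp : 𝒞.cell i ⊆ _)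

theorem exists_disjoint_halo_subfamily {L : Set (ℕ × ℕ)} (hL : ∀ i ∈ L, (𝒞.cell i).Nonempty) :
    ∃ L' ⊆ L, L'.PairwiseDisjoint 𝒞.halo ∧
      ∀ i ∈ L, ∃ j ∈ L', j.1 ≤ i.1 ∧ (𝒞.halo i ∩ 𝒞.halo j).Nonempty := by
  obtain ⟨L', hL', hdisj, hcover⟩ := Vitali.exists_disjoint_subfamily_covering_enlargement 𝒞.halo L
    (fun i => (1 / 2 : ℝ) ^ i.1) (3 / 2) (by norm_num) (fun i _ => by positivity) 1
    (fun i _ => pow_le_one₀ (by norm_num) (by norm_num))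
    fun i hi => (hL i hi).mono (𝒞.cell_subset_halo i)
  refine ⟨L', hL', hdisj, fun i hi => ?_⟩
  obtain ⟨j, hj, hne, hle⟩ := hcover i hi
  refine ⟨j, hj, not_lt.1 fun hlt => ?_, hne⟩
  have hpow : (1 / 2 : ℝ) ^ j.1 ≤ (1 / 2) ^ i.1 * (1 / 2) := by
    rw [← pow_succ]
    exact pow_le_pow_of_le_one (by norm_num) (by norm_num) hlt
  have hpos : (0 : ℝ) < (1 / 2) ^ i.1 := by positivity
  linarith

theorem tsum_parent_image_le (hD : ∀ k, g k ≤ D * g (k + 1)) {J : Set (ℕ × ℕ)}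
    (hJ : ∀ i ∈ J, 1 ≤ i.1) :
    ∑' i : ↥(𝒞.parent '' J), g i.1.1 ≤ D * ∑' i : J, g i.1.1 := calc
  ∑' i : ↥(𝒞.parent '' J), g i.1.1 ≤ ∑' i : J, g (𝒞.parent i).1 :=
    tsum_image_le (w := fun i => g i.1) 𝒞.parent
  _ ≤ D * ∑' i : J, g i.1.1 := by
    rw [← ENNReal.tsum_mul_left]
    refine ENNReal.tsum_le_tsum fun i => ?_
    rw [← 𝒞.level_parent (hJ i i.2)]
    exact hD _

theorem tsum_le_two_mul_of_disjoint_halo {J L : Set (ℕ × ℕ)} (hk : ∀ i ∈ J, k ≤ i.1)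
    (hE : E ⊆ ⋃ i ∈ J, 𝒞.cell i) (hL : L.PairwiseDisjoint 𝒞.halo)
    (hg : ∀ l ∈ L, g l.1 ≤ 2 * 𝒞.content g k (E ∩ 𝒞.cell l))
    (hlevel : ∀ l ∈ L, ∀ i ∈ J, (𝒞.cell i ∩ 𝒞.cell l).Nonempty → l.1 < i.1) :
    ∑' l : L, g l.1.1 ≤ 2 * ∑' i : J, g i.1.1 := by
  set near : ℕ × ℕ → Set (ℕ × ℕ) := fun l => {i ∈ J | (𝒞.cell i ∩ 𝒞.cell l).Nonempty}
  have hcontent l : 𝒞.content g k (E ∩ 𝒞.cell l) ≤ ∑' i : near l, g i.1.1 := by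
    refine content_le_tsum (fun i hi => hk i hi.1) fun x ⟨hxE, hxl⟩ => ?_
    obtain ⟨i, hi, hxi⟩ := mem_iUnion₂.1 (hE hxE)
    exact mem_biUnion (show i ∈ near l from ⟨hi, x, hxi, hxl⟩) hxi
  have hdisj : L.PairwiseDisjoint near := fun l hl m hm hlm => disjoint_left.2 fun i hil him => by
    obtain ⟨x, hx, -⟩ := hil.2
    exact disjoint_left.1 (hL hl hm hlm)
      (𝒞.cell_subset_halo_of_lt (hlevel l hl i hil.1 hil.2) hil.2 hx)
      (𝒞.cell_subset_halo_of_lt (hlevel m hm i him.1 him.2) him.2 hx)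
  calc ∑' l : L, g l.1.1 ≤ ∑' l : L, 2 * ∑' i : near l, g i.1.1 :=
        ENNReal.tsum_le_tsum fun l => (hg l l.2).trans (by gcongr; exact hcontent l)
    _ = 2 * ∑' i : ↥(⋃ l ∈ L, near l), g i.1.1 := by
        rw [ENNReal.tsum_mul_left, ENNReal.tsum_biUnion' (f := fun i : ℕ × ℕ => g i.1) hdisj]
    _ ≤ 2 * ∑' i : J, g i.1.1 := by
        gcongr
        exact ENNReal.tsum_mono_subtype (fun i : ℕ × ℕ => g i.1)
          (iUnion₂_subset fun l _ => sep_subset _ _)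

theorem exists_subfamily_meeting_halo {J : Set (ℕ × ℕ)} (hk : ∀ i ∈ J, k ≤ i.1)
    (hE : E ⊆ ⋃ i ∈ J, 𝒞.cell i) :
    ∃ K : Set (ℕ × ℕ), (∀ j ∈ K, k ≤ j.1) ∧ ∑' j : K, g j.1.1 ≤ 3 * ∑' i : J, g i.1.1 ∧
      ∀ l, k ≤ l.1 → g l.1 < 2 * 𝒞.content g k (E ∩ 𝒞.cell l) →
        ∃ j ∈ K, j.1 ≤ l.1 ∧ (𝒞.halo l ∩ 𝒞.halo j).Nonempty := by
  set P := {l : ℕ × ℕ | k ≤ l.1 ∧ g l.1 < 2 * 𝒞.content g k (E ∩ 𝒞.cell l)}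
  set L := {l ∈ P | ∀ i ∈ J, (𝒞.cell i ∩ 𝒞.cell l).Nonempty → l.1 < i.1}
  have hne : ∀ l ∈ P, (𝒞.cell l).Nonempty := fun l hl => by
    refine nonempty_iff_ne_empty.2 fun hempty => ?_
    simpa [hempty] using hl.2
  obtain ⟨L', hL'L, hdisj, hL'⟩ := exists_disjoint_halo_subfamily fun l (hl : l ∈ L) => hne l hl.1
  refine ⟨J ∪ L', ?_, ?_, fun l hkl hl => ?_⟩
  · rintro j (hj | hj)
    exacts [hk j hj, (hL'L hj).1.1]
  · calc ∑' j : ↥(J ∪ L'), g j.1.1 ≤ ∑' j : J, g j.1.1 + 2 * ∑' j : J, g j.1.1 := by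
          refine (ENNReal.tsum_union_le (fun j : ℕ × ℕ => g j.1) J L').trans ?_
          gcongr
          exact tsum_le_two_mul_of_disjoint_halo hk hE hdisj (fun l hl => (hL'L hl).1.2.le)
            fun l hl => (hL'L hl).2
      _ = 3 * ∑' i : J, g i.1.1 := by ring
  by_cases hlL : l ∈ L
  · obtain ⟨j, hj, hmeet⟩ := hL' l hlL
    exact ⟨j, Or.inr hj, hmeet⟩
  · have : ∃ i ∈ J, (𝒞.cell i ∩ 𝒞.cell l).Nonempty ∧ i.1 ≤ l.1 := by
      by_contra! h
      exact hlL ⟨⟨hkl, hl⟩, h⟩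
    obtain ⟨i, hi, hil, hle⟩ := this
    rw [inter_comm] at hil
    exact ⟨i, Or.inl hi, hle, hil.mono
      (inter_subset_inter (𝒞.cell_subset_halo l) (𝒞.cell_subset_halo i))⟩

theorem exists_cover_of_lt_two_mul_content (hD : ∀ k, g k ≤ D * g (k + 1))
    (hE : 𝒞.content g (k + 1) E < M) :
    ∃ J : Set (ℕ × ℕ), (∀ i ∈ J, k ≤ i.1) ∧ ∑' i : J, g i.1.1 ≤ 3 * D * M ∧
      ∀ l, k < l.1 → g l.1 < 2 * 𝒞.content g (k + 1) (E ∩ 𝒞.cell l) →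
        ∃ i ∈ J, i.1 ≤ l.1 ∧ 𝒞.cell l ⊆ 𝒞.cell i := by
  obtain ⟨J, hk, hEJ, hJM⟩ := exists_cover_of_content_lt hE
  obtain ⟨K, hkK, hKJ, hK⟩ := exists_subfamily_meeting_halo (g := g) hk hEJ
  have h1K : ∀ j ∈ K, 1 ≤ j.1 := fun j hj => (Nat.le_add_left 1 k).trans (hkK j hj)
  refine ⟨𝒞.parent '' K, ?_, ?_, fun l hkl hl => ?_⟩
  · rintro _ ⟨j, hj, rfl⟩
    have := hkK j hj
    have := 𝒞.level_parent (h1K j hj)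
    omega
  · calc ∑' i : ↥(𝒞.parent '' K), g i.1.1 ≤ D * ∑' j : K, g j.1.1 := tsum_parent_image_le hD h1K
      _ ≤ D * (3 * M) := by gcongr; exact hKJ.trans (by gcongr)
      _ = 3 * D * M := by ring
  · obtain ⟨j, hj, hjl, hmeet⟩ := hK l hkl hl
    have := 𝒞.level_parent (h1K j hj)
    exact ⟨𝒞.parent j, mem_image_of_mem _ hj, by omega,
      (𝒞.cell_subset_halo l).trans (𝒞.halo_subset_cell_parent (h1K j hj) hjl hmeet)⟩

theorem content_eq_zero_of_two_mul_content_inter_cell_le (hfin : 𝒞.content g k E ≠ ⊤)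
    (h : ∀ l, k ≤ l.1 → 2 * 𝒞.content g k (E ∩ 𝒞.cell l) ≤ g l.1) : 𝒞.content g k E = 0 := by
  have hle : 2 * 𝒞.content g k E ≤ 𝒞.content g k E := le_content fun J hk hJ => calc
    2 * 𝒞.content g k E ≤ 2 * 𝒞.content g k (⋃ i : J, E ∩ 𝒞.cell i) := by
      gcongr
      rw [← inter_iUnion, ← biUnion_eq_iUnion J fun i _ => 𝒞.cell i]
      exact subset_inter subset_rfl hJ
    _ ≤ ∑' i : J, 2 * 𝒞.content g k (E ∩ 𝒞.cell i) := by
      rw [ENNReal.tsum_mul_left]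
      gcongr
      exact measure_iUnion_le _
    _ ≤ ∑' i : J, g i.1.1 := ENNReal.tsum_le_tsum fun i => h i (hk i i.2)
  by_contra hne
  rw [two_mul] at hle
  exact (ENNReal.lt_add_right hfin hne).not_ge hle

theorem exists_cover_of_lt_two_mul_content_of_monotone (hD : ∀ k, g k ≤ D * g (k + 1))
    {E : ℕ → Set Z} (hE : Monotone E) (hM : ∀ n, 𝒞.content g (k + 1) (E n) < M) :
    ∃ J : Set (ℕ × ℕ), (∀ i ∈ J, k ≤ i.1) ∧ ∑' i : J, g i.1.1 ≤ 3 * D * M ∧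
      ∀ n l, k < l.1 → g l.1 < 2 * 𝒞.content g (k + 1) (E n ∩ 𝒞.cell l) →
        𝒞.cell l ⊆ ⋃ i ∈ J, 𝒞.cell i := by
  choose J hJk hJM hJ using fun n => exists_cover_of_lt_two_mul_content hD (hM n)
  obtain ⟨φ, J', hφ, hJ'⟩ := exists_strictMono_eventually_mem_iff J
  refine ⟨J', fun i hi => ?_, ?_, fun n l hkl hl x hx => ?_⟩
  · obtain ⟨n, hn⟩ := (hJ' i).exists
    exact hJk _ i (hn.2 hi)
  · simpa only [add_zero] using tsum_add_le_of_eventually_mem (w := fun i : ℕ × ℕ => g i.1)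
      (fun i hi => (hJ' i).mono fun n hn => hn.2 hi)
      (Eventually.of_forall fun n => zero_le) fun n => hJM (φ n)
  · have hagree : ∀ᶠ m in atTop, ∀ i ∈ {i | i.1 ≤ l.1 ∧ x ∈ 𝒞.cell i}, (i ∈ J (φ m) ↔ i ∈ J') :=
      (eventually_all_finite (𝒞.finite_mem_of_le l.1 x)).2 fun i _ => hJ' i
    obtain ⟨m, hm, hnm⟩ := (hagree.and (eventually_ge_atTop n)).exists
    have hlm : g l.1 < 2 * 𝒞.content g (k + 1) (E (φ m) ∩ 𝒞.cell l) := hl.trans_le <| by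
      gcongr
      exact hE (hnm.trans (hφ.id_le m))
    obtain ⟨i, hi, hil, hsub⟩ := hJ (φ m) l hkl hlm
    exact mem_biUnion ((hm i ⟨hil, hsub hx⟩).1 hi) (hsub hx)

theorem content_iUnion_le_of_monotone (hD : ∀ k, g k ≤ D * g (k + 1)) {E : ℕ → Set Z}
    (hE : Monotone E) (hfin : M ≠ ⊤) (hM : ∀ n, 𝒞.content g (k + 1) (E n) < M) :
    𝒞.content g k (⋃ n, E n) ≤ 3 * D * M := by
  obtain ⟨J, hk, hJM, hJ⟩ := exists_cover_of_lt_two_mul_content_of_monotone hD hE hM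
  have hrest : ∀ n, 𝒞.content g k (E n \ ⋃ i ∈ J, 𝒞.cell i) = 0 := by
    refine fun n => nonpos_iff_eq_zero.1 ((content_mono_level k.le_succ).trans_eq ?_)
    refine content_eq_zero_of_two_mul_content_inter_cell_le
      ((measure_mono sdiff_subset).trans_lt ((hM n).trans hfin.lt_top)).ne fun l hkl => ?_
    by_contra! hl
    have hempty : (E n \ ⋃ i ∈ J, 𝒞.cell i) ∩ 𝒞.cell l = ∅ := by
      refine eq_empty_of_forall_notMem fun x hx => hx.1.2 (hJ n l hkl (hl.trans_le ?_) hx.2)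
      gcongr
      exact sdiff_subset
    simp [hempty] at hl
  calc 𝒞.content g k (⋃ n, E n)
      ≤ 𝒞.content g k ((⋃ i ∈ J, 𝒞.cell i) ∪ ⋃ n, E n \ ⋃ i ∈ J, 𝒞.cell i) := by
        gcongr
        rw [← iUnion_sdiff, union_sdiff_self]
        exact subset_union_right
    _ ≤ 3 * D * M + 0 := by
        refine (measure_union_le _ _).trans (add_le_add ?_ ?_)
        · exact (content_le_tsum hk subset_rfl).trans hJM
        · exact (measure_iUnion_null hrest).le
    _ = 3 * D * M := add_zero _

theorem exists_limit_cover {E : ℕ → Set Z} (hE : Monotone E)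
    (hM : ∀ n, 𝒞.content g 0 (E n) < M) (k : ℕ) :
    ∃ (J : Set (ℕ × ℕ)) (F : ℕ → Set Z), Monotone F ∧
      ⋃ n, E n ⊆ (⋃ i ∈ J, 𝒞.cell i) ∪ ⋃ m, F m ∧
      ∀ m, ∑' i : J, g i.1.1 + 𝒞.content g k (F m) ≤ M := by
  choose J _ hEJ hJM using fun n => exists_cover_of_content_lt (hM n)
  obtain ⟨φ, J', hφ, hJ'⟩ := exists_strictMono_eventually_mem_iff J
  set W := ⋃ i ∈ J', 𝒞.cell i
  refine ⟨J', fun m => {x | x ∉ W ∧ ∀ n ≥ m, x ∈ E (φ n) ∧ ∀ i ∈ J (φ n), x ∈ 𝒞.cell i → k ≤ i.1},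
    fun m m' h x hx => ⟨hx.1, fun n hn => hx.2 n (h.trans hn)⟩, fun x hx => ?_, fun m => ?_⟩
  · obtain ⟨N, hN⟩ := mem_iUnion.1 hx
    by_cases hxW : x ∈ W
    · exact Or.inl hxW
    have hagree : ∀ᶠ n in atTop, ∀ i ∈ {i | i.1 ≤ k ∧ x ∈ 𝒞.cell i}, (i ∈ J (φ n) ↔ i ∈ J') :=
      (eventually_all_finite (𝒞.finite_mem_of_le k x)).2 fun i _ => hJ' i
    obtain ⟨m, hm⟩ := eventually_atTop.1 (hagree.and (eventually_ge_atTop N))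
    refine Or.inr (mem_iUnion.2 ⟨m, hxW, fun n hn => ⟨?_, fun i hi hxi => ?_⟩⟩)
    · exact hE ((hm n hn).2.trans (hφ.id_le n)) hN
    · by_contra! hik
      exact hxW (mem_biUnion (((hm n hn).1 i ⟨hik.le, hxi⟩).1 hi) hxi)
  · refine tsum_add_le_of_eventually_mem (w := fun i : ℕ × ℕ => g i.1)
      (fun i hi => (hJ' i).mono fun n hn => hn.2 hi) ?_ fun n => (hJM (φ n)).le
    filter_upwards [eventually_ge_atTop m] with n hn
    calc _ ≤ ∑' i : ↥{i ∈ J (φ n) \ J' | k ≤ i.1}, g i.1.1 := by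
          refine content_le_tsum (fun i hi => hi.2) fun x hx => ?_
          obtain ⟨hxE, hxk⟩ := hx.2 n hn
          obtain ⟨i, hi, hxi⟩ := mem_iUnion₂.1 (hEJ (φ n) hxE)
          exact mem_biUnion (show i ∈ {i ∈ J (φ n) \ J' | k ≤ i.1} from
            ⟨⟨hi, fun hi' => hx.1 (mem_biUnion hi' hxi)⟩, hxk i hi hxi⟩) hxi
      _ ≤ _ := ENNReal.tsum_mono_subtype (fun i : ℕ × ℕ => g i.1) (sep_subset _ _)

theorem exists_lt_content_of_monotone (hD : ∀ k, g k ≤ D * g (k + 1)) (hD0 : D ≠ 0)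
    (hDtop : D ≠ ⊤) (hle : ∀ j, g' j ≤ g j) (hk : ∀ j ≥ k, 3 * D * g' j ≤ g j)
    {E : ℕ → Set Z} (hE : Monotone E) (hM : M < 𝒞.content g' 0 (⋃ n, E n)) :
    ∃ n, M < 𝒞.content g 0 (E n) := by
  by_contra! hlt
  refine hM.not_ge (le_of_forall_gt_imp_ge_of_dense fun M₁ hM₁ => ?_)
  obtain ⟨J, F, hF, hcover, hsum⟩ :=
    exists_limit_cover hE (fun n => (hlt n).trans_lt hM₁) (k + 1)
  have hrest : 𝒞.content g' 0 (⋃ m, F m) ≤ ⨆ m, 𝒞.content g (k + 1) (F m) := by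
    refine le_of_forall_gt_imp_ge_of_dense fun M₂ hM₂ => ?_
    rcases eq_or_ne M₂ ⊤ with rfl | hfin
    · exact le_top
    have hbound := (mul_content_le hk).trans <|
      content_iUnion_le_of_monotone hD hF hfin fun m => (le_iSup _ m).trans_lt hM₂
    have h3D : 3 * D ≠ 0 := mul_ne_zero (by norm_num) hD0
    exact (content_mono_level k.zero_le).trans
      ((ENNReal.mul_le_mul_iff_right h3D (ENNReal.mul_ne_top (by norm_num) hDtop)).1 hbound)
  calc 𝒞.content g' 0 (⋃ n, E n)
      ≤ 𝒞.content g' 0 (⋃ i ∈ J, 𝒞.cell i) + 𝒞.content g' 0 (⋃ m, F m) :=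
        (measure_mono hcover).trans (measure_union_le _ _)
    _ ≤ ∑' i : J, g i.1.1 + ⨆ m, 𝒞.content g (k + 1) (F m) := by
        gcongr
        refine (content_mono_weight fun j _ => hle j).trans ?_
        exact content_le_tsum (fun i _ => zero_le) subset_rfl
    _ ≤ M₁ := by
        rw [ENNReal.add_iSup]
        exact iSup_le hsum

end CellSystem

section Choquet

theorem exists_forall_initial_bound {p : ℕ → Set (ℕ → ℕ) → Prop}
    (hp : ∀ l (E : ℕ → Set (ℕ → ℕ)), Monotone E → p l (⋃ n, E n) → ∃ n, p (l + 1) (E n))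
    (h0 : p 0 univ) : ∃ b : ℕ → ℕ, ∀ l, p l {x | ∀ i < l, x i ≤ b i} := by
  have hstep : ∀ l S, ∃ n, p l S → p (l + 1) (S ∩ {x | x l ≤ n}) := fun l S => by
    have hS : ⋃ n, S ∩ {x : ℕ → ℕ | x l ≤ n} = S := by
      rw [← inter_iUnion, inter_eq_left]
      exact fun x _ => mem_iUnion.2 ⟨x l, le_refl (x l)⟩
    by_cases h : p l S
    · obtain ⟨n, hn⟩ := hp l _ (fun n n' hn => inter_subset_inter_right S
        fun x (hx : x l ≤ n) => hx.trans hn) (hS.symm ▸ h)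
      exact ⟨n, fun _ => hn⟩
    · exact ⟨0, fun h' => absurd h' h⟩
  choose next hnext using hstep
  let S : ℕ → Set (ℕ → ℕ) := Nat.rec univ fun l S => S ∩ {x | x l ≤ next l S}
  have hpS : ∀ l, p l (S l) := Nat.rec h0 fun l ih => hnext l (S l) ih
  refine ⟨fun l => next l (S l), fun l => ?_⟩
  have hS : ∀ l, S l = {x | ∀ i < l, x i ≤ next i (S i)} := Nat.rec (by simp [S]) fun l ih => by
    change S l ∩ {x | x l ≤ next l (S l)} = _
    ext x
    exact ((Set.ext_iff.1 ih x).and Iff.rfl).trans Nat.forall_lt_succ_right.symm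
  exact hS l ▸ hpS l

theorem exists_initial_bound_subset {b : ℕ → ℕ} {O : Set (ℕ → ℕ)} (hO : IsOpen O)
    (hb : univ.pi (fun i => Iic (b i)) ⊆ O) : ∃ l, {x | ∀ i < l, x i ≤ b i} ⊆ O := by
  by_contra! hcon
  choose x hxb hxO using fun l => not_subset.1 (hcon l)
  obtain ⟨y, hy, ψ, hψ, hlim⟩ :=
    (isCompact_univ_pi fun i => (finite_Iic (b i)).isCompact).tendsto_subseq
      (x := fun l i => min (x l i) (b i)) fun l i _ => mem_Iic.2 (min_le_right _ _)
  have hlim' : Tendsto (x ∘ ψ) atTop (𝓝 y) := by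
    refine tendsto_pi_nhds.2 fun i => (tendsto_pi_nhds.1 hlim i).congr' ?_
    filter_upwards [hψ.tendsto_atTop.eventually_gt_atTop i] with l hl
    exact min_eq_left (hxb (ψ l) i hl)
  obtain ⟨l, hl⟩ := (hlim'.eventually_mem (hO.mem_nhds (hb hy))).exists
  exact hxO _ hl

variable {Z : Type*} [TopologicalSpace Z] {Y : Set Z}

/- Choquet's capacitability argument. The index `l` lets the capacity improve at each passage to
the limit, so that it applies to a sequence of contents none of which is itself a capacity. -/
theorem exists_isCompact_of_analyticSet (hY : AnalyticSet Y) {p : ℕ → Set Z → Prop}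
    (hp : ∀ l (E : ℕ → Set Z), Monotone E → p l (⋃ n, E n) → ∃ n, p (l + 1) (E n))
    (h0 : p 0 Y) :
    ∃ K ⊆ Y, IsCompact K ∧ ∀ O, IsOpen O → K ⊆ O → ∃ l, ∃ E ⊆ O, p l E := by
  rw [AnalyticSet] at hY
  rcases hY with rfl | ⟨φ, hφ, rfl⟩
  · exact ⟨∅, subset_rfl, isCompact_empty, fun O _ _ => ⟨0, ∅, empty_subset O, h0⟩⟩
  obtain ⟨b, hb⟩ := exists_forall_initial_bound (p := fun l E => p l (φ '' E))
    (fun l _ hE h => hp l _ (fun _ _ hn => image_mono (hE hn)) (image_iUnion ▸ h))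
    (by rwa [image_univ])
  refine ⟨φ '' univ.pi fun i => Iic (b i), image_subset_range _ _,
    (isCompact_univ_pi fun i => (finite_Iic (b i)).isCompact).image hφ, fun O hO hsub => ?_⟩
  obtain ⟨l, hl⟩ := exists_initial_bound_subset (hO.preimage hφ) (image_subset_iff.1 hsub)
  exact ⟨l, _, image_subset_iff.2 hl, hb l⟩

theorem exists_isCompact_measure_pos_of_analyticSet [MeasurableSpace Z] (hY : AnalyticSet Y)
    (ν : Measure Z) [ν.OuterRegular] (h : ν Y ≠ 0) : ∃ K ⊆ Y, IsCompact K ∧ ν K ≠ 0 := by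
  obtain ⟨m, hm0, hm⟩ := exists_between (pos_iff_ne_zero.2 h)
  obtain ⟨K, hKY, hK, hopen⟩ := exists_isCompact_of_analyticSet hY (p := fun _ E => m < ν E)
    (fun _ E hE h => lt_iSup_iff.1 (hE.measure_iUnion ▸ h)) hm
  refine ⟨K, hKY, hK, (hm0.trans_le ?_).ne'⟩
  rw [K.measure_eq_iInf_isOpen]
  refine le_iInf₂ fun O hKO => le_iInf fun hO => ?_
  obtain ⟨_, E, hE, hmE⟩ := hopen O hO hKO
  exact hmE.le.trans (measure_mono hE)

theorem exists_isCompact_content_ne_zero_of_analyticSet {𝒞 : CellSystem Z}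
    (hopen : ∀ i, IsOpen (𝒞.cell i)) {g : ℕ → ℝ≥0∞} {D : ℝ≥0∞} (hD : ∀ k, g k ≤ D * g (k + 1))
    (hD1 : 1 ≤ D) (hDtop : D ≠ ⊤) {b : ℕ} (hb : b ≠ 0) (hY : AnalyticSet Y)
    (h : 𝒞.content g 0 Y ≠ 0) :
    ∃ K ⊆ Y, IsCompact K ∧ 𝒞.content (fun j => (3 * D) ^ (j / b) * g j) 0 K ≠ 0 := by
  have hD3 : 1 ≤ 3 * D := hD1.trans (le_mul_of_one_le_left zero_le (by norm_num))
  set w : ℕ → ℕ → ℝ≥0∞ := fun l j => (3 * D) ^ min l (j / b) * g j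
  have hw0 : w 0 = g := by ext j; simp [w]
  have hwD : ∀ l k, w l k ≤ D * w l (k + 1) := fun l k => calc
    w l k ≤ (3 * D) ^ min l ((k + 1) / b) * (D * g (k + 1)) := mul_le_mul'
      (pow_le_pow_right' hD3 (min_le_min_left l (Nat.div_le_div_right k.le_succ))) (hD k)
    _ = D * w l (k + 1) := mul_left_comm _ _ _
  have hwl : ∀ l, ∀ j ≥ (l + 1) * b, 3 * D * w l j ≤ w (l + 1) j := fun l j hj => by
    have hlj : l + 1 ≤ j / b := (Nat.le_div_iff_mul_le (Nat.pos_of_ne_zero hb)).2 hj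
    simp only [w, min_eq_left hlj, min_eq_left (Nat.le_of_succ_le hlj), pow_succ', mul_assoc,
      le_rfl]
  obtain ⟨m, hm0, hm⟩ := exists_between (pos_iff_ne_zero.2 h)
  obtain ⟨K, hKY, hK, hKO⟩ := exists_isCompact_of_analyticSet hY
    (p := fun l E => m < 𝒞.content (w l) 0 E)
    (fun l _ hE h => CellSystem.exists_lt_content_of_monotone (hwD (l + 1))
      (zero_lt_one.trans_le hD1).ne' hDtop
      (fun j => by dsimp only [w]; gcongr; exact l.le_succ) (hwl l) hE h) (by rwa [hw0])
  refine ⟨K, hKY, hK, (hm0.trans_le (CellSystem.le_content fun J _ hKJ => ?_)).ne'⟩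
  obtain ⟨l, E, hE, hmE⟩ := hKO _ (isOpen_biUnion fun i _ => hopen i) hKJ
  refine hmE.le.trans <| (CellSystem.content_mono_weight
    (g := fun j => (3 * D) ^ (j / b) * g j) fun j _ => ?_).trans
      (CellSystem.content_le_tsum (fun _ _ => zero_le) hE)
  dsimp only [w]
  gcongr
  exact min_le_right _ _

end Choquet

section BallCells

/-- The radius `32⁻ᵏ` of the balls out of which the cells of level `k` are cut. -/
noncomputable def mesh (k : ℕ) : ℝ := (1 / 32) ^ k

theorem mesh_pos (k : ℕ) : 0 < mesh k := by
  unfold mesh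
  positivity

theorem mesh_succ (k : ℕ) : mesh (k + 1) = mesh k / 32 := by
  unfold mesh
  ring

theorem mesh_antitone : Antitone mesh := fun _ _ h =>
  pow_le_pow_of_le_one (by norm_num) (by norm_num) h

theorem tendsto_mesh : Tendsto mesh atTop (𝓝 0) :=
  tendsto_pow_atTop_nhds_zero_of_lt_one (by norm_num) (by norm_num)

variable {Z : Type*} [PseudoMetricSpace Z] {z : ℕ → Z}

/-- The cell of index `(k, n)` attached to a sequence `z`. Removing the smaller balls around the
previous points makes the cells of a given level point-finite. -/
def ballCell (z : ℕ → Z) (i : ℕ × ℕ) : Set Z :=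
  Metric.ball (z i.2) (3 * mesh i.1) \ ⋃ m ∈ Iio i.2, Metric.closedBall (z m) (mesh i.1)

theorem isOpen_ballCell (z : ℕ → Z) (i : ℕ × ℕ) : IsOpen (ballCell z i) :=
  Metric.isOpen_ball.sdiff ((finite_Iio _).isClosed_biUnion fun _ _ => Metric.isClosed_closedBall)

theorem dist_lt_of_mem_ballCell {i : ℕ × ℕ} {x y : Z} (hx : x ∈ ballCell z i)
    (hy : y ∈ ballCell z i) : dist x y < 6 * mesh i.1 := by
  have hxi := Metric.mem_ball.1 hx.1
  have hyi := Metric.mem_ball.1 hy.1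
  have := dist_triangle_right x y (z i.2)
  linarith

theorem dist_lt_of_mem_thickening_ballCell {i : ℕ × ℕ} {x y : Z}
    (hx : x ∈ Metric.thickening (mesh i.1) (ballCell z i))
    (hy : y ∈ Metric.thickening (mesh i.1) (ballCell z i)) : dist x y < 8 * mesh i.1 := by
  obtain ⟨x', hx', hxx'⟩ := Metric.mem_thickening_iff.1 hx
  obtain ⟨y', hy', hyy'⟩ := Metric.mem_thickening_iff.1 hy
  have hxy' := dist_lt_of_mem_ballCell hx' hy'
  have htri := dist_triangle4 x x' y' y
  rw [dist_comm y' y] at htri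
  linarith

theorem exists_dist_le_mesh (hz : DenseRange z) (x : Z) (k : ℕ) : ∃ n, dist x (z n) ≤ mesh k :=
  (hz.exists_dist_lt x (mesh_pos k)).imp fun _ => le_of_lt

theorem exists_subset_ballCell (hz : DenseRange z) (k : ℕ) {U : Set Z}
    (hU : ∀ x ∈ U, ∀ y ∈ U, dist x y ≤ mesh k) : ∃ n, U ⊆ ballCell z (k, n) := by
  classical
  rcases U.eq_empty_or_nonempty with rfl | ⟨x₀, hx₀⟩
  · exact ⟨0, empty_subset _⟩
  have hex : ∃ n, ∃ x ∈ U, dist x (z n) ≤ mesh k :=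
    (exists_dist_le_mesh hz x₀ k).imp fun n hn => ⟨x₀, hx₀, hn⟩
  refine ⟨Nat.find hex, fun y hy => ⟨?_, ?_⟩⟩
  · obtain ⟨x, hx, hxn⟩ := Nat.find_spec hex
    have := hU y hy x hx
    have := dist_triangle y x (z (Nat.find hex))
    have := mesh_pos k
    rw [Metric.mem_ball]
    linarith
  · rw [mem_iUnion₂]
    rintro ⟨m, hm, hym⟩
    exact Nat.find_min hex hm ⟨y, hy, hym⟩

theorem exists_ballCell_parent (hz : DenseRange z) :
    ∃ q : ℕ × ℕ → ℕ × ℕ, ∀ j : ℕ × ℕ, 1 ≤ j.1 → (q j).1 + 1 = j.1 ∧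
      ∀ i : ℕ × ℕ, j.1 ≤ i.1 → (Metric.thickening (mesh i.1) (ballCell z i) ∩
        Metric.thickening (mesh j.1) (ballCell z j)).Nonempty →
        Metric.thickening (mesh i.1) (ballCell z i) ⊆ ballCell z (q j) := by
  have hparent : ∀ j : ℕ × ℕ, 1 ≤ j.1 → ∃ q : ℕ × ℕ, q.1 + 1 = j.1 ∧
      ∀ i : ℕ × ℕ, j.1 ≤ i.1 → (Metric.thickening (mesh i.1) (ballCell z i) ∩
        Metric.thickening (mesh j.1) (ballCell z j)).Nonempty →
        Metric.thickening (mesh i.1) (ballCell z i) ⊆ ballCell z q := by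
    rintro ⟨_ | k, p⟩ hj
    · simp at hj
    let halo : ℕ × ℕ → Set Z := fun i => Metric.thickening (mesh i.1) (ballCell z i)
    let absorbed : Set (ℕ × ℕ) := {i | k + 1 ≤ i.1 ∧ (halo i ∩ halo (k + 1, p)).Nonempty}
    obtain ⟨n, hn⟩ := exists_subset_ballCell hz k (U := ⋃ i ∈ absorbed, halo i) <| by
        intro x hx y hy
        obtain ⟨i, ⟨hi, a, hai, haj⟩, hxi⟩ := mem_iUnion₂.1 hx
        obtain ⟨i', ⟨hi', a', hai', haj'⟩, hyi'⟩ := mem_iUnion₂.1 hy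
        have := dist_lt_of_mem_thickening_ballCell hxi hai
        have hjj : dist a a' < 8 * mesh (k + 1) := dist_lt_of_mem_thickening_ballCell haj haj'
        have := dist_lt_of_mem_thickening_ballCell hai' hyi'
        have := dist_triangle4 x a a' y
        have := mesh_antitone hi
        have := mesh_antitone hi'
        have := mesh_pos k
        rw [mesh_succ] at *
        linarith
    exact ⟨(k, n), rfl, fun i hi hne =>
      (subset_biUnion_of_mem (s := absorbed) (u := halo) ⟨hi, hne⟩).trans hn⟩
  choose! q hq using hparent
  exact ⟨q, hq⟩

/-- The cell system of a separable metric space, whose halos are the thickenings of the cells by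
their radius. -/
noncomputable def ballCellSystem (z : ℕ → Z) (hz : DenseRange z) : CellSystem Z where
  cell := ballCell z
  halo i := Metric.thickening (mesh i.1) (ballCell z i)
  parent := (exists_ballCell_parent hz).choose
  finite_mem k x := by
    obtain ⟨n, hn⟩ := exists_dist_le_mesh hz x k
    refine ((finite_Iic n).image fun m => (k, m)).subset ?_
    rintro ⟨_, m⟩ ⟨rfl, hx⟩
    exact ⟨m, not_lt.1 fun hnm => hx.2 (mem_biUnion (mem_Iio.2 hnm) hn), rfl⟩
  cell_subset_halo _ := Metric.self_subset_thickening (mesh_pos _) _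
  level_parent hj := ((exists_ballCell_parent hz).choose_spec _ hj).1
  halo_subset_cell_parent hj := ((exists_ballCell_parent hz).choose_spec _ hj).2 _
  cell_subset_halo_of_lt {i j} hij := fun ⟨x, hxi, hxj⟩ y hy => by
    refine Metric.mem_thickening_iff.2 ⟨x, hxj, ?_⟩
    have := dist_lt_of_mem_ballCell hy hxi
    have := (mesh_antitone hij).trans_eq (mesh_succ j.1)
    have := mesh_pos j.1
    linarith

end BallCells

section Halving

theorem exists_two_mul_measure_le_of_monotone {Ω : Type*} [MeasurableSpace Ω] (μ : Measure Ω)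
    {S : ℕ → Set Ω} {ε : ℝ≥0∞} (hS : Monotone S) (h0 : μ (S 0) = 0)
    (hstep : ∀ n, μ (S (n + 1)) ≤ μ (S n) + ε) (hfin : μ (⋃ n, S n) ≠ ⊤) :
    ∃ n, 2 * μ (S n) ≤ μ (⋃ n, S n) ∧ μ (⋃ n, S n) ≤ 2 * (μ (S n) + ε) := by
  by_cases hU : μ (⋃ n, S n) = 0
  · exact ⟨0, by simp [h0], by simp [hU]⟩
  have hex : ∃ n, μ (⋃ n, S n) < 2 * μ (S n) := by
    rw [← lt_iSup_iff, ← ENNReal.mul_iSup, ← hS.measure_iUnion, two_mul]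
    exact ENNReal.lt_add_right hfin hU
  classical
  obtain ⟨n, hn⟩ := Nat.exists_eq_succ_of_ne_zero (n := Nat.find hex) fun h => by
    simpa [h, h0] using Nat.find_spec hex
  refine ⟨n, not_lt.1 (Nat.find_min hex (hn ▸ n.lt_succ_self)), ?_⟩
  exact (hn ▸ Nat.find_spec hex).le.trans (by gcongr; exact hstep n)

theorem exists_measurableSet_half {Ω : Type*} [TopologicalSpace Ω] [SecondCountableTopology Ω]
    [MeasurableSpace Ω] [OpensMeasurableSpace Ω] (μ : Measure Ω) [IsFiniteMeasure μ]
    [μ.OuterRegular] [NullSingletonClass μ] {C : Set Ω} (hC : MeasurableSet C) {ε : ℝ≥0∞}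
    (hε : ε ≠ 0) : ∃ H ⊆ C, MeasurableSet H ∧ 2 * μ H ≤ μ C ∧ μ C ≤ 2 * μ H + ε := by
  rcases isEmpty_or_nonempty Ω with hΩ | hΩ
  · exact ⟨∅, empty_subset C, .empty, by simp, by simp [C.eq_empty_of_isEmpty]⟩
  have hsmall : ∀ x, ∃ U ∈ 𝓝 x, IsOpen U ∧ μ U < ε / 2 := fun x => by
    obtain ⟨U, hxU, hU, hμU⟩ := ({x} : Set Ω).exists_isOpen_lt_of_lt (μ := μ) (ε / 2) <| by
      simpa using hε
    exact ⟨U, hU.mem_nhds (hxU rfl), hU, hμU⟩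
  choose U hxU hUo hμU using hsmall
  obtain ⟨t, ht, hcover⟩ := TopologicalSpace.countable_cover_nhds hxU
  obtain ⟨x, rfl⟩ := ht.exists_eq_range <| nonempty_iff_ne_empty.2 fun h =>
    empty_ne_univ (by simpa [h] using hcover)
  have hCU : ⋃ n, C ∩ ⋃ i < n, U (x i) = C := by
    rw [← inter_iUnion, inter_eq_left]
    intro y _
    obtain ⟨n, hn⟩ : ∃ n, y ∈ U (x n) := by
      simpa only [biUnion_range, mem_iUnion] using hcover.ge (mem_univ y)
    exact mem_iUnion.2 ⟨n + 1, mem_biUnion n.lt_succ_self hn⟩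
  have hstep n : μ (C ∩ ⋃ i < n + 1, U (x i)) ≤ μ (C ∩ ⋃ i < n, U (x i)) + ε / 2 := calc
    _ ≤ μ ((C ∩ ⋃ i < n, U (x i)) ∪ U (x n)) := by
      gcongr
      rw [biUnion_lt_succ, inter_union_distrib_left]
      exact union_subset_union_right _ inter_subset_right
    _ ≤ _ := (measure_union_le _ _).trans (by gcongr; exact (hμU _).le)
  obtain ⟨n, hn, hn'⟩ := exists_two_mul_measure_le_of_monotone μ
    (fun m n h => inter_subset_inter_right C
      (biUnion_subset_biUnion_left fun i hi => lt_of_lt_of_le hi h))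
    (by simp) hstep (measure_ne_top μ _)
  rw [hCU] at hn hn'
  refine ⟨_, inter_subset_left, hC.inter ?_, hn, hn'.trans_eq ?_⟩
  · exact .iUnion fun i => .iUnion fun _ => (hUo _).measurableSet
  · rw [mul_add, ENNReal.mul_div_cancel (by simp) (by simp)]

variable {Z : Type*} [PseudoMetricSpace Z] [MeasurableSpace Z] {δ : ℝ}

theorem two_mul_measure_iUnion_inter_le_thickening (μ : Measure Z) {C H : ℕ → Set Z}
    (hC : ∀ n, MeasurableSet (C n)) (hdisj : Pairwise (Function.onFun Disjoint C))
    (hdist : ∀ n, ∀ x ∈ C n, ∀ y ∈ C n, dist x y < δ) (hHC : ∀ n, H n ⊆ C n)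
    (hH : ∀ n, 2 * μ (H n) ≤ μ (C n)) (A : Set Z) :
    2 * μ ((⋃ n, H n) ∩ A) ≤ μ ((⋃ n, C n) ∩ Metric.thickening δ A) := by
  let I : Set ℕ := {n | (H n ∩ A).Nonempty}
  have hHI : (⋃ n, H n) ∩ A ⊆ ⋃ n ∈ I, H n := by
    rintro x ⟨hx, hxA⟩
    obtain ⟨n, hn⟩ := mem_iUnion.1 hx
    exact mem_biUnion (show n ∈ I from ⟨x, hn, hxA⟩) hn
  have hCI : ⋃ n ∈ I, C n ⊆ (⋃ n, C n) ∩ Metric.thickening δ A := by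
    refine iUnion₂_subset fun n ⟨y, hy, hyA⟩ x hx => ⟨mem_iUnion_of_mem n hx, ?_⟩
    exact Metric.mem_thickening_iff.2 ⟨y, hyA, hdist n x hx y (hHC n hy)⟩
  calc 2 * μ ((⋃ n, H n) ∩ A)
      ≤ 2 * ∑' n : I, μ (H n) := by
        gcongr
        exact (measure_mono hHI).trans (measure_biUnion_le μ I.to_countable _)
    _ = ∑' n : I, 2 * μ (H n) := ENNReal.tsum_mul_left.symm
    _ ≤ ∑' n : I, μ (C n) := ENNReal.tsum_le_tsum fun n => hH n
    _ = μ (⋃ n ∈ I, C n) :=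
        (measure_biUnion I.to_countable (fun _ _ _ _ h => hdisj h) fun n _ => hC n).symm
    _ ≤ _ := measure_mono hCI

variable [SecondCountableTopology Z] [BorelSpace Z]

theorem exists_measurableSet_partition_dist_lt {L : Set Z} (hL : MeasurableSet L) (hδ : 0 < δ) :
    ∃ C : ℕ → Set Z, (∀ n, MeasurableSet (C n)) ∧ Pairwise (Function.onFun Disjoint C) ∧
      ⋃ n, C n = L ∧ ∀ n, ∀ x ∈ C n, ∀ y ∈ C n, dist x y < δ := by
  rcases isEmpty_or_nonempty Z with hZ | hZ
  · exact ⟨fun _ => ∅, fun _ => .empty, fun _ _ _ => disjoint_bot_left,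
      Subsingleton.elim _ _, by simp⟩
  let z := TopologicalSpace.denseSeq Z
  refine ⟨disjointed fun n => L ∩ Metric.ball (z n) (δ / 2),
    .disjointed fun n => hL.inter measurableSet_ball, disjoint_disjointed _, ?_,
    fun n x hx y hy => ?_⟩
  · rw [iUnion_disjointed, ← inter_iUnion, inter_eq_left]
    intro x _
    obtain ⟨n, hn⟩ := (TopologicalSpace.denseRange_denseSeq Z).exists_dist_lt x (half_pos hδ)
    exact mem_iUnion.2 ⟨n, hn⟩
  · have hxn := Metric.mem_ball.1 (disjointed_subset _ n hx).2
    have hyn := Metric.mem_ball.1 (disjointed_subset _ n hy).2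
    have := dist_triangle_right x y (z n)
    linarith

theorem exists_isClosed_half (μ : Measure Z) [IsFiniteMeasure μ] [NullSingletonClass μ] {L : Set Z}
    (hL : IsClosed L) {ε : ℝ≥0∞} (hε : ε ≠ 0) (hδ : 0 < δ) :
    ∃ L' ⊆ L, IsClosed L' ∧ μ L ≤ 2 * μ L' + ε ∧
      ∀ A, 2 * μ (L' ∩ A) ≤ μ (L ∩ Metric.thickening δ A) := by
  obtain ⟨C, hCm, hdisj, hCL, hdist⟩ := exists_measurableSet_partition_dist_lt hL.measurableSet hδ
  have hε2 : ε / 2 ≠ 0 := (ENNReal.half_pos hε).ne'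
  obtain ⟨ε', hε', hsum⟩ := ENNReal.exists_pos_sum_of_countable' hε2 ℕ
  choose H hHC hHm hH hH' using fun n => exists_measurableSet_half μ (hCm n) (hε' n).ne'
  have hHdisj : Pairwise (Function.onFun Disjoint H) :=
    fun _ _ h => (hdisj h).mono (hHC _) (hHC _)
  obtain ⟨L', hL'H, hL', hμL'⟩ := (MeasurableSet.iUnion hHm).exists_isClosed_lt_add
    (measure_ne_top μ _) (ENNReal.half_pos hε2).ne'
  refine ⟨L', ?_, hL', ?_, fun A => ?_⟩
  · exact hCL ▸ hL'H.trans (iUnion_mono hHC)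
  · calc μ L = ∑' n, μ (C n) := by rw [← hCL, measure_iUnion hdisj hCm]
      _ ≤ ∑' n, (2 * μ (H n) + ε' n) := ENNReal.tsum_le_tsum hH'
      _ = 2 * μ (⋃ n, H n) + ∑' n, ε' n := by
        rw [ENNReal.tsum_add, ENNReal.tsum_mul_left, measure_iUnion hHdisj hHm]
      _ ≤ 2 * (μ L' + ε / 2 / 2) + ε / 2 := by gcongr
      _ = 2 * μ L' + ε := by
        rw [mul_add, ENNReal.mul_div_cancel (by simp) (by simp), add_assoc, ENNReal.add_halves]
  · calc 2 * μ (L' ∩ A) ≤ 2 * μ ((⋃ n, H n) ∩ A) := by gcongr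
      _ ≤ _ := hCL ▸ two_mul_measure_iUnion_inter_le_thickening μ hCm hdisj hdist hHC hH A

end Halving

/-- A decreasing sequence of closed sets along which a measure is halved, up to the errors `ε`,
uniformly over all regions up to the displacements `δ`. -/
structure IsHalvingSequence {Z : Type*} [PseudoMetricSpace Z] [MeasurableSpace Z] (μ : Measure Z)
    (ε : ℕ → ℝ≥0∞) (δ : ℕ → ℝ) (L : ℕ → Set Z) : Prop where
  isClosed : ∀ n, IsClosed (L n)
  succ_subset : ∀ n, L (n + 1) ⊆ L n
  measure_le : ∀ n, μ (L n) ≤ 2 * μ (L (n + 1)) + ε n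
  two_mul_measure_inter_le : ∀ n A, 2 * μ (L (n + 1) ∩ A) ≤ μ (L n ∩ Metric.thickening (δ n) A)

theorem exists_isHalvingSequence {Z : Type*} [PseudoMetricSpace Z] [SecondCountableTopology Z]
    [MeasurableSpace Z] [BorelSpace Z] (μ : Measure Z) [IsFiniteMeasure μ] [NullSingletonClass μ]
    {ε : ℕ → ℝ≥0∞} (hε : ∀ n, ε n ≠ 0) {δ : ℕ → ℝ} (hδ : ∀ n, 0 < δ n) {K : Set Z}
    (hK : IsClosed K) : ∃ L : ℕ → Set Z, L 0 = K ∧ IsHalvingSequence μ ε δ L := by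
  choose! half hsub hclosed hle hinter using fun (n : ℕ) (L : Set Z) (hL : IsClosed L) =>
    exists_isClosed_half μ hL (hε n) (hδ n)
  let L : ℕ → Set Z := fun n => Nat.rec K half n
  have hL : ∀ n, IsClosed (L n) := Nat.rec hK fun n => hclosed n (L n)
  exact ⟨L, rfl, hL, fun n => hsub n _ (hL n), fun n => hle n _ (hL n),
    fun n => hinter n _ (hL n)⟩

namespace IsHalvingSequence

variable {Z : Type*} [PseudoMetricSpace Z] [MeasurableSpace Z] {μ : Measure Z} {ε : ℕ → ℝ≥0∞}
  {δ r : ℕ → ℝ} {L : ℕ → Set Z}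

theorem antitone (h : IsHalvingSequence μ ε δ L) : Antitone L :=
  antitone_nat_of_succ_le h.succ_subset

theorem measure_zero_le (h : IsHalvingSequence μ ε δ L) (n : ℕ) :
    μ (L 0) ≤ 2 ^ n * μ (L n) + ∑ i ∈ Finset.range n, 2 ^ i * ε i := by
  induction n with
  | zero => simp
  | succ n ih =>
    calc μ (L 0) ≤ 2 ^ n * μ (L n) + ∑ i ∈ Finset.range n, 2 ^ i * ε i := ih
      _ ≤ 2 ^ n * (2 * μ (L (n + 1)) + ε n) + ∑ i ∈ Finset.range n, 2 ^ i * ε i := by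
        gcongr
        exact h.measure_le n
      _ = _ := by
        rw [Finset.sum_range_succ]
        ring

theorem half_measure_zero_le [IsFiniteMeasure μ] (h : IsHalvingSequence μ ε δ L)
    (hε : ∑' i, 2 ^ i * ε i ≤ μ (L 0) / 2) (n : ℕ) : μ (L 0) / 2 ≤ 2 ^ n * μ (L n) := by
  have hfin : μ (L 0) / 2 ≠ ⊤ := ENNReal.div_ne_top (measure_ne_top μ (L 0)) two_ne_zero
  refine (ENNReal.add_le_add_iff_right hfin).1 ?_
  rw [ENNReal.add_halves]
  refine (h.measure_zero_le n).trans ?_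
  gcongr
  exact (ENNReal.sum_le_tsum _).trans hε

theorem two_pow_mul_measure_inter_le (h : IsHalvingSequence μ ε δ L) (hr : ∀ n, 0 < r n)
    (hδr : ∀ n, δ n + r (n + 1) ≤ r n) (A : Set Z) {s k : ℕ} (hsk : s ≤ k) :
    2 ^ k * μ (L k ∩ A) ≤ 2 ^ s * μ (L s ∩ Metric.thickening (r s) A) := by
  induction hsk using Nat.decreasingInduction with
  | self =>
    gcongr
    exact Metric.self_subset_thickening (hr k) A
  | of_succ s _ ih =>
    calc 2 ^ k * μ (L k ∩ A)
        ≤ 2 ^ s * (2 * μ (L (s + 1) ∩ Metric.thickening (r (s + 1)) A)) := by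
          rwa [← mul_assoc, ← pow_succ]
      _ ≤ 2 ^ s * μ (L s ∩ Metric.thickening (δ s) (Metric.thickening (r (s + 1)) A)) := by
          gcongr
          exact h.two_mul_measure_inter_le s _
      _ ≤ 2 ^ s * μ (L s ∩ Metric.thickening (r s) A) := by
          gcongr
          exact (Metric.thickening_thickening_subset _ _ _).trans (Metric.thickening_mono (hδr s) _)

theorem measure_iInter_eq_zero [IsFiniteMeasure μ] (h : IsHalvingSequence μ ε δ L)
    (hr : ∀ n, 0 < r n) (hδr : ∀ n, δ n + r (n + 1) ≤ r n) : μ (⋂ n, L n) = 0 := by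
  by_contra hne
  obtain ⟨n, hn⟩ := ENNReal.exists_nat_mul_gt hne (measure_ne_top μ (L 0))
  refine hn.not_ge ?_
  calc n * μ (⋂ n, L n) ≤ 2 ^ n * μ (L n) := by
        gcongr
        · exact_mod_cast n.lt_two_pow_self.le
        · exact iInter_subset L n
    _ ≤ μ (L 0) := by
        have := h.two_pow_mul_measure_inter_le hr hδr univ n.zero_le
        rw [inter_univ, pow_zero, one_mul] at this
        exact this.trans (measure_mono inter_subset_left)

end IsHalvingSequence

section MassDistribution

theorem le_content_iInter_of_forall_measure_inter_cell_le {Z : Type*} [TopologicalSpace Z]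
    {𝒞 : CellSystem Z} (hopen : ∀ i, IsOpen (𝒞.cell i)) {g : ℕ → ℝ≥0∞} {M : ℝ≥0∞}
    {μ : ℕ → OuterMeasure Z} {L : ℕ → Set Z} (hanti : Antitone L) (hcomp : ∀ n, IsCompact (L n))
    (hclosed : ∀ n, IsClosed (L n)) (hM : ∀ n, M ≤ μ n (L n))
    (hcell : ∀ n i, μ n (L n ∩ 𝒞.cell i) ≤ g i.1) : M ≤ 𝒞.content g 0 (⋂ n, L n) := by
  refine CellSystem.le_content fun J _ hJ => ?_
  obtain ⟨n, hn⟩ := exists_subset_nhds_of_isCompact' (directed_of_isDirected_le hanti)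
    hcomp hclosed (U := ⋃ i ∈ J, 𝒞.cell i)
    fun x hx => (isOpen_biUnion fun i _ => hopen i).mem_nhds (hJ hx)
  calc M ≤ μ n (⋃ i ∈ J, L n ∩ 𝒞.cell i) :=
        (hM n).trans <| measure_mono <| by
          rw [← inter_iUnion₂]
          exact subset_inter Subset.rfl hn
    _ ≤ ∑' i : J, μ n (L n ∩ 𝒞.cell i) := measure_biUnion_le _ J.to_countable _
    _ ≤ ∑' i : J, g i.1.1 := ENNReal.tsum_le_tsum fun i => hcell n i

variable {Z : Type*} [PseudoMetricSpace Z] [MeasurableSpace Z]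

theorem half_mesh_add_mesh_le {b : ℕ} (hb : b ≠ 0) (n : ℕ) :
    mesh (b * n) / 2 + mesh (b * (n + 1)) ≤ mesh (b * n) := by
  have hsucc : b * n + 1 ≤ b * (n + 1) := by
    rw [mul_add_one]
    lia
  have := (mesh_antitone hsucc).trans_eq (mesh_succ _)
  have := mesh_pos (b * n)
  linarith

theorem IsHalvingSequence.two_pow_mul_measure_inter_ballCell_le {μ : Measure Z}
    {ε : ℕ → ℝ≥0∞} {L : ℕ → Set Z} {b : ℕ}
    (h : IsHalvingSequence μ ε (fun n => mesh (b * n) / 2) L) (hb : b ≠ 0) {z : ℕ → Z}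
    {g : ℕ → ℝ≥0∞} {A c : ℝ≥0∞} (i : ℕ × ℕ)
    (hA : μ (Metric.thickening (mesh i.1) (ballCell z i)) ≤ A * g i.1) (hc : 2 ≤ c) (n : ℕ) :
    2 ^ n * μ (L n ∩ ballCell z i) ≤ 2 * A * (c ^ (i.1 / b) * g i.1) := by
  set s := i.1 / b + 1
  have his : i.1 ≤ b * s := (Nat.lt_mul_div_succ i.1 (Nat.pos_of_ne_zero hb)).le
  calc 2 ^ n * μ (L n ∩ ballCell z i)
      ≤ 2 ^ s * μ (Metric.thickening (mesh i.1) (ballCell z i)) := by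
        rcases le_total s n with hsn | hns
        · refine (h.two_pow_mul_measure_inter_le (fun _ => mesh_pos _)
            (half_mesh_add_mesh_le hb) _ hsn).trans ?_
          gcongr
          exact inter_subset_right.trans (Metric.thickening_mono (mesh_antitone his) _)
        · gcongr
          · norm_num
          · exact inter_subset_right.trans (Metric.self_subset_thickening (mesh_pos _) _)
    _ ≤ (c ^ (i.1 / b) * 2) * (A * g i.1) := by
        rw [pow_succ]
        gcongr
    _ = _ := by ring

theorem exists_isCompact_null_content_ne_zero [SecondCountableTopology Z] [BorelSpace Z]
    {z : ℕ → Z} (hz : DenseRange z) (μ : Measure Z) [IsFiniteMeasure μ] [NullSingletonClass μ]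
    {g : ℕ → ℝ≥0∞} {A c : ℝ≥0∞} (hAtop : A ≠ ⊤)
    (hA : ∀ i, μ (Metric.thickening (mesh i.1) (ballCell z i)) ≤ A * g i.1) (hc : 2 ≤ c)
    {b : ℕ} (hb : b ≠ 0) {K : Set Z} (hK : IsCompact K) (hKc : IsClosed K) (hμK : μ K ≠ 0) :
    ∃ L ⊆ K, IsCompact L ∧ μ L = 0 ∧
      (ballCellSystem z hz).content (fun j => c ^ (j / b) * g j) 0 L ≠ 0 := by
  obtain ⟨ε, hε, hsum⟩ :=
    ENNReal.exists_pos_sum_of_countable' (ENNReal.half_pos hμK).ne' ℕ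
  obtain ⟨L, rfl, hL⟩ := exists_isHalvingSequence μ (ε := fun n => ε n / 2 ^ n)
    (fun n => (ENNReal.div_pos (hε n).ne' (by finiteness)).ne')
    (fun n => half_pos (mesh_pos (b * n))) hKc
  have hsum' : ∑' i, 2 ^ i * (ε i / 2 ^ i) ≤ μ (L 0) / 2 :=
    le_of_eq_of_le (tsum_congr fun i => ENNReal.mul_div_cancel (by simp) (by finiteness)) hsum.le
  have hcontent := le_content_iInter_of_forall_measure_inter_cell_le
    (𝒞 := ballCellSystem z hz) (g := fun j => 2 * A * (c ^ (j / b) * g j)) (isOpen_ballCell z)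
    (μ := fun n => (2 ^ n : ℝ≥0∞) • μ.toOuterMeasure)
    hL.antitone (fun n => hK.of_isClosed_subset (hL.isClosed n) (hL.antitone n.zero_le))
    hL.isClosed (hL.half_measure_zero_le hsum') fun n i =>
      hL.two_pow_mul_measure_inter_ballCell_le hb i (hA i) hc n
  refine ⟨⋂ n, L n, iInter_subset L 0, ?_, ?_, fun h => ?_⟩
  · exact hK.of_isClosed_subset (isClosed_iInter hL.isClosed) (iInter_subset L 0)
  · exact hL.measure_iInter_eq_zero (fun _ => mesh_pos _) (half_mesh_add_mesh_le hb)
  · have hinv : (2 * A)⁻¹ ≠ 0 :=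
      ENNReal.inv_ne_zero.2 (ENNReal.mul_ne_top ENNReal.ofNat_ne_top hAtop)
    have hle := CellSystem.mul_content_le (𝒞 := ballCellSystem z hz) (E := ⋂ n, L n) (k := 0)
      (c := (2 * A)⁻¹) (g' := fun j => 2 * A * (c ^ (j / b) * g j))
      (g := fun j => c ^ (j / b) * g j) fun j _ => by
        rw [← mul_assoc]
        exact mul_le_of_le_one_left zero_le (ENNReal.inv_mul_le_one _)
    rw [h, nonpos_iff_eq_zero, mul_eq_zero] at hle
    exact (ENNReal.half_pos hμK).not_ge (hcontent.trans (hle.resolve_left hinv).le)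

end MassDistribution

namespace CellSystem

variable {Z : Type*} [MeasurableSpace Z] {𝒞 : CellSystem Z} {ν : Measure Z} {g : ℕ → ℝ≥0∞}
  {A D M : ℝ≥0∞}

variable (𝒞 ν g M) in
/-- The union of the cells of positive level whose measure exceeds `M` times their weight. -/
def heavy : Set Z :=
  ⋃ i ∈ {i : ℕ × ℕ | 1 ≤ i.1 ∧ M * g i.1 < ν (𝒞.cell i)}, 𝒞.cell i

theorem cell_subset_heavy {i : ℕ × ℕ} (hi : 1 ≤ i.1) (h : M * g i.1 < ν (𝒞.cell i)) :
    𝒞.cell i ⊆ 𝒞.heavy ν g M :=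
  subset_biUnion_of_mem (u := 𝒞.cell)
    (show i ∈ {i : ℕ × ℕ | 1 ≤ i.1 ∧ M * g i.1 < ν (𝒞.cell i)} from ⟨hi, h⟩)

theorem mul_content_heavy_le (hmeas : ∀ i, MeasurableSet (𝒞.cell i))
    (hD : ∀ k, g k ≤ D * g (k + 1)) : M * 𝒞.content g 0 (𝒞.heavy ν g M) ≤ D * ν univ := by
  obtain ⟨L, hL, hdisj, hcover⟩ := 𝒞.exists_disjoint_halo_subfamily
    (L := {i | 1 ≤ i.1 ∧ M * g i.1 < ν (𝒞.cell i)})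
    fun i hi => nonempty_of_measure_ne_zero hi.2.ne_bot
  have hparent : 𝒞.heavy ν g M ⊆ ⋃ i ∈ 𝒞.parent '' L, 𝒞.cell i := by
    refine iUnion₂_subset fun i hi => ?_
    obtain ⟨j, hj, hji, hne⟩ := hcover i hi
    rw [biUnion_image]
    exact ((𝒞.cell_subset_halo i).trans (𝒞.halo_subset_cell_parent (hL hj).1 hji hne)).trans
      (subset_biUnion_of_mem (u := fun j => 𝒞.cell (𝒞.parent j)) hj)
  calc M * 𝒞.content g 0 (𝒞.heavy ν g M)
      ≤ M * (D * ∑' i : L, g i.1.1) := by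
        gcongr
        exact (content_le_tsum (fun _ _ => zero_le) hparent).trans
          (𝒞.tsum_parent_image_le hD fun i hi => (hL hi).1)
    _ = D * ∑' i : L, M * g i.1.1 := by
        rw [ENNReal.tsum_mul_left]
        ring
    _ ≤ D * ∑' i : L, ν (𝒞.cell i) := by
        gcongr with i
        exact (hL i.2).2.le
    _ = D * ν (⋃ i ∈ L, 𝒞.cell i) := by
        rw [measure_biUnion L.to_countable _ fun i _ => hmeas i]
        exact fun i hi j hj hij =>
          (hdisj hi hj hij).mono (𝒞.cell_subset_halo i) (𝒞.cell_subset_halo j)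
    _ ≤ D * ν univ := by
        gcongr
        exact subset_univ _

theorem exists_content_sdiff_heavy_ne_zero [IsFiniteMeasure ν]
    (hmeas : ∀ i, MeasurableSet (𝒞.cell i)) (hD : ∀ k, g k ≤ D * g (k + 1)) (hDtop : D ≠ ⊤)
    {Y : Set Z} (hY : 𝒞.content g 0 Y ≠ 0) :
    ∃ M : ℕ, 𝒞.content g 0 (Y \ 𝒞.heavy ν g M) ≠ 0 := by
  by_contra! hcon
  have hheavy : 𝒞.content g 0 (⋂ M : ℕ, 𝒞.heavy ν g M) = 0 := by
    by_contra hne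
    obtain ⟨M, hM⟩ := ENNReal.exists_nat_mul_gt hne
      (ENNReal.mul_ne_top hDtop (measure_ne_top ν univ))
    refine hM.not_ge (le_trans ?_ (mul_content_heavy_le (M := M) hmeas hD))
    gcongr
    exact iInter_subset _ M
  refine hY (measure_mono_null ?_ (measure_union_null hheavy (measure_iUnion_null hcon)))
  rw [← sdiff_iInter, union_sdiff_self]
  exact subset_union_right

theorem measure_halo_le (hD : ∀ k, g k ≤ D * g (k + 1)) (hD1 : 1 ≤ D)
    (hcell : ∀ i, 1 ≤ i.1 → ν (𝒞.cell i) ≤ A * g i.1) (huniv : ν univ ≤ A * g 0) (i : ℕ × ℕ) :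
    ν (𝒞.halo i) ≤ D * A * g i.1 := by
  have hcell' : ∀ i, ν (𝒞.cell i) ≤ A * g i.1 := fun i => by
    rcases Nat.eq_zero_or_pos i.1 with hi | hi
    · exact hi ▸ (measure_mono (subset_univ _)).trans huniv
    · exact hcell i hi
  rcases Nat.eq_zero_or_pos i.1 with hi | hi
  · rw [hi, mul_assoc]
    exact (measure_mono (subset_univ _)).trans (huniv.trans (le_mul_of_one_le_left zero_le hD1))
  rcases (𝒞.halo i).eq_empty_or_nonempty with hne | hne
  · simp [hne]
  calc ν (𝒞.halo i) ≤ ν (𝒞.cell (𝒞.parent i)) :=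
        measure_mono (𝒞.halo_subset_cell_parent hi le_rfl (by rwa [inter_self]))
    _ ≤ A * (D * g ((𝒞.parent i).1 + 1)) := (hcell' _).trans (by gcongr; exact hD _)
    _ = D * A * g i.1 := by
        rw [𝒞.level_parent hi]
        ring

end CellSystem

section NullSubsets

theorem analyticSet_inter_of_measurableSet {Z : Type*} [TopologicalSpace Z] [MeasurableSpace Z]
    [BorelSpace Z] {Y B : Set Z} (hY : AnalyticSet Y) (hB : MeasurableSet B) :
    AnalyticSet (Y ∩ B) := by
  obtain ⟨β, _, _, φ, hφ, rfl⟩ := analyticSet_iff_exists_polishSpace_range.1 hY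
  borelize β
  rw [inter_comm, ← image_preimage_eq_inter_range]
  exact (hφ.measurable hB).analyticSet.image_of_continuous hφ

theorem nullSingletonClass_of_measure_ballCell_le {Z : Type*} [PseudoMetricSpace Z]
    [MeasurableSpace Z] {z : ℕ → Z} (hz : DenseRange z) {ν : Measure Z} {g : ℕ → ℝ≥0∞}
    {A : ℝ≥0∞} (hlim : Tendsto g atTop (𝓝 0)) (hA : A ≠ ⊤)
    (hcell : ∀ i, ν (ballCell z i) ≤ A * g i.1) : NullSingletonClass ν where
  measure_singleton x := by
    have hAlim : Tendsto (fun k => A * g k) atTop (𝓝 0) := by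
      simpa using ENNReal.Tendsto.const_mul hlim (.inr hA)
    refine nonpos_iff_eq_zero.1 (ge_of_tendsto' hAlim fun k => ?_)
    obtain ⟨n, hn⟩ := exists_subset_ballCell hz k (U := {x}) (by simp [(mesh_pos k).le])
    exact (measure_mono hn).trans (hcell (k, n))

variable {Z : Type*} [MetricSpace Z] [SecondCountableTopology Z] [MeasurableSpace Z]
  [BorelSpace Z] {z : ℕ → Z} (hz : DenseRange z) (ν : Measure Z) [IsFiniteMeasure ν]
  {g : ℕ → ℝ≥0∞} {D : ℝ≥0∞} {b : ℕ} {Y : Set Z}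

theorem exists_isCompact_null_content_ne_zero_of_disjoint_heavy (hD : ∀ k, g k ≤ D * g (k + 1))
    (hD1 : 1 ≤ D) (hDtop : D ≠ ⊤) (hg0 : g 0 ≠ 0) (hg0top : g 0 ≠ ⊤)
    (hlim : Tendsto g atTop (𝓝 0)) (hb : b ≠ 0) (hY : AnalyticSet Y) (hνY : ν Y ≠ 0) (M : ℕ)
    (hdisj : Disjoint Y ((ballCellSystem z hz).heavy ν g M)) :
    ∃ K ⊆ Y, IsCompact K ∧ ν K = 0 ∧
      (ballCellSystem z hz).content (fun j => (3 * D) ^ (j / b) * g j) 0 K ≠ 0 := by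
  obtain ⟨K, hKY, hK, hνK⟩ := exists_isCompact_measure_pos_of_analyticSet hY ν hνY
  have hmeas i : MeasurableSet ((ballCellSystem z hz).cell i) :=
    (isOpen_ballCell z i).measurableSet
  set A : ℝ≥0∞ := M + ν univ / g 0
  have hA : A ≠ ⊤ := ENNReal.add_ne_top.2
    ⟨ENNReal.natCast_ne_top M, ENNReal.div_ne_top (measure_ne_top ν univ) hg0⟩
  have hcell i (hi : 1 ≤ i.1) : ν.restrict K ((ballCellSystem z hz).cell i) ≤ A * g i.1 := by
    by_cases hheavy : M * g i.1 < ν ((ballCellSystem z hz).cell i)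
    · have hdisj_i : Disjoint K ((ballCellSystem z hz).cell i) :=
        hdisj.mono hKY (CellSystem.cell_subset_heavy hi hheavy)
      rw [Measure.restrict_apply (hmeas i), hdisj_i.symm.inter_eq]
      simp
    · exact (Measure.restrict_apply_le _ _).trans ((not_lt.1 hheavy).trans
        (by gcongr; exact le_self_add))
  have huniv : ν.restrict K univ ≤ A * g 0 := by
    rw [add_mul, ENNReal.div_mul_cancel hg0 hg0top]
    exact (Measure.restrict_apply_le _ _).trans le_add_self
  have hhalo := (ballCellSystem z hz).measure_halo_le hD hD1 hcell huniv
  have := nullSingletonClass_of_measure_ballCell_le hz hlim (ENNReal.mul_ne_top hDtop hA)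
    fun i => (measure_mono ((ballCellSystem z hz).cell_subset_halo i)).trans (hhalo i)
  have htwo : 2 ≤ 3 * D := calc
    (2 : ℝ≥0∞) ≤ 3 * 1 := by norm_num
    _ ≤ 3 * D := by gcongr
  obtain ⟨L, hLK, hL, hνL, hcontent⟩ := exists_isCompact_null_content_ne_zero hz (ν.restrict K)
    (ENNReal.mul_ne_top hDtop hA) hhalo htwo hb hK hK.isClosed (by simpa using hνK)
  rw [Measure.restrict_apply hL.measurableSet, inter_eq_left.2 hLK] at hνL
  exact ⟨L, hLK.trans hKY, hL, hνL, hcontent⟩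

theorem exists_isCompact_null_content_ne_zero_of_analyticSet (hD : ∀ k, g k ≤ D * g (k + 1))
    (hD1 : 1 ≤ D) (hDtop : D ≠ ⊤) (hg0 : g 0 ≠ 0) (hg0top : g 0 ≠ ⊤)
    (hlim : Tendsto g atTop (𝓝 0)) (hb : b ≠ 0) (hY : AnalyticSet Y)
    (hYpos : (ballCellSystem z hz).content g 0 Y ≠ 0) :
    ∃ K ⊆ Y, IsCompact K ∧ ν K = 0 ∧
      (ballCellSystem z hz).content (fun j => (3 * D) ^ (j / b) * g j) 0 K ≠ 0 := by
  have hopen : ∀ i, IsOpen ((ballCellSystem z hz).cell i) := isOpen_ballCell z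
  have hmeas i := (hopen i).measurableSet
  obtain ⟨M, hM⟩ :=
    CellSystem.exists_content_sdiff_heavy_ne_zero (ν := ν) hmeas hD hDtop hYpos
  set H := (ballCellSystem z hz).heavy ν g M
  have hH : MeasurableSet H := (isOpen_biUnion fun i _ => hopen i).measurableSet
  by_cases hν : ν (Y \ H) = 0
  · obtain ⟨B, hYB, hB, hνB⟩ := exists_measurable_superset_of_null hν
    obtain ⟨K, hK, hKc, hKpos⟩ := exists_isCompact_content_ne_zero_of_analyticSet hopen hD hD1
      hDtop hb (analyticSet_inter_of_measurableSet hY hB) fun h =>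
        hM (measure_mono_null (subset_inter sdiff_subset hYB) h)
    exact ⟨K, hK.trans inter_subset_left, hKc,
      measure_mono_null (hK.trans inter_subset_right) hνB, hKpos⟩
  · obtain ⟨K, hK, h⟩ := exists_isCompact_null_content_ne_zero_of_disjoint_heavy hz ν hD hD1 hDtop
      hg0 hg0top hlim hb (sdiff_eq Y H ▸ analyticSet_inter_of_measurableSet hY hH.compl) hν M
      disjoint_sdiff_left
    exact ⟨K, hK.trans sdiff_subset, h⟩

end NullSubsets

theorem iSup_nonempty_ediam_rpow {Z : Type*} [EMetricSpace Z] {t : ℝ} (ht : 0 < t) (U : Set Z) :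
    ⨆ _ : U.Nonempty, Metric.ediam U ^ t = Metric.ediam U ^ t := by
  rcases U.eq_empty_or_nonempty with hU | hU <;> simp [hU, ht]

section HausdorffCovers

variable {Z : Type*} [EMetricSpace Z] [MeasurableSpace Z] [BorelSpace Z] {t : ℝ} {E : Set Z}

theorem hausdorffMeasure_eq_zero_of_forall_exists_cover {ι : Type*} [Countable ι] (ht : 0 < t)
    (U : ι → Set Z) (h : ∀ ε ≠ 0, ∃ J : Set ι,
      E ⊆ ⋃ i ∈ J, U i ∧ ∑' i : J, Metric.ediam (U i) ^ t ≤ ε) : μH[t] E = 0 := by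
  choose J hEJ hJ using fun n : ℕ => h (n : ℝ≥0∞)⁻¹ (by simp)
  have hlim : Tendsto (fun n : ℕ => ((n : ℝ≥0∞)⁻¹) ^ t⁻¹) atTop (𝓝 0) := by
    have := (ENNReal.continuous_rpow_const (y := t⁻¹)).tendsto 0
    rw [ENNReal.zero_rpow_of_pos (inv_pos.2 ht)] at this
    exact this.comp ENNReal.tendsto_inv_nat_nhds_zero
  have hdiam n (i : J n) : Metric.ediam (U i) ≤ ((n : ℝ≥0∞)⁻¹) ^ t⁻¹ :=
    (ENNReal.le_rpow_inv_iff ht).2 ((ENNReal.le_tsum i).trans (hJ n))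
  have hcover n : E ⊆ ⋃ i : J n, U i := biUnion_eq_iUnion (J n) (fun i _ => U i) ▸ hEJ n
  refine nonpos_iff_eq_zero.1 ?_
  calc μH[t] E ≤ liminf (fun n => ∑' i : J n, Metric.ediam (U i) ^ t) atTop :=
        Measure.hausdorffMeasure_le_liminf_tsum t E _ hlim (fun n (i : J n) => U i)
          (.of_forall hdiam) (.of_forall hcover)
    _ ≤ liminf (fun n : ℕ => (n : ℝ≥0∞)⁻¹) atTop := liminf_le_liminf (.of_forall hJ)
    _ = 0 := ENNReal.tendsto_inv_nat_nhds_zero.liminf_eq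

theorem exists_cover_of_hausdorffMeasure_lt {δ M : ℝ≥0∞} (hE : μH[t] E < M) (hδ : 0 < δ) :
    ∃ U : ℕ → Set Z, E ⊆ ⋃ n, U n ∧ (∀ n, Metric.ediam (U n) ≤ δ) ∧
      ∑' n, ⨆ _ : (U n).Nonempty, Metric.ediam (U n) ^ t < M := by
  rw [Measure.hausdorffMeasure_apply] at hE
  have hlt := (le_iSup₂ (f := fun _ _ => _) δ hδ).trans_lt hE
  simp only [iInf_lt_iff] at hlt
  obtain ⟨U, hU, hUδ, hsum⟩ := hlt
  exact ⟨U, hU, hUδ, hsum⟩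

end HausdorffCovers

section MeshGauge

/-- The gauge `d ↦ d ^ t` at the radius of the cells of level `k`: the weight whose net content
has the null sets of `μH[t]`. -/
noncomputable def meshGauge (t : ℝ) (k : ℕ) : ℝ≥0∞ := ENNReal.ofReal (mesh k) ^ t

variable {r t : ℝ}

theorem meshGauge_eq_pow (t : ℝ) (k : ℕ) : meshGauge t k = ((32 ^ t)⁻¹) ^ k := by
  rw [meshGauge, mesh, ENNReal.ofReal_pow (by norm_num), one_div,
    ENNReal.ofReal_inv_of_pos (by norm_num), ENNReal.ofReal_ofNat, ← ENNReal.inv_rpow,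
    ← ENNReal.rpow_natCast, ← ENNReal.rpow_natCast, ← ENNReal.rpow_mul, ← ENNReal.rpow_mul,
    mul_comm]

theorem thirtyTwo_rpow_ne_top (t : ℝ) : (32 : ℝ≥0∞) ^ t ≠ ⊤ :=
  ENNReal.rpow_ne_top_of_ne_zero (by simp) (by simp)

theorem meshGauge_le_mul_succ (t : ℝ) (k : ℕ) : meshGauge t k ≤ 32 ^ t * meshGauge t (k + 1) := by
  rw [meshGauge_eq_pow, meshGauge_eq_pow, pow_succ', ← mul_assoc,
    ENNReal.mul_inv_cancel (by simp) (thirtyTwo_rpow_ne_top t), one_mul]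

theorem tendsto_meshGauge (ht : 0 < t) : Tendsto (meshGauge t) atTop (𝓝 0) := by
  simp only [funext (meshGauge_eq_pow t)]
  exact ENNReal.tendsto_pow_atTop_nhds_zero_iff.2
    (ENNReal.inv_lt_one.2 (ENNReal.one_lt_rpow (by norm_num) ht))

theorem exists_pow_div_mul_meshGauge_le (hrt : r < t) {c : ℝ≥0∞} (hc : c ≠ ⊤) :
    ∃ b ≠ 0, ∀ j, c ^ (j / b) * meshGauge t j ≤ meshGauge r j := by
  have hratio : (1 : ℝ≥0∞) < 32 ^ (t - r) := ENNReal.one_lt_rpow (by norm_num) (sub_pos.2 hrt)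
  obtain ⟨b, hb, hcb⟩ := ((eventually_ne_atTop 0).and
    ((ENNReal.tendsto_pow_atTop_nhds_top_iff.2 hratio).eventually (lt_mem_nhds hc.lt_top))).exists
  refine ⟨b, hb, fun j => ?_⟩
  have hpow : c ^ (j / b) ≤ (32 ^ (t - r)) ^ j := calc
    c ^ (j / b) ≤ ((32 ^ (t - r)) ^ b) ^ (j / b) := by gcongr
    _ ≤ (32 ^ (t - r)) ^ j := by
      rw [← pow_mul]
      exact pow_le_pow_right₀ hratio.le (Nat.mul_div_le j b)
  calc c ^ (j / b) * meshGauge t j ≤ (32 ^ (t - r)) ^ j * meshGauge t j := mul_le_mul_left hpow _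
    _ = meshGauge r j := by
        rw [meshGauge_eq_pow, meshGauge_eq_pow, ← mul_pow, ← ENNReal.rpow_neg,
          ← ENNReal.rpow_add _ _ (by simp) (by simp), ← ENNReal.rpow_neg]
        ring_nf

variable {Z : Type*} [MetricSpace Z] {z : ℕ → Z} {E : Set Z}

theorem ediam_ballCell_le (z : ℕ → Z) (i : ℕ × ℕ) :
    Metric.ediam (ballCell z i) ≤ 6 * ENNReal.ofReal (mesh i.1) := by
  refine Metric.ediam_le fun x hx y hy => ?_
  rw [edist_dist, ← ENNReal.ofReal_ofNat, ← ENNReal.ofReal_mul (by norm_num)]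
  exact ENNReal.ofReal_le_ofReal (dist_lt_of_mem_ballCell hx hy).le

theorem exists_subset_ballCell_of_ediam_le (hz : DenseRange z) {U : Set Z} {k : ℕ}
    (hU : Metric.ediam U ≤ ENNReal.ofReal (mesh k)) : ∃ n, U ⊆ ballCell z (k, n) := by
  refine exists_subset_ballCell hz k fun x hx y hy => ?_
  have hxy := (Metric.edist_le_ediam_of_mem hx hy).trans hU
  rwa [edist_dist, ENNReal.ofReal_le_ofReal_iff (mesh_pos k).le] at hxy

theorem exists_subset_ballCell_meshGauge_le (hz : DenseRange z) (ht : 0 < t) {U : Set Z}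
    (hU : Metric.ediam U ≤ 1) {ε : ℝ≥0∞} (hε : ε ≠ 0) :
    ∃ i, U ⊆ ballCell z i ∧ meshGauge t i.1 ≤ 32 ^ t * Metric.ediam U ^ t + ε := by
  by_cases hd : Metric.ediam U = 0
  · obtain ⟨k, hk⟩ :=
      ((tendsto_meshGauge ht).eventually_lt_const (pos_iff_ne_zero.2 hε)).exists
    obtain ⟨n, hn⟩ := exists_subset_ballCell_of_ediam_le hz (k := k) (hd.trans_le zero_le)
    exact ⟨(k, n), hn, hk.le.trans le_add_self⟩
  have hlim : Tendsto (fun k => ENNReal.ofReal (mesh k)) atTop (𝓝 0) := by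
    simpa using ENNReal.tendsto_ofReal tendsto_mesh
  have hex := (hlim.eventually_lt_const (pos_iff_ne_zero.2 hd)).exists
  classical
  obtain ⟨k, hk⟩ := Nat.exists_eq_succ_of_ne_zero (n := Nat.find hex) fun h => by
    have := Nat.find_spec hex
    rw [h, mesh, pow_zero, ENNReal.ofReal_one] at this
    exact this.not_ge hU
  obtain ⟨n, hn⟩ := exists_subset_ballCell_of_ediam_le hz
    (not_lt.1 (Nat.find_min hex (hk ▸ k.lt_succ_self)))
  refine ⟨(k, n), hn, (meshGauge_le_mul_succ t k).trans (le_add_right ?_)⟩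
  gcongr
  exact ENNReal.rpow_le_rpow (hk ▸ Nat.find_spec hex).le ht.le

variable [MeasurableSpace Z] [BorelSpace Z]

theorem hausdorffMeasure_eq_zero_of_content_eq_zero (hz : DenseRange z) (ht : 0 < t)
    (h : (ballCellSystem z hz).content (meshGauge t) 0 E = 0) : μH[t] E = 0 := by
  have h6 : (6 : ℝ≥0∞) ^ t ≠ ⊤ := ENNReal.rpow_ne_top_of_nonneg ht.le (by simp)
  refine hausdorffMeasure_eq_zero_of_forall_exists_cover ht (ballCell z) fun ε hε => ?_
  obtain ⟨J, -, hEJ, hJ⟩ := CellSystem.exists_cover_of_content_lt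
    (h.trans_lt (ENNReal.div_pos hε h6))
  refine ⟨J, hEJ, ?_⟩
  calc ∑' i : J, Metric.ediam (ballCell z i) ^ t
      ≤ ∑' i : J, 6 ^ t * meshGauge t i.1.1 := by
        refine ENNReal.tsum_le_tsum fun i => ?_
        rw [meshGauge, ← ENNReal.mul_rpow_of_nonneg _ _ ht.le]
        exact ENNReal.rpow_le_rpow (ediam_ballCell_le z i) ht.le
    _ ≤ 6 ^ t * (ε / 6 ^ t) := by
        rw [ENNReal.tsum_mul_left]
        gcongr
    _ ≤ ε := ENNReal.mul_div_le

theorem content_eq_zero_of_hausdorffMeasure_eq_zero (hz : DenseRange z) (ht : 0 < t)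
    (h : μH[t] E = 0) : (ballCellSystem z hz).content (meshGauge t) 0 E = 0 := by
  refine nonpos_iff_eq_zero.1 (le_of_forall_gt_imp_ge_of_dense fun ε hε => ?_)
  obtain ⟨e, he, hsum⟩ := ENNReal.exists_pos_sum_of_countable' (ENNReal.half_pos hε.ne').ne' ℕ
  obtain ⟨U, hEU, hU, hUsum⟩ := exists_cover_of_hausdorffMeasure_lt
    (h.trans_lt (ENNReal.div_pos (ENNReal.half_pos hε.ne').ne' (thirtyTwo_rpow_ne_top t))) one_pos
  simp only [iSup_nonempty_ediam_rpow ht] at hUsum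
  choose i hi hle using fun n => exists_subset_ballCell_meshGauge_le hz ht (hU n) (he n).ne'
  calc (ballCellSystem z hz).content (meshGauge t) 0 E
      ≤ (ballCellSystem z hz).content (meshGauge t) 0 (⋃ n, ballCell z (i n)) :=
        measure_mono (hEU.trans (iUnion_mono hi))
    _ ≤ ∑' n, (ballCellSystem z hz).content (meshGauge t) 0 (ballCell z (i n)) :=
        measure_iUnion_le _
    _ ≤ ∑' n, (32 ^ t * Metric.ediam (U n) ^ t + e n) :=
        ENNReal.tsum_le_tsum fun n => (CellSystem.content_cell_le (i n) zero_le).trans (hle n)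
    _ ≤ 32 ^ t * (ε / 2 / 32 ^ t) + ε / 2 := by
        rw [ENNReal.tsum_add, ENNReal.tsum_mul_left]
        gcongr
    _ ≤ ε := (add_le_add_left ENNReal.mul_div_le _).trans_eq (ENNReal.add_halves ε)

theorem content_meshGauge_eq_zero_iff (hz : DenseRange z) (ht : 0 < t) :
    (ballCellSystem z hz).content (meshGauge t) 0 E = 0 ↔ μH[t] E = 0 :=
  ⟨hausdorffMeasure_eq_zero_of_content_eq_zero hz ht,
    content_eq_zero_of_hausdorffMeasure_eq_zero hz ht⟩

end MeshGauge

theorem exists_isCompact_null_lt_dimH {Z : Type*} [MetricSpace Z] [SecondCountableTopology Z]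
    [MeasurableSpace Z] [BorelSpace Z] (ν : Measure Z) [IsFiniteMeasure ν] {Y : Set Z}
    (hY : AnalyticSet Y) {a : ℝ≥0∞} (ha : a < dimH Y) :
    ∃ K ⊆ Y, IsCompact K ∧ ν K = 0 ∧ a < dimH K := by
  have hne : Y.Nonempty := nonempty_iff_ne_empty.2 fun h => by simp [h] at ha
  have : Nonempty Z := hne.to_type
  obtain ⟨z, hz⟩ := TopologicalSpace.exists_dense_seq Z
  obtain ⟨r, har, hr⟩ := ENNReal.lt_iff_exists_nnreal_btwn.1 ha
  obtain ⟨t, hrt, ht⟩ := ENNReal.lt_iff_exists_nnreal_btwn.1 hr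
  have hr0 : (0 : ℝ) < r := by exact_mod_cast har.pos
  have hrt' : (r : ℝ) < t := by exact_mod_cast hrt
  have hY0 : (ballCellSystem z hz).content (meshGauge t) 0 Y ≠ 0 := by
    rw [Ne, content_meshGauge_eq_zero_iff hz (hr0.trans hrt'), hausdorffMeasure_of_lt_dimH ht]
    exact ENNReal.top_ne_zero
  obtain ⟨b, hb, hle⟩ := exists_pow_div_mul_meshGauge_le hrt' (c := 3 * 32 ^ (t : ℝ))
    (ENNReal.mul_ne_top ENNReal.ofNat_ne_top (thirtyTwo_rpow_ne_top t))
  obtain ⟨K, hKY, hK, hνK, hpos⟩ := exists_isCompact_null_content_ne_zero_of_analyticSet hz ν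
    (meshGauge_le_mul_succ t) (ENNReal.one_le_rpow (by norm_num) (hr0.trans hrt'))
    (thirtyTwo_rpow_ne_top t) (by simp [meshGauge_eq_pow]) (by simp [meshGauge_eq_pow])
    (tendsto_meshGauge (hr0.trans hrt')) hb hY hY0
  refine ⟨K, hKY, hK, hνK, har.trans_le (le_dimH_of_hausdorffMeasure_ne_zero ?_)⟩
  rw [Ne, ← content_meshGauge_eq_zero_iff hz hr0]
  exact fun h => hpos (nonpos_iff_eq_zero.1
    ((CellSystem.content_mono_weight fun j _ => hle j).trans_eq h))

section HausdorffGauge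

variable {Z : Type*} [EMetricSpace Z]

theorem hausdorffM_sGauge [MeasurableSpace Z] [BorelSpace Z] (s : ℝ≥0) (E : Set Z) :
    hausdorffM (sGauge s) E = μH[s] E := by
  have hgauge : ∀ᶠ d : ℝ≥0∞ in 𝓝 0, sGauge s d.toNNReal = d ^ (s : ℝ) := by
    filter_upwards [gt_mem_nhds zero_lt_one] with d hd
    rw [sGauge, ENNReal.coe_toNNReal hd.ne_top]
  rw [hausdorffM, Measure.hausdorffMeasure, ← OuterMeasure.coe_mkMetric]
  exact le_antisymm (OuterMeasure.mkMetric_mono (hgauge.mono fun _ => le_of_eq) E)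
    (OuterMeasure.mkMetric_mono (hgauge.mono fun _ => ge_of_eq) E)

theorem hDim_eq_dimH (E : Set Z) : hDim E = dimH E := by
  borelize Z
  simp only [hDim, hausdorffM_sGauge]
  refine le_antisymm (iSup₂_le fun s hs => le_dimH_of_hausdorffMeasure_ne_zero hs.ne')
    (dimH_le fun s hs => le_iSup₂_of_le s ?_ le_rfl)
  simp [hs]

theorem isSeparable_of_hausdorffMeasure_ne_top [MeasurableSpace Z] [BorelSpace Z] {s : ℝ}
    {E : Set Z} (hE : μH[s] E ≠ ⊤) : TopologicalSpace.IsSeparable E := by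
  obtain ⟨D, -, hD, hED⟩ : ∃ D ⊆ E, D.Countable ∧ E ⊆ closure D := by
    refine EMetric.subset_countable_closure_of_almost_dense_set E fun ε hε => ?_
    obtain ⟨U, hEU, hU, -⟩ := exists_cover_of_hausdorffMeasure_lt hE.lt_top hε
    rcases isEmpty_or_nonempty Z with hZ | ⟨⟨z⟩⟩
    · exact ⟨∅, countable_empty, fun x => hZ.elim x⟩
    have hpick n : ∃ y, U n ⊆ Metric.closedEBall y ε := by
      rcases (U n).eq_empty_or_nonempty with hn | ⟨y, hy⟩
      · exact ⟨z, hn ▸ empty_subset _⟩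
      · exact ⟨y, fun x hx => (Metric.edist_le_ediam_of_mem hx hy).trans (hU n)⟩
    choose y hy using hpick
    exact ⟨range y, countable_range y, by
      simpa only [biUnion_range] using hEU.trans (iUnion_mono hy)⟩
  exact ⟨D, hD, hED⟩

theorem SigmaFiniteSet.secondCountableTopology {s : ℝ≥0}
    (hZ : SigmaFiniteSet (hausdorffM (sGauge s)) (univ : Set Z)) : SecondCountableTopology Z := by
  borelize Z
  obtain ⟨A, hA, hAuniv⟩ := hZ
  have hsep : TopologicalSpace.IsSeparable (univ : Set Z) := hAuniv ▸ .iUnion fun n =>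
    isSeparable_of_hausdorffMeasure_ne_top (hausdorffM_sGauge s (A n) ▸ (hA n).2.ne)
  have := TopologicalSpace.isSeparable_univ_iff.1 hsep
  exact UniformSpace.secondCountable_of_separable Z

end HausdorffGauge

theorem SigmaFiniteSet.exists_isFiniteMeasure_null_preimage {X Z : Type*} {μ : OuterMeasure X}
    (hX : SigmaFiniteSet μ univ) [TopologicalSpace Z] [MeasurableSpace Z] [BorelSpace Z]
    {f : X → Z} (hf : ∀ O, IsOpen O → μ.IsCaratheodory (f ⁻¹' O)) :
    ∃ ν : Measure Z, IsFiniteMeasure ν ∧ ∀ B, MeasurableSet B → ν B = 0 → μ (f ⁻¹' B) = 0 := by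
  let : MeasurableSpace X := μ.caratheodory
  obtain ⟨A, hA, hAuniv⟩ := hX
  have : SigmaFinite (μ.toMeasure le_rfl) := by
    refine ⟨⟨⟨A, fun _ => trivial, fun n => ?_, hAuniv.symm⟩⟩⟩
    rw [toMeasure_apply μ le_rfl (hA n).1]
    exact (hA n).2
  have hfm : Measurable f := by
    rw [‹BorelSpace Z›.measurable_eq]
    exact measurable_generateFrom hf
  refine ⟨(μ.toMeasure le_rfl).toFinite.map f, inferInstance, fun B hB h => ?_⟩
  rw [Measure.map_apply hfm hB] at h
  rw [← toMeasure_apply μ le_rfl (hfm hB)]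
  exact absolutelyContinuous_toFinite _ h

section ClosedUnion

variable {X : Type*} [MetricSpace X] {D : ℕ → Set X} {x : ℕ → X} {ε : ℕ → ℝ}

theorem closure_iUnion_subset_of_subset_closedBall (hD : ∀ n, IsClosed (D n))
    (hDx : ∀ n, D n ⊆ Metric.closedBall (x n) (ε n)) (hε : Tendsto ε atTop (𝓝 0)) :
    closure (⋃ n, D n) ⊆ (⋃ n, D n) ∪ {q | MapClusterPt q atTop x} := by
  refine fun q hq => or_iff_not_imp_right.2 fun hqx => ?_
  simp only [mem_ofPred_eq, mapClusterPt_iff_frequently, not_forall, not_frequently] at hqx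
  obtain ⟨U, hU, hxU⟩ := hqx
  obtain ⟨r, hr, hrU⟩ := Metric.mem_nhds_iff.1 hU
  obtain ⟨m, hm⟩ := eventually_atTop.1 (hxU.and (hε.eventually_lt_const (half_pos hr)))
  have hclosed : IsClosed (⋃ n ∈ Iio m, D n) :=
    (finite_Iio m).isClosed_biUnion fun n _ => hD n
  by_contra hqD
  have hnhds : (⋃ n ∈ Iio m, D n)ᶜ ∩ Metric.ball q (r / 2) ∈ 𝓝 q :=
    inter_mem (hclosed.isOpen_compl.mem_nhds fun h => hqD (iUnion₂_subset_iUnion _ _ h))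
      (Metric.ball_mem_nhds q (half_pos hr))
  obtain ⟨y, ⟨hym, hyq⟩, hy⟩ := mem_closure_iff_nhds.1 hq _ hnhds
  obtain ⟨n, hn⟩ := mem_iUnion.1 hy
  have hmn : m ≤ n := not_lt.1 fun h => hym (mem_biUnion h hn)
  have hxq : dist (x n) q < r := calc
    dist (x n) q ≤ dist y (x n) + dist y q := dist_triangle_left _ _ _
    _ < r / 2 + r / 2 := add_lt_add_of_le_of_lt ((hDx n hn).trans (hm n hmn).2.le) hyq
    _ = r := add_halves r
  exact (hm n hmn).1 (hrU hxq)

theorem exists_strictMono_isClosed_union_iUnion (hD : ∀ n, IsClosed (D n))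
    (hDx : ∀ n, D n ⊆ Metric.closedBall (x n) (ε n)) (hε : Tendsto ε atTop (𝓝 0)) :
    ∃ φ : ℕ → ℕ, StrictMono φ ∧ ∃ P : Set X, P.Subsingleton ∧ IsClosed (P ∪ ⋃ n, D (φ n)) := by
  by_cases hx : ∃ p, MapClusterPt p atTop x
  · obtain ⟨p, hp⟩ := hx
    obtain ⟨φ, hφ, hlim⟩ := hp.tendsto_subseq
    refine ⟨φ, hφ, {p}, subsingleton_singleton, isClosed_of_closure_subset ?_⟩
    rw [closure_union, closure_singleton]
    refine union_subset subset_union_left ((closure_iUnion_subset_of_subset_closedBall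
      (fun n => hD (φ n)) (fun n => hDx (φ n)) (hε.comp hφ.tendsto_atTop)).trans
      (union_subset subset_union_right fun q hq => .inl ?_))
    have : (𝓝 q ⊓ 𝓝 p).NeBot := ClusterPt.mono hq hlim
    exact eq_of_nhds_neBot this
  · refine ⟨id, strictMono_id, ∅, subsingleton_empty, isClosed_of_closure_subset ?_⟩
    rw [empty_union]
    exact (closure_iUnion_subset_of_subset_closedBall hD hDx hε).trans
      (union_subset subset_rfl fun q hq => (hx ⟨q, hq⟩).elim)

end ClosedUnion

theorem perfectSet_of_perfect {X : Type*} [TopologicalSpace X] [T1Space X] {C : Set X}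
    (hC : Perfect C) : PerfectSet C :=
  ⟨hC.closed, fun _ hO ⟨x, hxO, hxC⟩ =>
    .of_accPt ((hC.acc x hxC).nhds_inter (hO.mem_nhds hxO))⟩

section DimHImage

variable {X Z : Type*} [EMetricSpace Z] {C : Set X} {a d : ℝ≥0∞}

theorem exists_perfect_subset_dimH_image_eq [TopologicalSpace X] [SecondCountableTopology X]
    (f : X → Z) (hC : IsClosed C) : ∃ D ⊆ C, Perfect D ∧ dimH (f '' D) = dimH (f '' C) := by
  obtain ⟨V, D, hV, hD, rfl⟩ := exists_countable_union_perfect_of_isClosed hC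
  refine ⟨D, subset_union_right, hD, ?_⟩
  rw [image_union, dimH_union, dimH_countable (hV.image f), zero_max]

theorem exists_lt_dimH_image_iUnion {ι : Type*} [Countable ι] (f : X → Z) (C : ι → Set X)
    (ha : a < dimH (f '' ⋃ i, C i)) : ∃ i, a < dimH (f '' C i) := by
  rwa [image_iUnion, dimH_iUnion, lt_iSup_iff] at ha

theorem exists_null_le_dimH_image (μ : OuterMeasure X) (f : X → Z)
    (h : ∀ a < d, ∃ N, μ N = 0 ∧ a < dimH (f '' N)) : ∃ N, μ N = 0 ∧ d ≤ dimH (f '' N) := by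
  rcases eq_zero_or_pos d with rfl | hd
  · exact ⟨∅, measure_empty, zero_le⟩
  obtain ⟨u, -, hud, hu⟩ := exists_seq_strictMono_tendsto' hd
  choose N hN hNu using fun n => h (u n) (hud n).2
  refine ⟨⋃ n, N n, measure_iUnion_null hN, le_of_tendsto' hu fun n => (hNu n).le.trans ?_⟩
  gcongr
  exact subset_iUnion N n

end DimHImage

section ClosedNull

variable {X Z : Type*} [MetricSpace X] [SecondCountableTopology X] [EMetricSpace Z]
  {C : Set X} {a d : ℝ≥0∞}

theorem exists_lt_dimH_image_inter_closedBall (f : X → Z) {ε : ℝ} (hε : 0 < ε)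
    (ha : a < dimH (f '' C)) : ∃ x, a < dimH (f '' (C ∩ Metric.closedBall x ε)) := by
  obtain ⟨S, hS, hSuniv⟩ := TopologicalSpace.countable_cover_nhds
    fun x : X => Metric.closedBall_mem_nhds x hε
  have := hS.to_subtype
  rw [← inter_univ C, ← hSuniv, biUnion_eq_iUnion, inter_iUnion] at ha
  obtain ⟨x, hx⟩ := exists_lt_dimH_image_iUnion f _ ha
  exact ⟨x, hx⟩

theorem exists_isClosed_null_le_dimH_image {μ : OuterMeasure X} (hμ : ∀ x, μ {x} = 0) (f : X → Z)
    (hd : 0 < d) (h : ∀ a < d, ∃ C, IsClosed C ∧ μ C = 0 ∧ a < dimH (f '' C)) :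
    ∃ C, IsClosed C ∧ μ C = 0 ∧ d ≤ dimH (f '' C) := by
  obtain ⟨u, -, hud, hu⟩ := exists_seq_strictMono_tendsto' hd
  choose C hC hμC hCu using fun n => h (u n) (hud n).2
  choose x hx using fun n : ℕ => exists_lt_dimH_image_inter_closedBall f
    (Nat.one_div_pos_of_nat (α := ℝ) (n := n)) (hCu n)
  let D (n : ℕ) : Set X := C n ∩ Metric.closedBall (x n) (1 / (n + 1))
  obtain ⟨φ, hφ, P, hP, hclosed⟩ := exists_strictMono_isClosed_union_iUnion (D := D)
    (fun n => (hC n).inter Metric.isClosed_closedBall) (fun _ => inter_subset_right)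
    tendsto_one_div_add_atTop_nhds_zero_nat
  have hPnull : μ P = 0 := by
    rcases hP.eq_empty_or_singleton with rfl | ⟨p, rfl⟩
    exacts [measure_empty, hμ p]
  have hDnull (n : ℕ) : μ (D n) = 0 := measure_mono_null inter_subset_left (hμC n)
  refine ⟨_, hclosed, measure_union_null hPnull (measure_iUnion_null fun n => hDnull (φ n)), ?_⟩
  refine le_of_tendsto' (hu.comp hφ.tendsto_atTop) fun n => (hx (φ n)).le.trans ?_
  exact dimH_mono (image_mono ((subset_iUnion (fun n => D (φ n)) n).trans subset_union_right))

theorem exists_perfectSet_null_le_dimH_image (s : ℝ≥0) (f : X → Z)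
    (h : ∀ a < d, ∃ C, IsClosed C ∧ hausdorffM (sGauge s) C = 0 ∧ a < dimH (f '' C)) :
    ∃ N, PerfectSet N ∧ hausdorffM (sGauge s) N = 0 ∧ d ≤ dimH (f '' N) := by
  borelize X
  rcases eq_zero_or_pos d with rfl | hd
  · exact ⟨∅, ⟨isClosed_empty, by simp⟩, measure_empty, zero_le⟩
  have hs : (0 : ℝ) < s := by
    refine s.coe_nonneg.lt_of_ne' fun hs => ?_
    obtain ⟨C, -, hC, hCpos⟩ := h 0 hd
    have hCne : C.Nonempty := nonempty_iff_ne_empty.2 fun h => by simp [h] at hCpos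
    rw [hausdorffM_sGauge, hs] at hC
    exact (Measure.one_le_hausdorffMeasure_zero_of_nonempty hCne).not_gt (hC ▸ zero_lt_one)
  have hsingleton (x : X) : hausdorffM (sGauge s) {x} = 0 := by
    have := Measure.nullSingletonClass_hausdorff X hs
    rw [hausdorffM_sGauge, measure_singleton]
  obtain ⟨C, hC, hsC, hdC⟩ := exists_isClosed_null_le_dimH_image hsingleton f hd h
  obtain ⟨D, hDC, hD, hdim⟩ := exists_perfect_subset_dimH_image_eq f hC
  exact ⟨D, perfectSet_of_perfect hD, measure_mono_null hDC hsC, hdim ▸ hdC⟩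

end ClosedNull

theorem statement_8_general {X : Type*} [MetricSpace X] {Z : Type*} [MetricSpace Z]
    [TopologicalSpace.SeparableSpace Z] (s : ℝ≥0) (f : X → Z)
    (hYan : AnalyticSet (range f)) (hX : SigmaFiniteSet (hausdorffM (sGauge s)) (univ : Set X))
    (hmeas : ∀ O : Set Z, IsOpen O → (hausdorffM (sGauge s)).IsCaratheodory (f ⁻¹' O)) :
    (∃ N : Set X, hausdorffM (sGauge s) N = 0 ∧ hDim (f '' N) = hDim (range f)) ∧
    ((∀ F : Set Z, IsClosed F →
        ∃ C : ℕ → Set X, (∀ n, IsClosed (C n)) ∧ f ⁻¹' F = ⋃ n, C n) →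
      ∃ N : Set X, PerfectSet N ∧ hausdorffM (sGauge s) N = 0 ∧
        hDim (f '' N) = hDim (range f)) := by
  borelize Z
  have := UniformSpace.secondCountable_of_separable Z
  have := hX.secondCountableTopology
  simp only [hDim_eq_dimH]
  have hle (N : Set X) : dimH (f '' N) ≤ dimH (range f) := dimH_mono (image_subset_range f N)
  obtain ⟨ν, _, hν⟩ := hX.exists_isFiniteMeasure_null_preimage hmeas
  have hcompact : ∀ a < dimH (range f), ∃ K, IsCompact K ∧ hausdorffM (sGauge s) (f ⁻¹' K) = 0 ∧
      a < dimH (f '' (f ⁻¹' K)) := fun a ha => by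
    obtain ⟨K, hKf, hK, hνK, haK⟩ := exists_isCompact_null_lt_dimH ν hYan ha
    exact ⟨K, hK, hν K hK.measurableSet hνK, by rwa [image_preimage_eq_of_subset hKf]⟩
  constructor
  · obtain ⟨N, hN, hdim⟩ := exists_null_le_dimH_image _ f fun a ha =>
      let ⟨K, _, hK⟩ := hcompact a ha
      ⟨f ⁻¹' K, hK⟩
    exact ⟨N, hN, (hle N).antisymm hdim⟩
  · intro hF
    obtain ⟨N, hperf, hN, hdim⟩ := exists_perfectSet_null_le_dimH_image s f fun a ha => by
      obtain ⟨K, hK, hKnull, haK⟩ := hcompact a ha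
      obtain ⟨C, hC, hKC⟩ := hF K hK.isClosed
      obtain ⟨n, hn⟩ := exists_lt_dimH_image_iUnion f C (hKC ▸ haK)
      exact ⟨C n, hC n, measure_mono_null (hKC ▸ subset_iUnion C n) hKnull, hn⟩
    exact ⟨N, hperf, hN, (hle N).antisymm hdim⟩

/-- Corollary `DimensionBusiness`. -/
theorem statement_8 {X : Type*} [MetricSpace X] {Z : Type*} [MetricSpace Z]
    [CompleteSpace Z] [TopologicalSpace.SeparableSpace Z]
    (s t : ℝ≥0) (Y : Set Z) (hYan : MeasureTheory.AnalyticSet Y)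
    (hdim : hDim Y = (t : ℝ≥0∞))
    (hX : SigmaFiniteSet (hausdorffM (sGauge s)) (Set.univ : Set X))
    (f : X → Z) (hrange : Set.range f = Y)
    (hmeas : ∀ O : Set Z, IsOpen O → (hausdorffM (sGauge s)).IsCaratheodory (f ⁻¹' O)) :
    (∃ N : Set X, hausdorffM (sGauge s) N = 0 ∧ hDim (f '' N) = (t : ℝ≥0∞)) ∧
    (0 < t → 0 < hausdorffM (sGauge t) Y →
      (∀ F : Set Z, IsClosed F →
        ∃ C : ℕ → Set X, (∀ n, IsClosed (C n)) ∧ f ⁻¹' F = ⋃ n, C n) →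
      ∃ N : Set X, PerfectSet N ∧ hausdorffM (sGauge s) N = 0 ∧
        hDim (f '' N) = (t : ℝ≥0∞)) := by
  subst hrange
  exact hdim ▸ (statement_8_general s f hYan hX hmeas).imp_right fun h _ _ => h
end

section
/- Let (X, 𝔗) be a regular, second countable topological space and μ a Borel measure on X that is G_δ-regular, such that X is σ-finite with respect to μ and X can be written as a countable union of compact sets together with a μ-null set. Let (Y, d) be a metric space with Hausdorff measure H^h, where h is a Hausdorff function of finite order with h(0) = 0, and assume that Y is not σ-finite with respect to H^h. If f : X → Y is a measurable surjection, then there exists a set N ⊆ X with μ(N) = 0 and H^h(f(N)) > 0. -/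
open MeasureTheory Set Filter Topology
open scoped NNReal ENNReal

universe u v

/-!
Suppose that `f` maps every `μ`-null set to an `H^h`-null set. Then `Y` is separable: an uncountable
uniformly separated subset of `Y` would have one of cardinality `ℵ₁`, and an Ulam matrix on `ℵ₁`
would push an uncountable part of it back into a null set. Let `ν` be the pushforward under `f` of a
finite measure with the same null sets as `μ`. By Lusin's theorem `ν` is carried by countably many
compact sets, and every `ν`-null set is `H^h`-null.

Where `ν (B(x, s)) / h s` does not tend to `0` as `s → 0`, a Vitali covering argument, which uses
the finite order of `h`, bounds `H^h` by a multiple of `ν`, so this part of `Y` is `σ`-finite. If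
the remaining points had positive `ν`-measure, a Cantor scheme among them that halves the mass at
each step, along quickly shrinking scales, would produce a compact `ν`-null set whose `H^h`-measure
is positive by the mass distribution principle. Hence `Y` is `σ`-finite.
-/

lemma sigmaFiniteSet_iUnion {α ι : Type*} [Countable ι] [Nonempty ι] {μ : OuterMeasure α}
    {A : ι → Set α} (hA : ∀ i, μ.IsCaratheodory (A i)) (hfin : ∀ i, μ (A i) < ⊤) :
    SigmaFiniteSet μ (⋃ i, A i) := by
  obtain ⟨g, hg⟩ := exists_surjective_nat ι
  exact ⟨A ∘ g, fun n => ⟨hA (g n), hfin (g n)⟩, (hg.iUnion_comp A).symm⟩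

section Measure

variable {α : Type*} [MeasurableSpace α]

lemma exists_measure_iUnion_sdiff_lt {ν : Measure α} [IsFiniteMeasure ν] {s : ℕ → Set α}
    (hs : ∀ k, MeasurableSet (s k)) (hmono : Monotone s) {ε : ℝ≥0∞} (hε : ε ≠ 0) :
    ∃ k, ν ((⋃ j, s j) \ s k) < ε := by
  have hlim : Tendsto (fun k => ν ((⋃ j, s j) \ s k)) atTop (𝓝 (ν (⋂ k, (⋃ j, s j) \ s k))) :=
    tendsto_measure_iInter_atTop
      (fun k => ((MeasurableSet.iUnion hs).diff (hs k)).nullMeasurableSet)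
      (fun _ _ hij => sdiff_subset_sdiff_right (hmono hij)) ⟨0, measure_ne_top _ _⟩
  rw [← sdiff_iUnion, sdiff_self, measure_empty] at hlim
  exact (hlim.eventually_lt_const (pos_iff_ne_zero.2 hε)).exists

lemma exists_measure_iInter_iUnion_sdiff_lt {ν : Measure α} [IsFiniteMeasure ν]
    {s : ℕ → ℕ → Set α} (hs : ∀ n k, MeasurableSet (s n k)) (hmono : ∀ n, Monotone (s n))
    {ε : ℝ≥0∞} (hε : ε ≠ 0) :
    ∃ k : ℕ → ℕ, ν ((⋂ n, ⋃ j, s n j) \ ⋂ n, s n (k n)) < ε := by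
  obtain ⟨e, he, hsum⟩ := ENNReal.exists_pos_sum_of_countable' hε ℕ
  choose k hk using fun n => exists_measure_iUnion_sdiff_lt (ν := ν) (hs n) (hmono n) (he n).ne'
  refine ⟨k, lt_of_le_of_lt ?_ hsum⟩
  calc ν ((⋂ n, ⋃ j, s n j) \ ⋂ n, s n (k n))
      ≤ ν (⋃ n, (⋃ j, s n j) \ s n (k n)) := by
        rw [sdiff_iInter]
        gcongr with n
        exact iInter_subset _ n
    _ ≤ ∑' n, ν ((⋃ j, s n j) \ s n (k n)) := measure_iUnion_le _
    _ ≤ ∑' n, e n := ENNReal.tsum_le_tsum fun n => (hk n).le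

lemma continuous_measureReal_Iic {ρ : Measure ℝ} [IsFiniteMeasure ρ] [NullSingletonClass ρ] :
    Continuous fun t => ρ.real (Iic t) := by
  refine continuous_iff_continuousAt.2 fun t => ?_
  have hcont : ContinuousOn (fun b => ∫ _ in Iic b, (1 : ℝ) ∂ρ) (Iic (t + 1)) :=
    (integrable_const 1).integrableOn.continuousOn_Iic_primitive_Iic
  simpa using hcont.continuousAt (Iic_mem_nhds (lt_add_one t))

lemma exists_measure_Iic_eq {ρ : Measure ℝ} [IsFiniteMeasure ρ] [NullSingletonClass ρ]
    {c : ℝ≥0∞} (hc0 : c ≠ 0) (hc : c < ρ univ) : ∃ t, ρ (Iic t) = c := by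
  have hctop : c ≠ ⊤ := hc.ne_top
  have hbot : Tendsto (fun t => ρ.real (Iic t)) atBot (𝓝 0) := by
    simpa using tendsto_integral_Iic_zero (f := fun _ => (1 : ℝ)) (μ := ρ) tendsto_id
  have hlow : ∃ t, ρ.real (Iic t) ≤ c.toReal :=
    (hbot.eventually_le_const (ENNReal.toReal_pos hc0 hctop)).exists
  have hhigh : ∃ t, c.toReal ≤ ρ.real (Iic t) := by
    obtain ⟨t, ht⟩ := ((tendsto_measure_Iic_atTop ρ).eventually_const_lt hc).exists
    exact ⟨t, ENNReal.toReal_mono (measure_ne_top _ _) ht.le⟩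
  obtain ⟨t, ht⟩ :=
    mem_range_of_exists_le_of_exists_ge continuous_measureReal_Iic hlow hhigh
  exact ⟨t, (ENNReal.toReal_eq_toReal_iff' (measure_ne_top _ _) hctop).1 ht⟩

lemma exists_measurableSet_measure_eq [MeasurableSpace.CountablySeparated α] {ν : Measure α}
    [IsFiniteMeasure ν] [NullSingletonClass ν] {c : ℝ≥0∞} (hc : c ≤ ν univ) :
    ∃ D, MeasurableSet D ∧ ν D = c := by
  rcases eq_or_ne c 0 with rfl | hc0
  · exact ⟨∅, MeasurableSet.empty, measure_empty⟩
  rcases hc.eq_or_lt with rfl | hlt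
  · exact ⟨univ, MeasurableSet.univ, rfl⟩
  obtain ⟨g, hg, hinj⟩ := MeasurableSpace.measurable_injection_nat_bool_of_countablySeparated α
  set e : α → ℝ := embeddingReal (ℕ → Bool) ∘ g
  have he : Measurable e := (measurable_embeddingReal _).comp hg
  have heinj : Function.Injective e := (measurableEmbedding_embeddingReal _).injective.comp hinj
  have : NullSingletonClass (ν.map e) := ⟨fun t => by
    rw [Measure.map_apply he (measurableSet_singleton t)]
    exact (subsingleton_singleton.preimage heinj).measure_zero ν⟩
  obtain ⟨t, ht⟩ : ∃ t, ν.map e (Iic t) = c :=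
    exists_measure_Iic_eq hc0 (by rwa [Measure.map_apply he MeasurableSet.univ])
  exact ⟨e ⁻¹' Iic t, he measurableSet_Iic, by rwa [Measure.map_apply he measurableSet_Iic] at ht⟩

lemma exists_measurableSet_subset_measure_eq [MeasurableSpace.CountablySeparated α]
    {ν : Measure α} [IsFiniteMeasure ν] {A : Set α} (hA : MeasurableSet A)
    (hpt : ∀ x ∈ A, ν {x} = 0) {c : ℝ≥0∞} (hc : c ≤ ν A) :
    ∃ D ⊆ A, MeasurableSet D ∧ ν D = c := by
  have : NullSingletonClass (ν.restrict A) := ⟨fun x => by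
    rw [Measure.restrict_apply' hA]
    by_cases hx : x ∈ A
    · exact measure_mono_null inter_subset_left (hpt x hx)
    · rw [singleton_inter_eq_empty.2 hx, measure_empty]⟩
  obtain ⟨D, hD, hνD⟩ := exists_measurableSet_measure_eq (ν := ν.restrict A) (c := c)
    (by rwa [Measure.restrict_apply_univ])
  exact ⟨D ∩ A, inter_subset_right, hD.inter hA, by rwa [Measure.restrict_apply hD] at hνD⟩

end Measure

section HausdorffMeasure

variable {h : ℝ≥0 → ℝ≥0∞}

lemma IsHausdorffFunction.exists_mem_Ioo_le_add (hh : IsHausdorffFunction h) {d R : ℝ≥0}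
    (hdR : d < R) (hfin : h d ≠ ⊤) {ε : ℝ≥0∞} (hε : ε ≠ 0) : ∃ ρ ∈ Ioo d R, h ρ ≤ h d + ε := by
  have hlt : ∀ᶠ s in 𝓝[>] d, h s < h d + ε :=
    ((hh.right_continuous d).mono Ioi_subset_Ici_self).eventually_lt_const
      (ENNReal.lt_add_right hfin hε)
  have : (𝓝[>] d).NeBot := nhdsGT_neBot_of_exists_gt ⟨R, hdR⟩
  obtain ⟨ρ, hhρ, hρ⟩ := (hlt.and (Ioo_mem_nhdsGT hdR)).exists
  exact ⟨ρ, hρ, hhρ.le⟩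

lemma IsHausdorffFunction.tendsto_nhdsGT_zero (hh : IsHausdorffFunction h) (h0 : h 0 = 0) :
    Tendsto h (𝓝[>] 0) (𝓝 0) := by
  simpa [ContinuousWithinAt, h0] using (hh.right_continuous 0).mono Ioi_subset_Ici_self

lemma FiniteOrder.exists_eventually_le_mul (hford : FiniteOrder h) (hh : IsHausdorffFunction h)
    (h0 : h 0 = 0) : ∃ C : ℝ≥0, C ≠ 0 ∧ ∀ᶠ t in 𝓝[>] 0, h (3 * t) ≤ C * h t := by
  obtain ⟨c, hc, hctop⟩ := exists_between hford
  lift c to ℝ≥0 using hctop.ne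
  refine ⟨c, ENNReal.coe_ne_zero.1 (zero_le.trans_lt hc).ne', ?_⟩
  filter_upwards [eventually_lt_of_limsup_lt hc, self_mem_nhdsWithin,
    (hh.tendsto_nhdsGT_zero h0).eventually_ne ENNReal.zero_ne_top] with t ht htpos httop
  exact (ENNReal.div_le_iff (hh.pos t htpos).ne' httop).1 ht.le

lemma tendsto_const_mul_nhdsGT_zero {c : ℝ≥0} (hc : 0 < c) :
    Tendsto (fun t : ℝ≥0 => c * t) (𝓝[>] 0) (𝓝[>] 0) := by
  have hlim : Tendsto (fun t : ℝ≥0 => c * t) (𝓝 0) (𝓝 0) := by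
    simpa using (tendsto_id (x := 𝓝 (0 : ℝ≥0))).const_mul c
  exact tendsto_nhdsWithin_of_tendsto_nhds_of_eventually_within _
    (hlim.mono_left nhdsWithin_le_nhds)
    (eventually_mem_nhdsWithin.mono fun t ht => mul_pos hc ht)

lemma IsHausdorffFunction.eventually_le_mul_mul (hh : IsHausdorffFunction h) {C : ℝ≥0}
    (hC : ∀ᶠ t in 𝓝[>] 0, h (3 * t) ≤ C * h t) :
    ∀ᶠ t in 𝓝[>] 0, h (2 * (4 * t)) ≤ C * (C * h t) := by
  filter_upwards [hC, (tendsto_const_mul_nhdsGT_zero three_pos).eventually hC] with t ht ht3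
  calc h (2 * (4 * t)) ≤ h (3 * (3 * t)) := hh.mono (by
        rw [← mul_assoc, ← mul_assoc]
        exact mul_le_mul_left (by norm_num) t)
    _ ≤ C * h (3 * t) := ht3
    _ ≤ C * (C * h t) := by gcongr

variable {Y : Type*} [MetricSpace Y]

lemma isCaratheodory_hausdorffM [MeasurableSpace Y] [BorelSpace Y] {A : Set Y}
    (hA : MeasurableSet A) : (hausdorffM h).IsCaratheodory A :=
  (OuterMeasure.mkMetric'_isMetric _).le_caratheodory A (BorelSpace.measurable_eq (α := Y) ▸ hA)

lemma exists_cover_tsum_lt_of_hausdorffM_lt {E : Set Y} {b r : ℝ≥0∞} (hE : hausdorffM h E < b)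
    (hr : 0 < r) :
    ∃ t : ℕ → Set Y, E ⊆ ⋃ n, t n ∧ (∀ n, Metric.ediam (t n) ≤ r) ∧
      ∑' n, (⨆ _ : (t n).Nonempty, h (Metric.ediam (t n)).toNNReal) < b := by
  borelize Y
  rw [hausdorffM, OuterMeasure.coe_mkMetric, Measure.mkMetric_apply] at hE
  have hlt := (le_iSup₂ (f := fun (r : ℝ≥0∞) (_ : 0 < r) =>
    ⨅ (t : ℕ → Set Y) (_ : E ⊆ iUnion t) (_ : ∀ n, Metric.ediam (t n) ≤ r),
      ∑' n, ⨆ _ : (t n).Nonempty, h (Metric.ediam (t n)).toNNReal) r hr).trans_lt hE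
  simpa only [iInf_lt_iff, exists_prop] using hlt

lemma exists_closedBall_cover_tsum_lt_of_hausdorffM_lt {E : Set Y} {b : ℝ≥0∞}
    (hE : hausdorffM h E < b) {R : ℝ≥0} (hR : 0 < R) :
    ∃ (I : Set ℕ) (x : I → Y) (d : I → ℝ≥0), (∀ i, x i ∈ E) ∧ (∀ i, d i < R) ∧
      E ⊆ ⋃ i, Metric.closedBall (x i) (d i) ∧ ∑' i, h (d i) < b := by
  have hR' : (R : ℝ≥0∞) ≠ 0 := (ENNReal.coe_pos.2 hR).ne'
  obtain ⟨t, hEt, htR, htb⟩ :=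
    exists_cover_tsum_lt_of_hausdorffM_lt hE (ENNReal.half_pos hR')
  have hlt (n : ℕ) : Metric.ediam (t n) < R :=
    (htR n).trans_lt (ENNReal.half_lt_self hR' ENNReal.coe_ne_top)
  have hcoe (n : ℕ) : ((Metric.ediam (t n)).toNNReal : ℝ≥0∞) = Metric.ediam (t n) :=
    ENNReal.coe_toNNReal (hlt n).ne_top
  set I : Set ℕ := {n | (t n ∩ E).Nonempty}
  choose x hx using fun i : I => i.2
  refine ⟨I, x, fun i => (Metric.ediam (t i)).toNNReal, fun i => (hx i).2,
    fun i => ENNReal.coe_lt_coe.1 ((hcoe i).trans_lt (hlt i)), fun y hy => ?_, ?_⟩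
  · obtain ⟨n, hn⟩ := mem_iUnion.1 (hEt hy)
    refine mem_iUnion.2 ⟨⟨n, y, hn, hy⟩, ?_⟩
    rw [← Metric.closedEBall_coe, Metric.mem_closedEBall, hcoe]
    exact Metric.edist_le_ediam_of_mem hn (hx ⟨n, y, hn, hy⟩).1
  · calc ∑' i : I, h (Metric.ediam (t i)).toNNReal
        = ∑' i : I, ⨆ _ : (t i).Nonempty, h (Metric.ediam (t i)).toNNReal :=
          tsum_congr fun i => by rw [iSup_pos (i.2.mono inter_subset_left)]
      _ ≤ ∑' n, ⨆ _ : (t n).Nonempty, h (Metric.ediam (t n)).toNNReal :=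
          ENNReal.tsum_comp_le_tsum_of_injective Subtype.val_injective _
      _ < b := htb

lemma exists_ball_cover_tsum_lt_of_hausdorffM_lt (hh : IsHausdorffFunction h) {E : Set Y}
    {b : ℝ≥0∞} (hE : hausdorffM h E < b) {R : ℝ≥0} (hR : 0 < R) :
    ∃ (I : Set ℕ) (x : I → Y) (s : I → ℝ≥0), (∀ i, x i ∈ E) ∧ (∀ i, s i ∈ Ioo 0 R) ∧
      E ⊆ ⋃ i, Metric.ball (x i) (s i) ∧ ∑' i, h (s i) < b := by
  obtain ⟨I, x, d, hx, hdR, hcov, hsum⟩ := exists_closedBall_cover_tsum_lt_of_hausdorffM_lt hE hR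
  obtain ⟨ε, hε, hεsum⟩ := ENNReal.exists_pos_sum_of_countable' (tsub_pos_of_lt hsum).ne' I
  choose s hs hhs using fun i => hh.exists_mem_Ioo_le_add (hdR i)
    (ne_top_of_le_ne_top hsum.ne_top (ENNReal.le_tsum i)) (hε i).ne'
  refine ⟨I, x, s, hx, fun i => ⟨zero_le.trans_lt (hs i).1, (hs i).2⟩,
    hcov.trans (iUnion_mono fun i => Metric.closedBall_subset_ball (hs i).1), ?_⟩
  calc ∑' i, h (s i) ≤ ∑' i, (h (d i) + ε i) := ENNReal.tsum_le_tsum hhs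
    _ = ∑' i, h (d i) + ∑' i, ε i := ENNReal.tsum_add
    _ < ∑' i, h (d i) + (b - ∑' i, h (d i)) := ENNReal.add_lt_add_left hsum.ne_top hεsum
    _ = b := add_tsub_cancel_of_le hsum.le

lemma hausdorffM_le_of_forall_ball_cover (hmono : Monotone h) {W : Set Y} {b : ℝ≥0∞}
    (hcov : ∀ R : ℝ≥0, 0 < R → ∃ (u : Set Y) (s : Y → ℝ≥0), u.Countable ∧ (∀ x ∈ u, s x ≤ R) ∧
      W ⊆ ⋃ x : u, Metric.ball (x : Y) (s x) ∧ ∑' x : u, h (2 * s x) ≤ b) :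
    hausdorffM h W ≤ b := by
  borelize Y
  choose u s hu hsR hWu hsum using fun j : ℕ => hcov (1 / (j + 1)) (by positivity)
  have : ∀ j, Countable (u j) := fun j => (hu j).to_subtype
  have hdiam (j : ℕ) (x : u j) :
      Metric.ediam (Metric.ball (x : Y) (s j x)) ≤ (2 * s j x : ℝ≥0) := by
    rw [← Metric.eball_coe]
    exact Metric.ediam_eball_le
  have hlim : Tendsto (fun j : ℕ => ((2 * (1 / (j + 1)) : ℝ≥0) : ℝ≥0∞)) atTop (𝓝 0) := by
    rw [← ENNReal.coe_zero, ENNReal.tendsto_coe]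
    simpa using (tendsto_one_div_add_atTop_nhds_zero_nat (𝕜 := ℝ≥0)).const_mul 2
  rw [hausdorffM, OuterMeasure.coe_mkMetric]
  refine (Measure.mkMetric_le_liminf_tsum W _ hlim (fun j (x : u j) => Metric.ball (x : Y) (s j x))
    (Eventually.of_forall fun j x => (hdiam j x).trans ?_) (Eventually.of_forall hWu) _).trans ?_
  · gcongr
    exact hsR j x x.2
  · refine (liminf_le_liminf (Eventually.of_forall fun j => ?_)).trans (liminf_const b).le
    exact (ENNReal.tsum_le_tsum fun x => hmono
      (ENNReal.toNNReal_mono ENNReal.coe_ne_top (hdiam j x))).trans (hsum j)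

lemma countable_of_hausdorffM_ne_top {S : Set Y} {ε : ℝ≥0∞} (hε : ε ≠ 0)
    (hsep : Metric.IsSeparated ε S) (hS : hausdorffM h S ≠ ⊤) : S.Countable := by
  obtain ⟨t, hSt, htε, -⟩ :=
    exists_cover_tsum_lt_of_hausdorffM_lt hS.lt_top (pos_iff_ne_zero.2 hε)
  have hsub (n : ℕ) : (S ∩ t n).Subsingleton := by
    intro x hx y hy
    by_contra hxy
    exact (hsep hx.1 hy.1 hxy).not_ge ((Metric.edist_le_ediam_of_mem hx.2 hy.2).trans (htε n))
  rw [← inter_eq_self_of_subset_left hSt, inter_iUnion]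
  exact countable_iUnion fun n => (hsub n).countable

lemma le_hausdorffM_iInter [MeasurableSpace Y] (hh : IsHausdorffFunction h) {E : ℕ → Set Y}
    (hcomp : ∀ k, IsCompact (E k)) (hanti : Antitone E) {l : ℕ → Measure Y} {a : ℝ≥0∞}
    (hl : ∀ k, a ≤ l k (E k)) {R : ℝ≥0} (hR : 0 < R)
    (hball : ∀ x ∈ ⋂ k, E k, ∀ s ∈ Ioo 0 R, ∀ᶠ k in atTop, l k (Metric.ball x s) ≤ h s) :
    a ≤ hausdorffM h (⋂ k, E k) := by
  refine le_of_forall_gt_imp_ge_of_dense fun b hb => ?_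
  obtain ⟨I, x, s, hx, hs, hcov, hsum⟩ := exists_ball_cover_tsum_lt_of_hausdorffM_lt hh hb hR
  have hcompact : IsCompact (⋂ k, E k) :=
    (hcomp 0).of_isClosed_subset (isClosed_iInter fun k => (hcomp k).isClosed) (iInter_subset E 0)
  obtain ⟨J, hJ⟩ := hcompact.elim_finite_subcover _ (fun _ => Metric.isOpen_ball) hcov
  obtain ⟨k₀, hk₀⟩ := exists_subset_nhds_of_isCompact hanti.directed_ge hcomp fun y hy =>
    (isOpen_biUnion fun _ _ => Metric.isOpen_ball).mem_nhds (hJ hy)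
  obtain ⟨k, hk, hkball⟩ := ((eventually_ge_atTop k₀).and
    ((Finset.eventually_all J).2 fun i _ => hball _ (hx i) _ (hs i))).exists
  calc a ≤ l k (⋃ i ∈ J, Metric.ball (x i) (s i)) :=
        (hl k).trans (measure_mono ((hanti hk).trans hk₀))
    _ ≤ ∑ i ∈ J, l k (Metric.ball (x i) (s i)) := measure_biUnion_finset_le _ _
    _ ≤ ∑ i ∈ J, h (s i) := Finset.sum_le_sum hkball
    _ ≤ ∑' i, h (s i) := ENNReal.sum_le_tsum J
    _ ≤ b := hsum.le

end HausdorffMeasure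

section Density

variable {Y : Type*} [MetricSpace Y] [MeasurableSpace Y] {ν : Measure Y} {h : ℝ≥0 → ℝ≥0∞}

lemma exists_lt_measure_ball {x : Y} {s : ℝ} {c : ℝ≥0∞} (hc : c < ν (Metric.ball x s)) :
    ∃ r < s, c < ν (Metric.ball x r) := by
  obtain ⟨u, hu, hus, hlim⟩ := exists_seq_strictMono_tendsto s
  have hball : Metric.ball x s = ⋃ n, Metric.ball x (u n) := by
    refine Subset.antisymm (fun y hy => ?_)
      (iUnion_subset fun n => Metric.ball_subset_ball (hus n).le)
    exact mem_iUnion.2 (hlim.eventually_const_lt (Metric.mem_ball.1 hy)).exists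
  have hmono : Monotone fun n => Metric.ball x (u n) :=
    fun _ _ hmn => Metric.ball_subset_ball (hu.monotone hmn)
  rw [hball, hmono.measure_iUnion, lt_iSup_iff] at hc
  obtain ⟨n, hn⟩ := hc
  exact ⟨u n, hus n, hn⟩

variable (ν) in
lemma lowerSemicontinuous_measure_ball (s : ℝ) :
    LowerSemicontinuous fun x => ν (Metric.ball x s) := by
  intro x c hc
  obtain ⟨r, hrs, hr⟩ := exists_lt_measure_ball hc
  filter_upwards [Metric.ball_mem_nhds x (sub_pos.2 hrs)] with y hy
  refine hr.trans_le (measure_mono (Metric.ball_subset_ball' ?_))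
  have : dist x y < s - r := Metric.mem_ball'.1 hy
  linarith

/-- The points around which `ν` is thin compared with the gauge `h`, uniformly up to scale `δ`:
`M ν(B(x, s)) ≤ h(s)` for all radii `0 < s ≤ δ`. The factor `M` stands on the left, so that a large
`M` means a small density `ν(B(x, s)) / h(s)`. -/
def lowDensitySet (ν : Measure Y) (h : ℝ≥0 → ℝ≥0∞) (M δ : ℝ≥0) : Set Y :=
  {x | ∀ s : ℝ≥0, 0 < s → s ≤ δ → M * ν (Metric.ball x s) ≤ h s}

lemma isClosed_lowDensitySet (M δ : ℝ≥0) : IsClosed (lowDensitySet ν h M δ) := by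
  simp only [lowDensitySet, ofPred_forall]
  exact isClosed_iInter fun s => isClosed_iInter fun _ => isClosed_iInter fun _ =>
    (lowerSemicontinuous_measure_ball (M • ν) s).isClosed_preimage (h s)

lemma antitone_lowDensitySet (M : ℝ≥0) : Antitone (lowDensitySet ν h M) :=
  fun _ _ hδ _ hx s hs hsδ => hx s hs (hsδ.trans hδ)

lemma mem_iUnion_lowDensitySet {M : ℝ≥0} {x : Y} :
    x ∈ ⋃ k : ℕ, lowDensitySet ν h M (1 / (k + 1)) ↔
      ∀ᶠ s : ℝ≥0 in 𝓝[>] 0, M * ν (Metric.ball x s) ≤ h s := by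
  rw [mem_iUnion]
  constructor
  · rintro ⟨k, hk⟩
    filter_upwards [Ioc_mem_nhdsGT (show (0 : ℝ≥0) < 1 / (k + 1) by positivity)] with s hs
    exact hk s hs.1 hs.2
  · intro hev
    obtain ⟨δ, hδ, hsub⟩ := mem_nhdsGT_iff_exists_Ioc_subset.1 hev
    obtain ⟨k, hk⟩ := exists_nat_one_div_lt (mem_Ioi.1 hδ)
    exact ⟨k, fun s hs hsk => hsub ⟨hs, hsk.trans hk.le⟩⟩

lemma exists_countable_ball_cover [BorelSpace Y] [IsFiniteMeasure ν] {W : Set Y} {R : ℝ≥0}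
    {r : Y → ℝ≥0} (hr : ∀ x ∈ W, 0 < r x ∧ r x ≤ R)
    (hpos : ∀ x ∈ W, 0 < ν (Metric.ball x (r x))) :
    ∃ u ⊆ W, u.Countable ∧ W ⊆ ⋃ x : u, Metric.ball (x : Y) (4 * r x) ∧
      ∑' x : u, ν (Metric.ball (x : Y) (r x)) ≤ ν univ := by
  obtain ⟨u, huW, hdisj, hcov⟩ := Vitali.exists_disjoint_subfamily_covering_enlargement_ball W
    id (fun x => (r x : ℝ)) R (fun x hx => NNReal.coe_le_coe.2 (hr x hx).2) 4 (by norm_num)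
  have hdisj' : Pairwise (Function.onFun Disjoint fun x : u => Metric.ball (x : Y) (r x)) :=
    fun x y hxy => hdisj x.2 y.2 (Subtype.coe_ne_coe.2 hxy)
  have hball (x : u) : MeasurableSet (Metric.ball (x : Y) (r x)) := Metric.isOpen_ball.measurableSet
  refine ⟨u, huW, ?_, fun x hx => ?_, ?_⟩
  · have hcount := Measure.countable_meas_pos_of_disjoint_iUnion (μ := ν) hball hdisj'
    have huniv : {x : u | 0 < ν (Metric.ball (x : Y) (r x))} = univ :=
      eq_univ_of_forall fun x => hpos x (huW x.2)
    rwa [huniv, countable_univ_iff] at hcount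
  · obtain ⟨y, hy, hxy⟩ := hcov x hx
    exact mem_iUnion.2 ⟨⟨y, hy⟩, hxy (Metric.mem_ball_self (NNReal.coe_pos.2 (hr x hx).1))⟩
  · exact (tsum_meas_le_meas_iUnion_of_disjoint ν hball hdisj').trans (measure_mono (subset_univ _))

lemma hausdorffM_le_of_frequently_le [BorelSpace Y] [IsFiniteMeasure ν]
    (hh : IsHausdorffFunction h) {C : ℝ≥0} (hC : ∀ᶠ t in 𝓝[>] 0, h (3 * t) ≤ C * h t)
    {M : ℝ≥0} {W : Set Y}
    (hW : ∀ x ∈ W, ∃ᶠ s : ℝ≥0 in 𝓝[>] 0, h s ≤ M * ν (Metric.ball x s)) :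
    hausdorffM h W ≤ C * (C * (M * ν univ)) := by
  refine hausdorffM_le_of_forall_ball_cover hh.mono fun R hR => ?_
  have hscale : ∀ x ∈ W, ∃ s : ℝ≥0, s ∈ Ioc 0 (R / 4) ∧
      h s ≤ M * ν (Metric.ball x s) ∧ h (2 * (4 * s)) ≤ C * (C * h s) := by
    intro x hx
    obtain ⟨s, hs, hCs, hmem⟩ := ((hW x hx).and_eventually
      ((hh.eventually_le_mul_mul hC).and (Ioc_mem_nhdsGT (show 0 < R / 4 by positivity)))).exists
    exact ⟨s, hmem, hs, hCs⟩
  choose! r hr hhr hCr using hscale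
  have hpos : ∀ x ∈ W, 0 < ν (Metric.ball x (r x)) := fun x hx =>
    pos_iff_ne_zero.2 fun hzero => by simpa [hzero, (hh.pos _ (hr x hx).1).ne'] using hhr x hx
  obtain ⟨u, huW, hu, hcov, hsum⟩ := exists_countable_ball_cover hr hpos
  refine ⟨u, fun x => 4 * r x, hu, fun x hx => ?_, by simpa using hcov, ?_⟩
  · calc 4 * r x ≤ 4 * (R / 4) := by gcongr; exact (hr x (huW hx)).2
      _ = R := mul_div_cancel₀ R four_ne_zero
  · calc ∑' x : u, h (2 * (4 * r x))
        ≤ ∑' x : u, C * (C * (M * ν (Metric.ball (x : Y) (r x)))) :=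
          ENNReal.tsum_le_tsum fun x => (hCr x (huW x.2)).trans
            (by gcongr; exact hhr x (huW x.2))
      _ = C * (C * (M * ∑' x : u, ν (Metric.ball (x : Y) (r x)))) := by
        simp only [ENNReal.tsum_mul_left]
      _ ≤ C * (C * (M * ν univ)) := by gcongr

end Density

section HalvingScheme

variable {Y : Type*} [MetricSpace Y] [MeasurableSpace Y] {ν : Measure Y} {h : ℝ≥0 → ℝ≥0∞}

/-- A decreasing sequence of compact sets, each of which keeps at most half of the `ν`-mass of its
predecessor, and does so evenly at the scale `δ k`: of every ball it keeps at most half of the mass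
of the ball enlarged by `δ k`. The intersection is a `ν`-null set, but the measures
`2 ^ k • ν.restrict (E k)` need not lose mass along the way. -/
structure HalvingScheme (ν : Measure Y) (δ : ℕ → ℝ≥0) (E : ℕ → Set Y) : Prop where
  isCompact : ∀ k, IsCompact (E k)
  subset_succ : ∀ k, E (k + 1) ⊆ E k
  two_mul_measure_le : ∀ k, 2 * ν (E (k + 1)) ≤ ν (E k)
  two_mul_measure_inter_ball_le : ∀ k (x : Y) (s : ℝ≥0),
    2 * ν (E (k + 1) ∩ Metric.ball x s) ≤ ν (E k ∩ Metric.ball x (s + δ k))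

lemma mul_measure_iUnion_inter_ball_le {A D : ℕ → Set Y}
    (hA : ∀ i, MeasurableSet (A i)) (hdisj : Pairwise (Function.onFun Disjoint A)) {r : ℝ}
    (hdist : ∀ i, ∀ y ∈ A i, ∀ z ∈ A i, dist y z ≤ r) (hDA : ∀ i, D i ⊆ A i) {c : ℝ≥0∞}
    (hν : ∀ i, c * ν (D i) ≤ ν (A i)) (x : Y) (s : ℝ) :
    c * ν ((⋃ i, D i) ∩ Metric.ball x s) ≤ ν ((⋃ i, A i) ∩ Metric.ball x (s + r)) := by
  set I : Set ℕ := {i | (A i ∩ Metric.ball x s).Nonempty}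
  have hnear : ∀ i : I, A i ⊆ Metric.ball x (s + r) := by
    rintro ⟨i, z, hzA, hzx⟩ y hy
    calc dist y x ≤ dist y z + dist z x := dist_triangle y z x
      _ < r + s := add_lt_add_of_le_of_lt (hdist i y hy z hzA) hzx
      _ = s + r := add_comm _ _
  have hcover : (⋃ i, D i) ∩ Metric.ball x s ⊆ ⋃ i : I, D i := by
    rintro y ⟨hyD, hyx⟩
    obtain ⟨i, hi⟩ := mem_iUnion.1 hyD
    exact mem_iUnion.2 ⟨⟨i, y, hDA i hi, hyx⟩, hi⟩
  calc c * ν ((⋃ i, D i) ∩ Metric.ball x s)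
      ≤ c * ∑' i : I, ν (D i) := by
        gcongr
        exact (measure_mono hcover).trans (measure_iUnion_le _)
    _ ≤ ∑' i : I, ν (A i) := by
        rw [← ENNReal.tsum_mul_left]
        exact ENNReal.tsum_le_tsum fun i => hν i
    _ = ν (⋃ i : I, A i) :=
        (measure_iUnion (hdisj.comp_of_injective Subtype.val_injective) fun i => hA i).symm
    _ ≤ ν ((⋃ i, A i) ∩ Metric.ball x (s + r)) :=
        measure_mono (iUnion_subset fun i => subset_inter (subset_iUnion A i) (hnear i))

section Existence

variable [BorelSpace Y] [SecondCountableTopology Y] [IsFiniteMeasure ν]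

lemma exists_measurableSet_half_measure {E : Set Y} (hE : MeasurableSet E)
    (hpt : ∀ x ∈ E, ν {x} = 0) {r : ℝ≥0} (hr : 0 < r) :
    ∃ D ⊆ E, MeasurableSet D ∧ 2 * ν D = ν E ∧ ∀ (x : Y) (s : ℝ≥0),
      2 * ν (D ∩ Metric.ball x s) ≤ ν (E ∩ Metric.ball x (s + r)) := by
  obtain ⟨A, hA, hAbdd, hAdiam, hAuniv, hAdisj⟩ :=
    SeparableSpace.exists_measurable_partition_diam_le Y (NNReal.coe_pos.2 hr)
  have hEA (i : ℕ) : MeasurableSet (E ∩ A i) := hE.inter (hA i)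
  choose D hDsub hD hνD using fun i => exists_measurableSet_subset_measure_eq (ν := ν) (hEA i)
    (fun x hx => hpt x hx.1) (ENNReal.half_le_self (a := ν (E ∩ A i)))
  have hdouble (i : ℕ) : 2 * ν (D i) = ν (E ∩ A i) := by
    rw [hνD, ENNReal.mul_div_cancel two_ne_zero ENNReal.ofNat_ne_top]
  have hEAdisj : Pairwise (Function.onFun Disjoint fun i => E ∩ A i) := fun i j hij =>
    (hAdisj hij).mono inter_subset_right inter_subset_right
  have hDdisj : Pairwise (Function.onFun Disjoint D) := fun i j hij =>
    (hEAdisj hij).mono (hDsub i) (hDsub j)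
  refine ⟨⋃ i, D i, iUnion_subset fun i => (hDsub i).trans inter_subset_left,
    MeasurableSet.iUnion hD, ?_, fun x s => ?_⟩
  · rw [measure_iUnion hDdisj hD, ← ENNReal.tsum_mul_left, tsum_congr hdouble,
      ← measure_iUnion hEAdisj hEA, ← inter_iUnion, hAuniv, inter_univ]
  · have hunion : ⋃ i, E ∩ A i = E := by rw [← inter_iUnion, hAuniv, inter_univ]
    rw [← hunion]
    exact mul_measure_iUnion_inter_ball_le hEA hEAdisj
      (fun i y hy z hz => (Metric.dist_le_diam_of_mem (hAbdd i) hy.2 hz.2).trans (hAdiam i))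
      hDsub (fun i => (hdouble i).le) x s

lemma exists_isCompact_half_measure {E : Set Y} (hE : IsCompact E)
    (hpt : ∀ x ∈ E, ν {x} = 0) {r : ℝ≥0} (hr : 0 < r) {a : ℝ≥0∞} (ha : a < ν E) :
    ∃ E' ⊆ E, IsCompact E' ∧ a / 2 < ν E' ∧ 2 * ν E' ≤ ν E ∧ ∀ (x : Y) (s : ℝ≥0),
      2 * ν (E' ∩ Metric.ball x s) ≤ ν (E ∩ Metric.ball x (s + r)) := by
  obtain ⟨D, hDE, hD, hhalf, hball⟩ := exists_measurableSet_half_measure hE.measurableSet hpt hr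
  have haD : a / 2 < ν D := ENNReal.div_lt_of_lt_mul' (by rwa [hhalf])
  obtain ⟨E', hE'D, hE'closed, hE'⟩ := hD.exists_lt_isClosed_of_ne_top (measure_ne_top ν D) haD
  refine ⟨E', hE'D.trans hDE, hE.of_isClosed_subset hE'closed (hE'D.trans hDE), hE', ?_,
    fun x s => ?_⟩
  · rw [← hhalf]
    gcongr
  · refine le_trans ?_ (hball x s)
    gcongr

lemma exists_halvingScheme {Z : Set Y} (hZ : IsCompact Z) (hpt : ∀ x ∈ Z, ν {x} = 0)
    {δ : ℕ → ℝ≥0} (hδ : ∀ k, 0 < δ k) {a : ℝ≥0∞} (ha : a < ν Z) :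
    ∃ E, HalvingScheme ν δ E ∧ E 0 = Z ∧ ∀ k, a * 2⁻¹ ^ k < ν (E k) := by
  have hstep : ∀ (k : ℕ) (E : Set Y), IsCompact E ∧ E ⊆ Z ∧ a * 2⁻¹ ^ k < ν E →
      ∃ E', (IsCompact E' ∧ E' ⊆ Z ∧ a * 2⁻¹ ^ (k + 1) < ν E') ∧
        E' ⊆ E ∧ 2 * ν E' ≤ ν E ∧ ∀ (x : Y) (s : ℝ≥0),
          2 * ν (E' ∩ Metric.ball x s) ≤ ν (E ∩ Metric.ball x (s + δ k)) := by
    rintro k E ⟨hE, hEZ, hlt⟩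
    obtain ⟨E', hE'E, hE', hlt', hhalf, hball⟩ :=
      exists_isCompact_half_measure hE (fun x hx => hpt x (hEZ hx)) (hδ k) hlt
    refine ⟨E', ⟨hE', hE'E.trans hEZ, ?_⟩, hE'E, hhalf, hball⟩
    rwa [pow_succ, ← mul_assoc]
  choose! next hnext hsub hhalf hball using hstep
  let E : ℕ → Set Y := fun k => Nat.rec Z next k
  have hE : ∀ k, IsCompact (E k) ∧ E k ⊆ Z ∧ a * 2⁻¹ ^ k < ν (E k) := fun k => by
    induction k with
    | zero => exact ⟨hZ, Subset.rfl, by rwa [pow_zero, mul_one]⟩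
    | succ k ih => exact hnext k (E k) ih
  exact ⟨E, ⟨fun k => (hE k).1, fun k => hsub k _ (hE k), fun k => hhalf k _ (hE k),
    fun k => hball k _ (hE k)⟩, rfl, fun k => (hE k).2.2⟩

end Existence

lemma measure_singleton_eq_zero_of_mem_lowDensitySet (h0 : Tendsto h (𝓝[>] 0) (𝓝 0)) {M δ : ℝ≥0}
    (hM : M ≠ 0) (hδ : 0 < δ) {x : Y} (hx : x ∈ lowDensitySet ν h M δ) : ν {x} = 0 := by
  have hle : M * ν {x} ≤ 0 := by
    refine ge_of_tendsto h0 ?_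
    filter_upwards [Ioc_mem_nhdsGT hδ] with s hs
    refine le_trans ?_ (hx s hs.1 hs.2)
    gcongr
    exact singleton_subset_iff.2 (Metric.mem_ball_self hs.1)
  exact (mul_eq_zero.1 (nonpos_iff_eq_zero.1 hle)).resolve_left (ENNReal.coe_ne_zero.2 hM)

lemma exists_seq_le_two_mul_succ_le {ρ : ℕ → ℝ≥0} (hρ : ∀ k, 0 < ρ k) :
    ∃ δ : ℕ → ℝ≥0, (∀ k, 0 < δ k) ∧ (∀ k, δ k ≤ ρ k) ∧ ∀ k, 2 * δ (k + 1) ≤ δ k := by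
  let δ : ℕ → ℝ≥0 := fun k => Nat.rec (ρ 0) (fun k d => min (ρ (k + 1)) (d / 2)) k
  refine ⟨δ, fun k => ?_, fun k => ?_, fun k => ?_⟩
  · induction k with
    | zero => exact hρ 0
    | succ k ih => exact lt_min (hρ (k + 1)) (half_pos ih)
  · cases k with
    | zero => exact le_rfl
    | succ k => exact min_le_left _ _
  · calc 2 * δ (k + 1) ≤ 2 * (δ k / 2) := by gcongr; exact min_le_right _ _
      _ = δ k := mul_div_cancel₀ _ two_ne_zero

lemma exists_succ_le_lt_of_two_mul_succ_le {δ : ℕ → ℝ≥0} (hδ : ∀ k, 2 * δ (k + 1) ≤ δ k)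
    {s : ℝ≥0} (hs : s ∈ Ioo 0 (δ 0)) : ∃ k, δ (k + 1) ≤ s ∧ s < δ k := by
  have hgeom (k : ℕ) : 2 ^ k * δ k ≤ δ 0 := by
    induction k with
    | zero => simp
    | succ k ih =>
      rw [pow_succ, mul_assoc]
      exact (mul_le_mul_right (hδ k) _).trans ih
  obtain ⟨n, hn⟩ := pow_unbounded_of_one_lt (δ 0 / s) one_lt_two
  have hex : ∃ n, δ n ≤ s := by
    refine ⟨n, le_of_mul_le_mul_left (a := 2 ^ n) ((hgeom n).trans ?_) (by positivity)⟩
    exact ((div_lt_iff₀ hs.1).1 hn).le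
  obtain ⟨k, hk⟩ := Nat.exists_eq_add_one_of_ne_zero (n := Nat.find hex)
    fun hzero => (hzero ▸ Nat.find_spec hex).not_gt hs.2
  exact ⟨k, hk ▸ Nat.find_spec hex, not_le.1 (Nat.find_min hex (by lia))⟩

namespace HalvingScheme

variable {δ : ℕ → ℝ≥0} {E : ℕ → Set Y}

lemma antitone (hE : HalvingScheme ν δ E) : Antitone E :=
  antitone_nat_of_succ_le hE.subset_succ

lemma antitone_two_pow_mul_measure (hE : HalvingScheme ν δ E) :
    Antitone fun k => 2 ^ k * ν (E k) :=
  antitone_nat_of_succ_le fun k => by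
    rw [pow_succ, mul_assoc]
    gcongr
    exact hE.two_mul_measure_le k

lemma measure_iInter_eq_zero [IsFiniteMeasure ν] (hE : HalvingScheme ν δ E) :
    ν (⋂ k, E k) = 0 := by
  have hle (k : ℕ) : ν (⋂ k, E k) ≤ ν (E 0) / 2 ^ k :=
    calc ν (⋂ k, E k) ≤ ν (E k) := measure_mono (iInter_subset E k)
      _ ≤ ν (E 0) / 2 ^ k := (ENNReal.le_div_iff_mul_le (by simp) (by simp)).2 <| by
        simpa [mul_comm] using hE.antitone_two_pow_mul_measure k.zero_le
  have hlim : Tendsto (fun k => ν (E 0) / 2 ^ k) atTop (𝓝 0) := by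
    simpa [ENNReal.div_eq_inv_mul, ENNReal.inv_pow] using ENNReal.Tendsto.mul_const
      (ENNReal.tendsto_pow_atTop_nhds_zero_of_lt_one (r := 2⁻¹) (by simp))
      (.inr (measure_ne_top ν (E 0)))
  exact nonpos_iff_eq_zero.1 (ge_of_tendsto' hlim hle)

lemma antitone_two_pow_mul_measure_inter_ball (hE : HalvingScheme ν δ E)
    (hδ : ∀ k, 2 * δ (k + 1) ≤ δ k) (x : Y) (s : ℝ≥0) :
    Antitone fun k => 2 ^ k * ν (E k ∩ Metric.ball x (s + 2 * δ k)) := by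
  refine antitone_nat_of_succ_le fun k => ?_
  have hradius : (s + 2 * δ (k + 1) : ℝ) + δ k ≤ s + 2 * δ k := by
    have : (2 * δ (k + 1) : ℝ) ≤ δ k := mod_cast hδ k
    linarith
  have hhalf := hE.two_mul_measure_inter_ball_le k x (s + 2 * δ (k + 1))
  push_cast at hhalf
  rw [pow_succ, mul_assoc]
  gcongr
  exact hhalf.trans (by gcongr)

lemma eventually_two_pow_mul_measure_inter_ball_le (hE : HalvingScheme ν δ E)
    (hδ : ∀ k, 2 * δ (k + 1) ≤ δ k) {C : ℝ≥0} (hC0 : C ≠ 0) {s : ℝ≥0} (hs : s ∈ Ioo 0 (δ 0))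
    (hC : h (3 * s) ≤ C * h s) {x : Y}
    (hx : ∀ k, x ∈ lowDensitySet ν h (C * 2 ^ (k + 1)) (3 * δ k)) :
    ∀ᶠ m in atTop, 2 ^ m * ν (E m ∩ Metric.ball x s) ≤ h s := by
  obtain ⟨k, hks, hsk⟩ := exists_succ_le_lt_of_two_mul_succ_le hδ hs
  filter_upwards [eventually_ge_atTop (k + 1)] with m hm
  have hradius : (s + 2 * δ (k + 1) : ℝ) ≤ (3 * s : ℝ≥0) := by
    have : (δ (k + 1) : ℝ) ≤ s := hks
    push_cast
    linarith
  refine (ENNReal.mul_le_mul_iff_right (ENNReal.coe_ne_zero.2 hC0) ENNReal.coe_ne_top).1 ?_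
  calc C * (2 ^ m * ν (E m ∩ Metric.ball x s))
      ≤ C * (2 ^ m * ν (E m ∩ Metric.ball x (s + 2 * δ m))) := by
        gcongr
        exact le_add_of_nonneg_right (by positivity)
    _ ≤ C * (2 ^ (k + 1) * ν (E (k + 1) ∩ Metric.ball x (s + 2 * δ (k + 1)))) := by
        gcongr C * ?_
        exact hE.antitone_two_pow_mul_measure_inter_ball hδ x s hm
    _ ≤ C * (2 ^ (k + 1) * ν (Metric.ball x (3 * s : ℝ≥0))) := by
        gcongr
        exact inter_subset_right.trans (Metric.ball_subset_ball hradius)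
    _ = (C * 2 ^ (k + 1) : ℝ≥0) * ν (Metric.ball x (3 * s : ℝ≥0)) := by
        push_cast
        exact (mul_assoc _ _ _).symm
    _ ≤ h (3 * s) := hx k _ (mul_pos three_pos hs.1) (by gcongr)
    _ ≤ C * h s := hC

end HalvingScheme

variable [BorelSpace Y] [SecondCountableTopology Y] [IsFiniteMeasure ν]

lemma exists_measure_eq_zero_hausdorffM_pos (hh : IsHausdorffFunction h)
    (h0 : Tendsto h (𝓝[>] 0) (𝓝 0)) {C : ℝ≥0} (hC0 : C ≠ 0)
    (hC : ∀ᶠ t in 𝓝[>] 0, h (3 * t) ≤ C * h t) {Z : Set Y} (hZ : IsCompact Z) (hνZ : ν Z ≠ 0)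
    (hlow : ∀ M : ℝ≥0, ∃ δ > 0, Z ⊆ lowDensitySet ν h M δ) :
    ∃ E ⊆ Z, ν E = 0 ∧ 0 < hausdorffM h E := by
  have hpt : ∀ x ∈ Z, ν {x} = 0 := fun x hx => by
    obtain ⟨δ, hδ, hsub⟩ := hlow 1
    exact measure_singleton_eq_zero_of_mem_lowDensitySet h0 one_ne_zero hδ (hsub hx)
  obtain ⟨R, hR, hCR⟩ := mem_nhdsGT_iff_exists_Ioc_subset.1 hC
  choose ρ hρ hZρ using fun k : ℕ => hlow (C * 2 ^ (k + 1))
  obtain ⟨δ, hδ, hδρ, hδsucc⟩ := exists_seq_le_two_mul_succ_le (ρ := fun k => min (ρ k / 3) R)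
    fun k => lt_min (div_pos (hρ k) three_pos) hR
  obtain ⟨a, ha0, haZ⟩ := exists_between (pos_iff_ne_zero.2 hνZ)
  obtain ⟨E, hE, hE0, hEa⟩ := exists_halvingScheme hZ hpt hδ haZ
  have hEZ : ⋂ k, E k ⊆ Z := hE0 ▸ iInter_subset E 0
  refine ⟨⋂ k, E k, hEZ, hE.measure_iInter_eq_zero, ha0.trans_le ?_⟩
  refine le_hausdorffM_iInter (l := fun m => (2 ^ m : ℝ≥0∞) • ν.restrict (E m)) hh hE.isCompact
    hE.antitone (fun k => ?_) (hδ 0) fun x hx s hs => ?_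
  · calc a = 2 ^ k * (a * 2⁻¹ ^ k) := by
          rw [mul_left_comm, ← mul_pow, ENNReal.mul_inv_cancel two_ne_zero ENNReal.ofNat_ne_top,
            one_pow, mul_one]
      _ ≤ 2 ^ k * ν (E k) := by gcongr; exact (hEa k).le
      _ = ((2 ^ k : ℝ≥0∞) • ν.restrict (E k)) (E k) := by simp
  · have hlowx (k : ℕ) : x ∈ lowDensitySet ν h (C * 2 ^ (k + 1)) (3 * δ k) := by
      refine antitone_lowDensitySet _ ?_ (hZρ k (hEZ hx))
      calc 3 * δ k ≤ 3 * (ρ k / 3) := by gcongr; exact (hδρ k).trans (min_le_left _ _)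
        _ = ρ k := mul_div_cancel₀ _ three_ne_zero
    have hCs : h (3 * s) ≤ C * h s := hCR ⟨hs.1, hs.2.le.trans ((hδρ 0).trans (min_le_right _ _))⟩
    filter_upwards [hE.eventually_two_pow_mul_measure_inter_ball_le hδsucc hC0 hs hCs hlowx]
      with m hm
    simpa [Measure.restrict_apply Metric.isOpen_ball.measurableSet, inter_comm] using hm

end HalvingScheme

section AbsoluteContinuity

variable {Y : Type*} [MetricSpace Y] [MeasurableSpace Y] [BorelSpace Y] {ν : Measure Y}
  [IsFiniteMeasure ν] {h : ℝ≥0 → ℝ≥0∞} {T : ℕ → Set Y}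

lemma exists_isCompact_forall_subset_lowDensitySet (hT : ∀ j, IsCompact (T j))
    (hνT : ν (⋃ j, T j)ᶜ = 0) (hν : ν (⋂ n : ℕ, ⋃ k : ℕ, lowDensitySet ν h n (1 / (k + 1))) ≠ 0) :
    ∃ Z, IsCompact Z ∧ ν Z ≠ 0 ∧ ∀ M : ℝ≥0, ∃ δ > 0, Z ⊆ lowDensitySet ν h M δ := by
  obtain ⟨k, hk⟩ := exists_measure_iInter_iUnion_sdiff_lt (ν := ν)
    (s := fun n k : ℕ => lowDensitySet ν h n (1 / (k + 1)))
    (fun n k => (isClosed_lowDensitySet _ _).measurableSet)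
    (fun n i j hij => antitone_lowDensitySet _ (by gcongr)) hν
  set F : Set Y := ⋂ n : ℕ, lowDensitySet ν h n (1 / (k n + 1))
  have hF : IsClosed F := isClosed_iInter fun n => isClosed_lowDensitySet _ _
  have hνF : ν F ≠ 0 := fun hzero => hk.ne (measure_sdiff_null hzero)
  obtain ⟨j, hj⟩ : ∃ j, ν (T j ∩ F) ≠ 0 := by
    contrapose! hνF
    refine measure_mono_null ?_ (measure_union_null hνT (measure_iUnion_null hνF))
    rw [← iUnion_inter]
    exact fun x hx => (em (x ∈ ⋃ j, T j)).symm.imp_right fun hxT => ⟨hxT, hx⟩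
  refine ⟨T j ∩ F, (hT j).inter_right hF, hj, fun M => ?_⟩
  obtain ⟨n, hn⟩ := exists_nat_ge M
  refine ⟨1 / (k n + 1), by positivity, fun x hx s hs hsk => ?_⟩
  calc M * ν (Metric.ball x s) ≤ (n : ℝ≥0) * ν (Metric.ball x s) := by gcongr
    _ ≤ h s := mem_iInter.1 hx.2 n s hs hsk

theorem sigmaFiniteSet_hausdorffM_univ [SecondCountableTopology Y] (hh : IsHausdorffFunction h)
    (hford : FiniteOrder h) (h0 : h 0 = 0) (hT : ∀ j, IsCompact (T j)) (hνT : ν (⋃ j, T j)ᶜ = 0)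
    (hac : ∀ A, ν A = 0 → hausdorffM h A = 0) :
    SigmaFiniteSet (hausdorffM h) (univ : Set Y) := by
  obtain ⟨C, hC0, hC⟩ := hford.exists_eventually_le_mul hh h0
  let U : ℕ → Set Y := fun n => ⋃ k : ℕ, lowDensitySet ν h n (1 / (k + 1))
  have hU (n : ℕ) : MeasurableSet (U n) :=
    MeasurableSet.iUnion fun k => (isClosed_lowDensitySet _ _).measurableSet
  have hnull : ν (⋂ n, U n) = 0 := by
    by_contra hpos
    obtain ⟨Z, hZ, hνZ, hlow⟩ := exists_isCompact_forall_subset_lowDensitySet hT hνT hpos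
    obtain ⟨E, -, hνE, hE⟩ :=
      exists_measure_eq_zero_hausdorffM_pos hh (hh.tendsto_nhdsGT_zero h0) hC0 hC hZ hνZ hlow
    exact hE.ne' (hac E hνE)
  have hfin (n : ℕ) : hausdorffM h (U n)ᶜ < ⊤ := by
    refine (hausdorffM_le_of_frequently_le hh hC (M := n) (ν := ν) fun x hx => ?_).trans_lt (by
      finiteness)
    rw [mem_compl_iff, mem_iUnion_lowDensitySet] at hx
    exact (not_eventually.1 hx).mono fun s hs => (not_le.1 hs).le
  have hcover : ⋃ o : Option ℕ, o.elim (⋂ n, U n) (fun n => (U n)ᶜ) = univ := by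
    rw [iUnion_option, Option.elim_none]
    simp only [Option.elim_some, ← compl_iInter, union_compl_self]
  rw [← hcover]
  refine sigmaFiniteSet_iUnion (Option.rec ?_ fun n => ?_) (Option.rec ?_ fun n => ?_)
  · exact isCaratheodory_hausdorffM (MeasurableSet.iInter hU)
  · exact isCaratheodory_hausdorffM (hU n).compl
  · exact (hac _ hnull).trans_lt ENNReal.zero_lt_top
  · exact hfin n

end AbsoluteContinuity

section ClosedApproximable

lemma exists_seq_measure_sdiff_iUnion_eq_zero {α : Type*} [MeasurableSpace α] {m : Measure α}
    {A : Set α} {P : Set α → Prop} (hP : ∀ ε : ℝ≥0∞, ε ≠ 0 → ∃ F, P F ∧ m (A \ F) < ε) :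
    ∃ F : ℕ → Set α, (∀ j, P (F j)) ∧ m (A \ ⋃ j, F j) = 0 := by
  obtain ⟨e, -, he, hlim⟩ := exists_seq_strictAnti_tendsto' (zero_lt_one (α := ℝ≥0∞))
  choose F hPF hF using fun j => hP (e j) (he j).1.ne'
  refine ⟨F, hPF, le_antisymm (ge_of_tendsto' hlim fun j => ?_) zero_le⟩
  exact (measure_mono (sdiff_subset_sdiff_right (subset_iUnion F j))).trans (hF j).le

variable {X : Type*} [TopologicalSpace X] [MeasurableSpace X] {m : Measure X} {A B : Set X}

/-- `A` can be exhausted, up to arbitrarily small measure, by closed subsets. This is the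
condition of `Measure.InnerRegularWRT` for a single set, which need not be measurable; without
metrizability of `X` even open sets may fail it. -/
def ClosedApproximable (m : Measure X) (A : Set X) : Prop :=
  ∀ ε : ℝ≥0∞, ε ≠ 0 → ∃ F, (F ⊆ A ∧ IsClosed F) ∧ m (A \ F) < ε

lemma ClosedApproximable.of_subset (hA : ClosedApproximable m A) (hAB : A ⊆ B)
    (hBA : m (B \ A) = 0) : ClosedApproximable m B := by
  intro ε hε
  obtain ⟨F, ⟨hFA, hF⟩, hlt⟩ := hA ε hε
  refine ⟨F, ⟨hFA.trans hAB, hF⟩, ?_⟩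
  calc m (B \ F) ≤ m (B \ A) + m (A \ F) :=
        (measure_mono (sdiff_triangle B A F)).trans (measure_union_le _ _)
    _ < ε := by rwa [hBA, zero_add]

lemma ClosedApproximable.nullMeasurableSet [OpensMeasurableSpace X]
    (hA : ClosedApproximable m A) : NullMeasurableSet A m := by
  obtain ⟨F, hF, hnull⟩ := exists_seq_measure_sdiff_iUnion_eq_zero hA
  rw [← union_sdiff_cancel (iUnion_subset fun j => (hF j).1)]
  exact (NullMeasurableSet.iUnion fun j => (hF j).2.nullMeasurableSet).union (.of_null hnull)

lemma closedApproximable_compl_iUnion [OpensMeasurableSpace X] [IsFiniteMeasure m]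
    {R : ℕ → Set X} (hR : ∀ n, IsGδ (R n)) : ClosedApproximable m (⋃ n, R n)ᶜ := by
  intro ε hε
  choose U hU hRU using fun n => isGδ_iff_eq_iInter_nat.1 (hR n)
  set C : ℕ → ℕ → Set X := fun n => accumulate fun j => (U n j)ᶜ with hC_def
  have hC : ∀ n k, IsClosed (C n k) := fun n k =>
    (finite_le_nat k).isClosed_biUnion fun j _ => (hU n j).isClosed_compl
  have hcompl : (⋃ n, R n)ᶜ = ⋂ n, ⋃ k, C n k := by
    simp only [compl_iUnion, hRU, compl_iInter, hC_def, iUnion_accumulate]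
  obtain ⟨k, hk⟩ := exists_measure_iInter_iUnion_sdiff_lt (ν := m)
    (fun n k => (hC n k).measurableSet) (fun n => monotone_accumulate) hε
  rw [hcompl]
  exact ⟨⋂ n, C n (k n), ⟨iInter_mono fun n => subset_iUnion (C n) (k n),
    isClosed_iInter fun n => hC n (k n)⟩, hk⟩

end ClosedApproximable

section OuterMeasure

lemma exists_measure_eq_of_isCaratheodory {α : Type*} [MeasurableSpace α] {μ : OuterMeasure α}
    (hμ : ∀ B, MeasurableSet B → μ.IsCaratheodory B)
    (hreg : ∀ E, ∃ R, MeasurableSet R ∧ E ⊆ R ∧ μ R = μ E) :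
    ∃ m : Measure α, ∀ E, m E = μ E := by
  refine ⟨μ.toMeasure hμ, fun E => le_antisymm ?_ (le_toMeasure_apply _ _ _)⟩
  obtain ⟨R, hR, hER, hRE⟩ := hreg E
  rw [← hRE, ← toMeasure_apply μ hμ hR]
  exact measure_mono hER

variable {X : Type*} [TopologicalSpace X] {μ : OuterMeasure X}

lemma exists_isGδ_cover_sdiff_null (hGδ : ∀ E, ∃ R, IsGδ R ∧ E ⊆ R ∧ μ R = μ E)
    (hμ : SigmaFiniteSet μ univ) {M : Set X} (hM : μ.IsCaratheodory M) :
    ∃ R : ℕ → Set X, (∀ n, IsGδ (R n)) ∧ M ⊆ ⋃ n, R n ∧ μ ((⋃ n, R n) \ M) = 0 := by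
  obtain ⟨A, hA, hAu⟩ := hμ
  choose R hR hMR hμR using fun n => hGδ (M ∩ A n)
  have hnull : ∀ n, μ (R n \ (M ∩ A n)) = 0 := by
    intro n
    have hsplit := μ.isCaratheodory_inter hM (hA n).1 (R n)
    rw [inter_eq_self_of_subset_right (hMR n), hμR] at hsplit
    have hfin : μ (M ∩ A n) ≠ ⊤ := ((measure_mono inter_subset_right).trans_lt (hA n).2).ne
    exact ((ENNReal.add_right_inj hfin).1 ((add_zero _).trans hsplit)).symm
  refine ⟨R, hR, ?_, ?_⟩
  · rw [← inter_univ M, hAu, inter_iUnion]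
    exact iUnion_mono hMR
  · rw [iUnion_sdiff]
    exact measure_iUnion_null fun n =>
      measure_mono_null (sdiff_subset_sdiff_right inter_subset_left) (hnull n)

lemma exists_isFiniteMeasure_closedApproximable [MeasurableSpace X] [BorelSpace X]
    (hBorel : ∀ B, MeasurableSet B → μ.IsCaratheodory B)
    (hGδ : ∀ E, ∃ R, IsGδ R ∧ E ⊆ R ∧ μ R = μ E) (hμ : SigmaFiniteSet μ univ) :
    ∃ m : Measure X, IsFiniteMeasure m ∧ (∀ A, m A = 0 ↔ μ A = 0) ∧
      ∀ M, μ.IsCaratheodory M → ClosedApproximable m M := by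
  obtain ⟨m, hm⟩ := exists_measure_eq_of_isCaratheodory hBorel fun E =>
    (hGδ E).imp fun R hR => ⟨hR.1.measurableSet, hR.2⟩
  have hsigma : SigmaFinite m := by
    obtain ⟨A, hA, hAu⟩ := hμ
    exact ⟨⟨⟨A, fun _ => trivial, fun n => (hm _).trans_lt (hA n).2, hAu.symm⟩⟩⟩
  have hnull : ∀ A, m.toFinite A = 0 ↔ μ A = 0 := fun A => by rw [toFinite_apply_eq_zero_iff, hm]
  refine ⟨m.toFinite, inferInstance, hnull, fun M hM => ?_⟩
  obtain ⟨R, hR, hMR, hRM⟩ := exists_isGδ_cover_sdiff_null hGδ hμ (μ.isCaratheodory_compl hM)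
  refine (closedApproximable_compl_iUnion hR).of_subset (compl_subset_comm.1 hMR) ?_
  rwa [sdiff_compl, inter_comm, ← sdiff_compl, hnull]

end OuterMeasure

section Lusin

variable {X : Type*} [TopologicalSpace X] [MeasurableSpace X] {m : Measure X}

lemma exists_isClosed_measure_compl_union_lt {A : Set X} (hA : ClosedApproximable m A)
    (hA' : ClosedApproximable m Aᶜ) {ε : ℝ≥0∞} (hε : ε ≠ 0) :
    ∃ C C', (C ⊆ A ∧ IsClosed C) ∧ (C' ⊆ Aᶜ ∧ IsClosed C') ∧ m (C ∪ C')ᶜ < ε := by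
  obtain ⟨C, hC, hlt⟩ := hA (ε / 2) (ENNReal.half_pos hε).ne'
  obtain ⟨C', hC', hlt'⟩ := hA' (ε / 2) (ENNReal.half_pos hε).ne'
  refine ⟨C, C', hC, hC', ?_⟩
  have hsub : (C ∪ C')ᶜ ⊆ (A \ C) ∪ (Aᶜ \ C') := by
    intro x hx
    by_cases x ∈ A <;> grind
  calc m (C ∪ C')ᶜ ≤ m (A \ C) + m (Aᶜ \ C') :=
        (measure_mono hsub).trans (measure_union_le _ _)
    _ < ε / 2 + ε / 2 := ENNReal.add_lt_add hlt hlt'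
    _ = ε := ENNReal.add_halves ε

lemma exists_isClosed_continuousOn_measure_compl_lt {Y : Type*} [TopologicalSpace Y]
    [SecondCountableTopology Y] {f : X → Y}
    (hf : ∀ O, IsOpen O → ClosedApproximable m (f ⁻¹' O))
    (hf' : ∀ O, IsOpen O → ClosedApproximable m (f ⁻¹' O)ᶜ) {ε : ℝ≥0∞} (hε : ε ≠ 0) :
    ∃ F, (IsClosed F ∧ ContinuousOn f F) ∧ m Fᶜ < ε := by
  have hbasis := TopologicalSpace.isBasis_countableBasis Y
  have := (TopologicalSpace.countable_countableBasis Y).to_subtype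
  obtain ⟨e, he, hsum⟩ :=
    ENNReal.exists_pos_sum_of_countable' hε (TopologicalSpace.countableBasis Y)
  choose C C' hC hC' hlt using fun O : TopologicalSpace.countableBasis Y =>
    exists_isClosed_measure_compl_union_lt (hf O (hbasis.isOpen O.2)) (hf' O (hbasis.isOpen O.2))
      (he O).ne'
  refine ⟨⋂ O, C O ∪ C' O, ⟨isClosed_iInter fun O => (hC O).2.union (hC' O).2, ?_⟩, ?_⟩
  · refine hbasis.continuousOn_iff.2 fun O hO => ⟨(C' ⟨O, hO⟩)ᶜ, (hC' _).2.isOpen_compl, ?_⟩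
    ext x
    refine and_congr_left fun hx => ⟨fun hxO hxC' => (hC' _).1 hxC' hxO, fun hxC' => ?_⟩
    exact (hC _).1 ((mem_iInter.1 hx ⟨O, hO⟩).resolve_right hxC')
  · rw [compl_iInter]
    calc m (⋃ O, (C O ∪ C' O)ᶜ) ≤ ∑' O, m (C O ∪ C' O)ᶜ := measure_iUnion_le _
      _ ≤ ∑' O, e O := ENNReal.tsum_le_tsum fun O => (hlt O).le
      _ < ε := hsum

lemma exists_isCompact_continuousOn_measure_compl_iUnion_eq_zero {Y : Type*} [TopologicalSpace Y]
    [SecondCountableTopology Y] {f : X → Y}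
    (hf : ∀ O, IsOpen O → ClosedApproximable m (f ⁻¹' O))
    (hf' : ∀ O, IsOpen O → ClosedApproximable m (f ⁻¹' O)ᶜ) {K : ℕ → Set X}
    (hK : ∀ n, IsCompact (K n)) (hKc : m (⋃ n, K n)ᶜ = 0) :
    ∃ L : ℕ → Set X, (∀ j, IsCompact (L j) ∧ ContinuousOn f (L j)) ∧ m (⋃ j, L j)ᶜ = 0 := by
  obtain ⟨F, hF, hFc⟩ := exists_seq_measure_sdiff_iUnion_eq_zero (A := univ) fun ε hε => by
    simpa only [← compl_eq_univ_sdiff] using exists_isClosed_continuousOn_measure_compl_lt hf hf' hε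
  obtain ⟨g, hg⟩ := exists_surjective_nat (ℕ × ℕ)
  refine ⟨fun j => F (g j).1 ∩ K (g j).2, fun j => ⟨(hK _).inter_left (hF _).1,
    (hF _).2.mono inter_subset_left⟩, ?_⟩
  rw [hg.iUnion_comp fun p : ℕ × ℕ => F p.1 ∩ K p.2, iUnion_prod', ← iUnion_inter_iUnion,
    compl_inter, compl_eq_univ_sdiff]
  exact measure_union_null hFc hKc

end Lusin

lemma secondCountableTopology_of_countable_of_isSeparated {Y : Type*} [PseudoEMetricSpace Y]
    (hY : ∀ ε : ℝ≥0∞, ε ≠ 0 → ∀ D : Set Y, Metric.IsSeparated ε D → D.Countable) :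
    SecondCountableTopology Y := by
  refine EMetric.secondCountable_of_almost_dense_set fun ε hε => ?_
  obtain ⟨r, hr, hrε⟩ := ENNReal.lt_iff_exists_nnreal_btwn.1 hε
  obtain ⟨D, hD⟩ := zorn_subset {D : Set Y | D ⊆ univ ∧ Metric.IsSeparated r D} fun c hc hchain =>
    ⟨⋃₀ c, ⟨subset_univ _, (pairwise_sUnion hchain.directedOn).2 fun s hs => (hc hs).2⟩,
      fun s => subset_sUnion_of_mem⟩
  refine ⟨D, hY r hr.ne' D hD.prop.2, univ_subset_iff.1 ?_⟩
  calc univ ⊆ ⋃ y ∈ D, Metric.closedEBall y r :=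
        Metric.isCover_iff_subset_iUnion_closedEBall.1 (.of_maximal_isSeparated hD)
    _ ⊆ ⋃ y ∈ D, Metric.closedEBall y ε :=
        iUnion₂_mono fun y _ => Metric.closedEBall_subset_closedEBall hrε.le

section SecondCountable

variable {X : Type*} [MeasurableSpace X] {m : Measure X} [IsFiniteMeasure m]

-- Ulam matrix: with `g β : Iio β → ℕ` injective, the rows `{β > α | g β α = n}` for fixed `n` are
-- disjoint, so all but countably many of them carry a null set.
lemma exists_measure_biUnion_Ioi_eq_zero {ι : Type*} [LinearOrder ι] [Uncountable ι]
    (hIio : ∀ i : ι, (Iio i).Countable) {B : ι → Set X}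
    (hdisj : Pairwise (Function.onFun Disjoint B))
    (hB : ∀ S : Set ι, NullMeasurableSet (⋃ i ∈ S, B i) m) :
    ∃ i, m (⋃ j ∈ Ioi i, B j) = 0 := by
  choose g hg using fun i => countable_iff_exists_injOn.1 (hIio i)
  let A : ℕ → ι → Set ι := fun n α => {β | α < β ∧ g β α = n}
  have hrow : ∀ n, {α | 0 < m (⋃ β ∈ A n α, B β)}.Countable := by
    refine fun n => Measure.countable_meas_pos_of_disjoint_iUnion₀ (fun α => hB _) ?_
    refine fun α α' hne => Disjoint.aedisjoint ?_
    simp only [disjoint_iUnion_left, disjoint_iUnion_right]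
    rintro β' ⟨hβ', hgβ'⟩ β ⟨hβ, hgβ⟩
    exact hdisj fun heq => hne (by subst heq; exact hg _ hβ hβ' (hgβ.trans hgβ'.symm))
  obtain ⟨α, hα⟩ : (⋃ n, {α | 0 < m (⋃ β ∈ A n α, B β)})ᶜ.Nonempty :=
    nonempty_compl.2 fun huniv => not_countable_univ (huniv ▸ countable_iUnion hrow)
  refine ⟨α, ?_⟩
  have hIoi : Ioi α = ⋃ n, A n α := by ext β; simp [A]
  rw [hIoi, biUnion_iUnion]
  refine measure_iUnion_null fun n => ?_
  simpa using fun hpos => hα (mem_iUnion.2 ⟨n, hpos⟩)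

lemma exists_embedding_countable_Iio (D : Type u) [Uncountable D] :
    ∃ (ι : Type u) (_ : LinearOrder ι), Uncountable ι ∧ (∀ i : ι, (Iio i).Countable) ∧
      Nonempty (ι ↪ D) := by
  refine ⟨(Cardinal.aleph 1).ord.ToType, inferInstance, ?_, fun i => ?_, ?_⟩
  · rw [← Cardinal.aleph0_lt_mk_iff, Cardinal.mk_ord_toType, ← Cardinal.aleph_zero]
    exact Cardinal.aleph_lt_aleph.2 zero_lt_one
  · rw [← Cardinal.le_aleph0_iff_set_countable]
    have := Cardinal.mk_Iio_lt i (by simp)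
    rwa [Cardinal.mk_ord_toType, Cardinal.lt_aleph_one_iff] at this
  · rw [← Cardinal.le_def, Cardinal.mk_ord_toType, Cardinal.aleph_one_le_iff]
    exact Cardinal.aleph0_lt_mk

variable {Y : Type v} [MetricSpace Y] {h : ℝ≥0 → ℝ≥0∞} {f : X → Y}

lemma countable_of_isSeparated_of_null_image (hf : Function.Surjective f)
    (hfm : ∀ O, IsOpen O → NullMeasurableSet (f ⁻¹' O) m)
    (hnull : ∀ N, m N = 0 → hausdorffM h (f '' N) = 0) {ε : ℝ≥0∞} (hε : ε ≠ 0) {D : Set Y}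
    (hD : Metric.IsSeparated ε D) : D.Countable := by
  by_contra hDc
  have : Uncountable D := not_countable_iff.1 hDc
  obtain ⟨ι, _, hι, hIio, ⟨e⟩⟩ := exists_embedding_countable_Iio D
  let y : ι → Y := fun i => e i
  have hy : Function.Injective y := Subtype.val_injective.comp e.injective
  have hdisj : Pairwise (Function.onFun Disjoint fun i => f ⁻¹' Metric.eball (y i) (ε / 2)) := by
    refine fun i j hij => Disjoint.preimage f (Metric.eball_disjoint ?_)
    rw [ENNReal.add_halves]
    exact (hD (e i).2 (e j).2 (hy.ne hij)).le
  obtain ⟨i, hi⟩ := exists_measure_biUnion_Ioi_eq_zero (m := m) hIio hdisj fun S => by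
    rw [← preimage_iUnion₂]
    exact hfm _ (isOpen_biUnion fun _ _ => Metric.isOpen_eball)
  have hsub : y '' Ioi i ⊆ f '' ⋃ j ∈ Ioi i, f ⁻¹' Metric.eball (y j) (ε / 2) := by
    rw [← preimage_iUnion₂, image_preimage_eq _ hf, image_subset_iff]
    exact fun j hj => mem_biUnion hj (Metric.mem_eball_self (ENNReal.half_pos hε))
  have hyD : y '' Ioi i ⊆ D := image_subset_iff.2 fun j _ => (e j).2
  have hIoi : (Ioi i).Countable :=
    countable_of_injective_of_countable_image hy.injOn <|
      countable_of_hausdorffM_ne_top hε (hD.subset hyD)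
        (measure_mono_null hsub (hnull _ hi) ▸ ENNReal.zero_ne_top)
  refine not_countable_univ (α := ι) ?_
  rw [← Iic_union_Ioi (a := i), ← Iio_insert]
  exact ((hIio i).insert i).union hIoi

end SecondCountable

section Pushforward

lemma nullMeasurable_of_isOpen {X Y : Type*} [MeasurableSpace X] {m : Measure X}
    [TopologicalSpace Y] [MeasurableSpace Y] [BorelSpace Y] {f : X → Y}
    (hf : ∀ O, IsOpen O → NullMeasurableSet (f ⁻¹' O) m) : NullMeasurable f m :=
  measurable_of_isOpen (γ := Y) (δ := NullMeasurableSpace X m) hf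

theorem sigmaFiniteSet_hausdorffM_univ_of_null_image {X : Type*} [TopologicalSpace X]
    [MeasurableSpace X] [OpensMeasurableSpace X] {m : Measure X} [IsFiniteMeasure m] {Y : Type*}
    [MetricSpace Y] {h : ℝ≥0 → ℝ≥0∞} (hh : IsHausdorffFunction h) (hford : FiniteOrder h)
    (h0 : h 0 = 0) {K : ℕ → Set X} (hK : ∀ n, IsCompact (K n)) (hKc : m (⋃ n, K n)ᶜ = 0)
    {f : X → Y} (hsurj : Function.Surjective f)
    (hf : ∀ O, IsOpen O → ClosedApproximable m (f ⁻¹' O))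
    (hf' : ∀ O, IsOpen O → ClosedApproximable m (f ⁻¹' O)ᶜ)
    (hnull : ∀ N, m N = 0 → hausdorffM h (f '' N) = 0) :
    SigmaFiniteSet (hausdorffM h) (univ : Set Y) := by
  borelize Y
  have hfm : ∀ O, IsOpen O → NullMeasurableSet (f ⁻¹' O) m :=
    fun O hO => (hf O hO).nullMeasurableSet
  have : SecondCountableTopology Y := secondCountableTopology_of_countable_of_isSeparated
    fun ε hε D => countable_of_isSeparated_of_null_image hsurj hfm hnull hε
  have hfae : AEMeasurable f m := (nullMeasurable_of_isOpen hfm).aemeasurable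
  obtain ⟨L, hL, hLc⟩ := exists_isCompact_continuousOn_measure_compl_iUnion_eq_zero hf hf' hK hKc
  have hT : ∀ j, IsCompact (f '' L j) := fun j => (hL j).1.image_of_continuousOn (hL j).2
  have hνT : m.map f (⋃ j, f '' L j)ᶜ = 0 := by
    rw [Measure.map_apply_of_aemeasurable hfae (.compl (.iUnion fun j => (hT j).measurableSet)),
      ← image_iUnion]
    exact measure_mono_null (compl_subset_compl.2 (subset_preimage_image f _)) hLc
  refine sigmaFiniteSet_hausdorffM_univ hh hford h0 hT hνT fun A hA => ?_
  rw [← image_preimage_eq A hsurj]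
  exact hnull _ (Measure.preimage_null_of_map_null hfae hA)

end Pushforward

theorem statement_15_general {X : Type*} [TopologicalSpace X] {Y : Type*} [MetricSpace Y]
    (μ : MeasureTheory.OuterMeasure X)
    (hBorel : ∀ B : Set X, MeasurableSet[borel X] B → μ.IsCaratheodory B)
    (hGdelta : ∀ E : Set X, ∃ R : Set X, IsGδ R ∧ E ⊆ R ∧ μ R = μ E)
    (hsf : SigmaFiniteSet μ (Set.univ : Set X))
    (hdecomp : ∃ (K : ℕ → Set X) (N : Set X), (∀ n, IsCompact (K n)) ∧ μ N = 0 ∧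
      Set.univ = (⋃ n, K n) ∪ N)
    (h : ℝ≥0 → ℝ≥0∞) (hh : IsHausdorffFunction h) (hford : FiniteOrder h)
    (h0 : h 0 = 0)
    (hY : ¬ SigmaFiniteSet (hausdorffM h) (Set.univ : Set Y))
    (f : X → Y) (hsurj : Function.Surjective f)
    (hmeas : ∀ O : Set Y, IsOpen O → μ.IsCaratheodory (f ⁻¹' O)) :
    ∃ N : Set X, μ N = 0 ∧ 0 < hausdorffM h (f '' N) := by
  by_contra! hcon
  borelize X
  obtain ⟨m, _, hm0, hm⟩ := exists_isFiniteMeasure_closedApproximable hBorel hGdelta hsf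
  obtain ⟨K, N, hK, hN, hKN⟩ := hdecomp
  have hKc : m (⋃ n, K n)ᶜ = 0 :=
    measure_mono_null (compl_subset_iff_union.2 hKN.symm) ((hm0 N).2 hN)
  refine hY <| sigmaFiniteSet_hausdorffM_univ_of_null_image hh hford h0 hK hKc hsurj
    (fun O hO => hm _ (hmeas O hO)) (fun O hO => hm _ (μ.isCaratheodory_compl (hmeas O hO)))
    fun A hA => le_antisymm (hcon A ((hm0 A).1 hA)) zero_le

/-- Theorem `MainInfinite`. -/
theorem statement_15 {X : Type*} [TopologicalSpace X] [T1Space X] [RegularSpace X]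
    [SecondCountableTopology X]
    {Y : Type*} [MetricSpace Y]
    (μ : MeasureTheory.OuterMeasure X)
    (hBorel : ∀ B : Set X, MeasurableSet[borel X] B → μ.IsCaratheodory B)
    (hGdelta : ∀ E : Set X, ∃ R : Set X, IsGδ R ∧ E ⊆ R ∧ μ R = μ E)
    (hsf : SigmaFiniteSet μ (Set.univ : Set X))
    (hdecomp : ∃ (K : ℕ → Set X) (N : Set X), (∀ n, IsCompact (K n)) ∧ μ N = 0 ∧
      Set.univ = (⋃ n, K n) ∪ N)
    (h : ℝ≥0 → ℝ≥0∞) (hh : IsHausdorffFunction h) (hford : FiniteOrder h)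
    (h0 : h 0 = 0)
    (hY : ¬ SigmaFiniteSet (hausdorffM h) (Set.univ : Set Y))
    (f : X → Y) (hsurj : Function.Surjective f)
    (hmeas : ∀ O : Set Y, IsOpen O → μ.IsCaratheodory (f ⁻¹' O)) :
    ∃ N : Set X, μ N = 0 ∧ 0 < hausdorffM h (f '' N) := by
  exact statement_15_general μ hBorel hGdelta hsf hdecomp h hh hford h0 hY f hsurj hmeas
end
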